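/- Let k ≥ 2 and let (X_i, σ_{X_i}), i = 1,…,k, be one-sided subshifts over finite alphabets such that X_{i+1} is a factor of X_i with factor map π_i : X_i → X_{i+1} for i = 1,…,k−1; let π_0 be the identity on X_1 and τ_i = π_i ∘ π_{i−1} ∘ ⋯ ∘ π_0 for i = 0,…,k−1. Assume X_1 satisfies weak specification. Then for any f ∈ V(σ_{X_1}) and any a = (a_1,…,a_k) ∈ ℝ^k with a_1 > 0 and a_i ≥ 0 for i ≥ 2, there exists a unique μ ∈ M(X_1, σ_{X_1}) attaining sup_{η ∈ M(X_1,σ_{X_1})} ( η(f) + Σ_{i=1}^k a_i h_{η∘τ_{i−1}^{-1}}(σ_{X_i}) ). Moreover μ is ergodic and there exist p ∈ ℕ and c > 0 such that liminf_{n→∞} Σ_{i=0}^p μ(A ∩ σ_{X_1}^{−n−i}(B)) ≥ c μ(A)μ(B) for all Borel sets A, B ⊆ X_1; and if X_1 satisfies specification, then there exists c > 0 such that liminf_{n→∞} μ(A ∩ σ_{X_1}^{−n}(B)) ≥ c μ(A)μ(B) for all Borel sets A, B ⊆ X_1. -/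

import Mathlib

open MeasureTheory Filter Topology
open scoped Classical ENNReal NNReal

noncomputable section

/-- The left shift on one-sided sequences. -/
def shiftMap {A : Type} : (ℕ → A) → (ℕ → A) := fun x n => x (n + 1)

/-- The cylinder set of a finite word. -/
def cyl {A : Type} (I : List A) : Set (ℕ → A) :=
  {x | ∀ i : Fin I.length, x i = I.get i}

/-- Membership of a word in the language of `X`. -/
def Lang {A : Type} (X : Set (ℕ → A)) (I : List A) : Prop :=
  (cyl I ∩ X).Nonempty

/-- `X` is a (nonempty) one-sided subshift. -/
def IsSubshift {A : Type} [TopologicalSpace A] (X : Set (ℕ → A)) : Prop :=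
  X.Nonempty ∧ IsCompact X ∧ shiftMap '' X ⊆ X

/-- weak `p`-specification -/
def WeakSpecification {A : Type} (X : Set (ℕ → A)) (p : ℕ) : Prop :=
  ∀ I J : List A, Lang X I → Lang X J →
    ∃ K : List A, K.length ≤ p ∧ Lang X (I ++ K ++ J)

/-- `p`-specification -/
def Specification {A : Type} (X : Set (ℕ → A)) (p : ℕ) : Prop :=
  ∀ I J : List A, Lang X I → Lang X J →
    ∃ K : List A, K.length = p ∧ Lang X (I ++ K ++ J)

/-- invariant probability measures supported on `X` (predicate on plain measures) -/
def InvOn {A : Type} [MeasurableSpace A] (X : Set (ℕ → A)) (μ : Measure (ℕ → A)) : Prop :=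
  IsProbabilityMeasure μ ∧ μ.map shiftMap = μ ∧ μ X = 1

/-- the set of shift-invariant probability measures on `X` -/
def MInv {A : Type} [MeasurableSpace A] (X : Set (ℕ → A)) :
    Set (ProbabilityMeasure (ℕ → A)) :=
  {μ | (μ : Measure (ℕ → A)).map shiftMap = (μ : Measure (ℕ → A)) ∧
    (μ : Measure (ℕ → A)) X = 1}

/-- measure of a word: `μ([I] ∩ X)` -/
def mw {A : Type} [MeasurableSpace A] (X : Set (ℕ → A)) (μ : Measure (ℕ → A))
    (I : List A) : ℝ :=
  (μ (cyl I ∩ X)).toReal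

/-- the initial word of length `n` of a sequence -/
def wordOf {A : Type} (x : ℕ → A) (n : ℕ) : List A := List.ofFn (fun i : Fin n => x i)

/-- `n`-block entropy -/
def Hblock {A : Type} [Fintype A] [MeasurableSpace A] (X : Set (ℕ → A))
    (μ : Measure (ℕ → A)) (n : ℕ) : ℝ :=
  -∑ w : Fin n → A, mw X μ (List.ofFn w) * Real.log (mw X μ (List.ofFn w))

/-- measure-theoretic entropy (the limit exists for invariant measures; `liminf` realizes it) -/
def ent {A : Type} [Fintype A] [MeasurableSpace A] (X : Set (ℕ → A))
    (μ : Measure (ℕ → A)) : ℝ :=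
  liminf (fun n : ℕ => Hblock X μ n / n) atTop

/-- extended logarithm: `log t`, with value `⊥` for `t ≤ 0` -/
def elog (t : ℝ) : EReal := if t ≤ 0 then ⊥ else ((Real.log t : ℝ) : EReal)

/-- the integral `∫ log g dμ`, valued in `ℝ ∪ {−∞}` -/
def intlog {Ω : Type*} [MeasurableSpace Ω] (μ : Measure Ω) (g : Ω → ℝ) : EReal :=
  ((∫⁻ x, ENNReal.ofReal (Real.log (g x)) ∂μ : ℝ≥0∞) : EReal) -
    ((∫⁻ x, (if g x ≤ 0 then (⊤ : ℝ≥0∞) else ENNReal.ofReal (-Real.log (g x))) ∂μ : ℝ≥0∞) : EReal)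

/-- sub-additive potential `Φ = (log φ_n)_{n ≥ 1}` -/
def SubaddPot {A : Type} [TopologicalSpace A] (X : Set (ℕ → A))
    (φ : ℕ → (ℕ → A) → ℝ) : Prop :=
  (∀ n, 1 ≤ n → ContinuousOn (φ n) X) ∧
  (∀ n, 1 ≤ n → ∀ x ∈ X, 0 ≤ φ n x) ∧
  ∃ c > (0:ℝ), ∀ n m : ℕ, 1 ≤ n → 1 ≤ m → ∀ x ∈ X,
    φ (n + m) x ≤ c * φ n x * φ m (shiftMap^[n] x)

/-- `Φ_*(μ) = lim (1/n) ∫ log φ_n dμ` (realized as a `liminf` in `EReal`) -/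
def PhiStar {A : Type} [MeasurableSpace A] (μ : Measure (ℕ → A))
    (φ : ℕ → (ℕ → A) → ℝ) : EReal :=
  liminf (fun n : ℕ => (((n : ℝ)⁻¹ : ℝ) : EReal) * intlog μ (φ n)) atTop

/-- sub-multiplicative function on the language of `X` -/
def Submult {A : Type} (X : Set (ℕ → A)) (φ : List A → ℝ) : Prop :=
  (∀ I, Lang X I → 0 ≤ φ I) ∧ φ [] = 1 ∧
  ∃ c > (0:ℝ), ∀ I J : List A, Lang X (I ++ J) → φ (I ++ J) ≤ c⁻¹ * φ I * φ J

/-- the potential generated by a word function -/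
def genPot {A : Type} (φ : List A → ℝ) : ℕ → (ℕ → A) → ℝ := fun n x => φ (wordOf x n)

/-- the scaled potential `cΦ = (log φ_n^c)` -/
def scPot {Ω : Type*} (c : ℝ) (φ : ℕ → Ω → ℝ) : ℕ → Ω → ℝ := fun n x => φ n x ^ c

/-- the "pressure value" `Φ_*(μ) + h_μ` -/
def eqVal {A : Type} [Fintype A] [MeasurableSpace A] (X : Set (ℕ → A))
    (φ : ℕ → (ℕ → A) → ℝ) (μ : ProbabilityMeasure (ℕ → A)) : EReal :=
  PhiStar (μ : Measure (ℕ → A)) φ + ((ent X (μ : Measure (ℕ → A)) : ℝ) : EReal)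

/-- the set of equilibrium states of `Φ` -/
def EqSet {A : Type} [Fintype A] [MeasurableSpace A] (X : Set (ℕ → A))
    (φ : ℕ → (ℕ → A) → ℝ) : Set (ProbabilityMeasure (ℕ → A)) :=
  {μ | μ ∈ MInv X ∧ eqVal X φ μ = ⨆ η ∈ MInv X, eqVal X φ η}

/-- sequence map induced by a one-block map -/
def blockMap {A B : Type} (π : A → B) : (ℕ → A) → (ℕ → B) := fun x n => π (x n)

/-- pushforward of a probability measure under a one-block map -/
def pushM {A B : Type} [MeasurableSpace A] [MeasurableSpace B] (π : A → B)
    (μ : ProbabilityMeasure (ℕ → A)) : Measure (ℕ → B) :=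
  (μ : Measure (ℕ → A)).map (blockMap π)

/-- conditional equilibrium states of `Φ` over `ν` -/
def CondEqSet {A B : Type} [Fintype A] [MeasurableSpace A] [MeasurableSpace B]
    (X : Set (ℕ → A)) (π : A → B) (φ : ℕ → (ℕ → A) → ℝ) (ν : Measure (ℕ → B)) :
    Set (ProbabilityMeasure (ℕ → A)) :=
  {μ | μ ∈ MInv X ∧ pushM π μ = ν ∧
    eqVal X φ μ = ⨆ η ∈ {η | η ∈ MInv X ∧ pushM π η = ν}, eqVal X φ η}

/-- the projected word function `ψ(J) = Σ_{I : πI = J} φ(I)` -/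
def psiProj {A B : Type} [Fintype A] (X : Set (ℕ → A)) (π : A → B) (φ : List A → ℝ)
    (J : List B) : ℝ :=
  ∑ w : Fin J.length → A,
    if Lang X (List.ofFn w) ∧ List.map π (List.ofFn w) = J then φ (List.ofFn w) else 0

/-- `φ^{(2)}(J) = (Σ_{I : πI = J} φ(I)^{1/a₁})^{a₁}` -/
def phiTwo {A B : Type} [Fintype A] (X : Set (ℕ → A)) (π : A → B) (φ : List A → ℝ)
    (a₁ : ℝ) (J : List B) : ℝ :=
  (∑ w : Fin J.length → A,
    if Lang X (List.ofFn w) ∧ List.map π (List.ofFn w) = J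
    then φ (List.ofFn w) ^ a₁⁻¹ else 0) ^ a₁

/-- `a`-weighted pressure value for `k = 2` -/
def wVal2 {A B : Type} [Fintype A] [Fintype B] [MeasurableSpace A] [MeasurableSpace B]
    (X : Set (ℕ → A)) (Y : Set (ℕ → B)) (π : A → B) (φ : ℕ → (ℕ → A) → ℝ)
    (a₁ a₂ : ℝ) (μ : ProbabilityMeasure (ℕ → A)) : EReal :=
  PhiStar (μ : Measure (ℕ → A)) φ +
    ((a₁ * ent X (μ : Measure (ℕ → A)) + a₂ * ent Y (pushM π μ) : ℝ) : EReal)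

/-- the set of `a`-weighted equilibrium states, `k = 2` -/
def WEqSet2 {A B : Type} [Fintype A] [Fintype B] [MeasurableSpace A] [MeasurableSpace B]
    (X : Set (ℕ → A)) (Y : Set (ℕ → B)) (π : A → B) (φ : ℕ → (ℕ → A) → ℝ)
    (a₁ a₂ : ℝ) : Set (ProbabilityMeasure (ℕ → A)) :=
  {μ | μ ∈ MInv X ∧ wVal2 X Y π φ a₁ a₂ μ = ⨆ η ∈ MInv X, wVal2 X Y π φ a₁ a₂ η}

/-- convexity of a set of probability measures -/
def ConvexPM {Ω : Type*} [MeasurableSpace Ω] (S : Set (ProbabilityMeasure Ω)) : Prop :=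
  ∀ μ₁ ∈ S, ∀ μ₂ ∈ S, ∀ t : ℝ, 0 ≤ t → t ≤ 1 → ∀ μ : ProbabilityMeasure Ω,
    (μ : Measure Ω) = ENNReal.ofReal t • (μ₁ : Measure Ω) +
      ENNReal.ofReal (1 - t) • (μ₂ : Measure Ω) → μ ∈ S

/-- extreme points of a set of probability measures -/
def IsExtremePM {Ω : Type*} [MeasurableSpace Ω] (S : Set (ProbabilityMeasure Ω))
    (μ : ProbabilityMeasure Ω) : Prop :=
  μ ∈ S ∧ ∀ μ₁ ∈ S, ∀ μ₂ ∈ S, ∀ t : ℝ, 0 < t → t < 1 →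
    (μ : Measure Ω) = ENNReal.ofReal t • (μ₁ : Measure Ω) +
      ENNReal.ofReal (1 - t) • (μ₂ : Measure Ω) → μ₁ = μ₂

/-- the class `Ω_w(A*, p)` -/
def OmegaW {A : Type} [Fintype A] (p : ℕ) (f : List A → ℝ) : Prop :=
  (∀ I, 0 ≤ f I ∧ f I ≤ 1) ∧
  ∃ c > (0:ℝ),
    (∀ n : ℕ, ∑ w : Fin n → A, f (List.ofFn w) = 1) ∧
    (∀ I J : List A, ∃ K : List A, K.length ≤ p ∧ c * (f I * f J) ≤ f (I ++ K ++ J)) ∧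
    (∀ I : List A, ∃ i j : A, c * f I ≤ f (i :: I) ∧ c * f I ≤ f (I ++ [j]))

/-- the class `Ω(A*, p)` -/
def OmegaS {A : Type} [Fintype A] (p : ℕ) (f : List A → ℝ) : Prop :=
  (∀ I, 0 ≤ f I ∧ f I ≤ 1) ∧
  ∃ c > (0:ℝ),
    (∀ n : ℕ, ∑ w : Fin n → A, f (List.ofFn w) = 1) ∧
    (∀ I J : List A, ∃ K : List A, K.length = p ∧ c * (f I * f J) ≤ f (I ++ K ++ J))

/-- `f_{m,n}(I)` -/
def fmn {A : Type} [Fintype A] (f : List A → ℝ) (m n : ℕ) (I : List A) : ℝ :=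
  ∑ u : Fin m → A, ∑ v : Fin n → A, f (List.ofFn u ++ I ++ List.ofFn v)

/-- `f*(I) = sup_{m,n} f_{m,n}(I)` -/
def fstar {A : Type} [Fintype A] (f : List A → ℝ) (I : List A) : ℝ :=
  ⨆ m : ℕ, ⨆ n : ℕ, fmn f m n I

/-- the class `D_w(X, p)` -/
def Dw {A : Type} (X : Set (ℕ → A)) (p : ℕ) (φ : List A → ℝ) : Prop :=
  (∀ I, Lang X I → 0 ≤ φ I) ∧ (∃ I, Lang X I ∧ I ≠ [] ∧ 0 < φ I) ∧
  ∃ c : ℝ, 0 < c ∧ c ≤ 1 ∧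
    (∀ I J : List A, Lang X (I ++ J) → φ (I ++ J) ≤ c⁻¹ * φ I * φ J) ∧
    (∀ I J : List A, Lang X I → Lang X J →
      ∃ K : List A, K.length ≤ p ∧ Lang X (I ++ K ++ J) ∧
        c * (φ I * φ J) ≤ φ (I ++ K ++ J))

/-- the class `D(X, p)` -/
def Ds {A : Type} (X : Set (ℕ → A)) (p : ℕ) (φ : List A → ℝ) : Prop :=
  (∀ I, Lang X I → 0 ≤ φ I) ∧ (∃ I, Lang X I ∧ I ≠ [] ∧ 0 < φ I) ∧
  ∃ c : ℝ, 0 < c ∧ c ≤ 1 ∧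
    (∀ I J : List A, Lang X (I ++ J) → φ (I ++ J) ≤ c⁻¹ * φ I * φ J) ∧
    (∀ I J : List A, Lang X I → Lang X J →
      ∃ K : List A, K.length = p ∧ Lang X (I ++ K ++ J) ∧
        c * (φ I * φ J) ≤ φ (I ++ K ++ J))

end

noncomputable section

/-- iterated one-block maps along a chain of alphabets: `tauFrom π j i : B j → B (j+i)` -/
def tauFrom {B : ℕ → Type} (π : ∀ i, B i → B (i+1)) (j : ℕ) : (i : ℕ) → B j → B (j + i)
  | 0 => id
  | (i+1) => fun a => π (j + i) (tauFrom π j i a)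

/-- weighted pressure value along a chain starting at index `j`, with `k` weights `w 0, …, w (k-1)` -/
def wValGen {B : ℕ → Type} [∀ i, Fintype (B i)] [∀ i, MeasurableSpace (B i)]
    (π : ∀ i, B i → B (i+1)) (X : ∀ i, Set (ℕ → B i)) (j k : ℕ) (w : ℕ → ℝ)
    (φ : ℕ → (ℕ → B j) → ℝ) (μ : ProbabilityMeasure (ℕ → B j)) : EReal :=
  PhiStar (μ : Measure (ℕ → B j)) φ +
    ((∑ i ∈ Finset.range k, w i *
      ent (X (j + i)) ((μ : Measure (ℕ → B j)).map (blockMap (tauFrom π j i))) : ℝ) : EReal)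

/-- weighted equilibrium states along a chain -/
def wEqSetGen {B : ℕ → Type} [∀ i, Fintype (B i)] [∀ i, MeasurableSpace (B i)]
    (π : ∀ i, B i → B (i+1)) (X : ∀ i, Set (ℕ → B i)) (j k : ℕ) (w : ℕ → ℝ)
    (φ : ℕ → (ℕ → B j) → ℝ) : Set (ProbabilityMeasure (ℕ → B j)) :=
  {μ | μ ∈ MInv (X j) ∧
    wValGen π X j k w φ μ = ⨆ η ∈ MInv (X j), wValGen π X j k w φ η}

end

/-!
A weight `φ` on the words of `X₁` (the exponential of a Birkhoff sum of the potential) is pushed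
down the chain of factors, the exponents being quotients of the partial sums of `a`. Lifting the
result back to `X₁` and normalizing gives probability weights `f` on the words of each length; weak
specification makes `f` quasi-Bernoulli. Orbit averages of discrete measures with weights `f`
accumulate at an invariant `μ`, whose cylinder measures are comparable with the averages of `f`;
this yields the mixing bounds and the ergodicity of `μ`.

Optimality of `μ` is Misiurewicz's half of the variational principle. For another maximizer `η` the
same estimate shows that the relative entropy of `η` with respect to `f`, hence with respect to `μ`,
on words of length `n` is bounded in `n`. So `η ≪ μ`, and `η = μ` by ergodicity.
-/

noncomputable section

section Words

variable {A B : Type}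

/-- The finite set `A^n` of words of length `n`. -/
def words (A : Type) [Fintype A] (n : ℕ) : Finset (List A) :=
  Finset.univ.image fun w : Fin n → A => List.ofFn w

lemma mem_words [Fintype A] {n : ℕ} {I : List A} : I ∈ words A n ↔ I.length = n := by
  simp only [words, Finset.mem_image, Finset.mem_univ, true_and]
  refine ⟨?_, ?_⟩
  · rintro ⟨w, rfl⟩
    simp
  · rintro rfl
    exact ⟨I.get, List.ofFn_get I⟩

lemma words_zero [Fintype A] : words A 0 = {[]} := by
  ext I
  simp [mem_words]

lemma sum_ofFn_eq_sum_words [Fintype A] (n : ℕ) (g : List A → ℝ) :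
    ∑ w : Fin n → A, g (List.ofFn w) = ∑ I ∈ words A n, g I :=
  (Finset.sum_image fun _ _ _ _ h => List.ofFn_injective h).symm

lemma sum_words_add [Fintype A] (n m : ℕ) (g : List A → ℝ) :
    ∑ W ∈ words A (n + m), g W = ∑ U ∈ words A n, ∑ V ∈ words A m, g (U ++ V) := by
  rw [← Finset.sum_product']
  refine Finset.sum_nbij' (fun W => (W.take n, W.drop n)) (fun P => P.1 ++ P.2) ?_ ?_ ?_ ?_ ?_
  · intro W hW
    simp_all [mem_words]
  · rintro ⟨U, V⟩ h
    simp_all [mem_words]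
  · simp
  · rintro ⟨U, V⟩ h
    simp only [mem_words, Finset.mem_product] at h
    simp [← h.1]
  · simp

lemma sum_words_reverse [Fintype A] (n : ℕ) (g : List A → ℝ) :
    ∑ I ∈ words A n, g I.reverse = ∑ I ∈ words A n, g I :=
  Finset.sum_nbij' List.reverse List.reverse (by simp [mem_words]) (by simp [mem_words])
    (by simp) (by simp) (by simp)

lemma length_wordOf (x : ℕ → A) (n : ℕ) : (wordOf x n).length = n := by simp [wordOf]

lemma wordOf_blockMap (t : A → B) (x : ℕ → A) (n : ℕ) :
    wordOf (blockMap t x) n = (wordOf x n).map t := by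
  simp [wordOf, List.map_ofFn, blockMap, Function.comp_def]

lemma iterate_shiftMap_apply (n : ℕ) (x : ℕ → A) (i : ℕ) :
    (shiftMap^[n] x) i = x (n + i) := by
  induction n generalizing x with
  | zero => simp
  | succ n ih =>
    rw [Function.iterate_succ_apply, ih, shiftMap]
    congr 1
    omega

lemma mem_cyl_iff_getElem {I : List A} {x : ℕ → A} :
    x ∈ cyl I ↔ ∀ i (h : i < I.length), x i = I[i] :=
  ⟨fun h i hi => h ⟨i, hi⟩, fun h i => h i.1 i.2⟩

lemma mem_cyl_iff_wordOf_eq {I : List A} {x : ℕ → A} : x ∈ cyl I ↔ wordOf x I.length = I := by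
  rw [mem_cyl_iff_getElem]
  refine ⟨fun h => List.ext_getElem (length_wordOf _ _) fun i _ hi => ?_, fun h i hi => ?_⟩
  · simpa [wordOf] using h i hi
  · have := congrArg (fun l => l[i]?) h
    simpa [wordOf, hi] using this

lemma mem_cyl_wordOf (x : ℕ → A) (n : ℕ) : x ∈ cyl (wordOf x n) := by
  rw [mem_cyl_iff_wordOf_eq, length_wordOf]

lemma cyl_wordOf_anti (x : ℕ → A) : Antitone fun n => cyl (wordOf x n) := by
  intro n m h y hy
  simp only [mem_cyl_iff_getElem, wordOf, List.getElem_ofFn, List.length_ofFn] at hy ⊢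
  exact fun i hi => hy i (by omega)

lemma cyl_append (I J : List A) :
    cyl (I ++ J) = cyl I ∩ shiftMap^[I.length] ⁻¹' cyl J := by
  ext x
  simp only [Set.mem_inter_iff, Set.mem_preimage, mem_cyl_iff_getElem, iterate_shiftMap_apply,
    List.length_append]
  refine ⟨fun h => ⟨fun i hi => ?_, fun i hi => ?_⟩, ?_⟩
  · rw [h i (by omega), List.getElem_append_left]
  · rw [h (I.length + i) (by omega), List.getElem_append_right (by omega)]
    simp
  · rintro ⟨hI, hJ⟩ i hi
    by_cases hc : i < I.length
    · rw [List.getElem_append_left hc, hI i hc]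
    · rw [List.getElem_append_right (by omega), ← hJ (i - I.length) (by omega)]
      congr 1
      omega

lemma disjoint_cyl {I J : List A} (hl : I.length = J.length) (h : I ≠ J) :
    Disjoint (cyl I) (cyl J) := by
  rw [Set.disjoint_left]
  intro x hI hJ
  rw [mem_cyl_iff_wordOf_eq] at hI hJ
  exact h (by rw [← hI, ← hJ, hl])

lemma pairwiseDisjoint_cyl_words [Fintype A] (n : ℕ) :
    (words A n : Set (List A)).PairwiseDisjoint cyl := fun _ hI _ hJ =>
  disjoint_cyl ((mem_words.1 hI).trans (mem_words.1 hJ).symm)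

lemma biUnion_cyl_words [Fintype A] (n : ℕ) : ⋃ I ∈ words A n, cyl I = Set.univ := by
  ext x
  simp only [Set.mem_iUnion, Set.mem_univ, iff_true]
  exact ⟨wordOf x n, mem_words.2 (length_wordOf _ _), mem_cyl_wordOf _ _⟩

lemma blockMap_mem_cyl_map (t : A → B) {I : List A} {x : ℕ → A} (h : x ∈ cyl I) :
    blockMap t x ∈ cyl (I.map t) := by
  rw [mem_cyl_iff_wordOf_eq] at h ⊢
  rw [wordOf_blockMap, List.length_map, h]

/-- The finite set of words which the letter-to-letter map `t` sends to the word `J`. -/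
def wordFiber [Fintype A] (t : A → B) (J : List B) : Finset (List A) :=
  (words A J.length).filter fun I => I.map t = J

lemma mem_wordFiber [Fintype A] {t : A → B} {J : List B} {I : List A} :
    I ∈ wordFiber t J ↔ I.map t = J := by
  rw [wordFiber, Finset.mem_filter, mem_words, and_iff_right_iff_imp]
  rintro rfl
  rw [List.length_map]

lemma preimage_blockMap_cyl [Fintype A] (t : A → B) (J : List B) :
    blockMap t ⁻¹' cyl J = ⋃ I ∈ wordFiber t J, cyl I := by
  ext x
  simp only [Set.mem_preimage, Set.mem_iUnion, mem_wordFiber]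
  refine ⟨fun h => ⟨wordOf x J.length, ?_, mem_cyl_wordOf _ _⟩, ?_⟩
  · rw [← wordOf_blockMap, mem_cyl_iff_wordOf_eq.1 h]
  · rintro ⟨I, rfl, hI⟩
    exact blockMap_mem_cyl_map t hI

end Words

section CylinderTopology

variable {A : Type} [TopologicalSpace A]

lemma continuous_shiftMap : Continuous (shiftMap (A := A)) := by
  unfold shiftMap
  fun_prop

lemma exists_cyl_wordOf_subset {U : Set (ℕ → A)} (hU : IsOpen U) {x : ℕ → A} (hx : x ∈ U) :
    ∃ n, cyl (wordOf x n) ⊆ U := by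
  obtain ⟨F, u, hu, hsub⟩ := isOpen_pi_iff.1 hU x hx
  refine ⟨F.sup id + 1, fun y hy => hsub fun i hi => ?_⟩
  have hi' : i ≤ F.sup id := Finset.le_sup (f := id) hi
  rw [(mem_cyl_iff_getElem.1 hy) i (by rw [length_wordOf]; omega)]
  simpa only [wordOf, List.getElem_ofFn] using (hu i hi).2

variable [DiscreteTopology A]

lemma continuous_blockMap {B : Type} [TopologicalSpace B] (t : A → B) :
    Continuous (blockMap t) :=
  continuous_pi fun n => continuous_of_discreteTopology.comp (continuous_apply n)

lemma isClopen_cyl (I : List A) : IsClopen (cyl I) := by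
  have hcyl : cyl I = ⋂ i : Fin I.length, (fun x : ℕ → A => x i) ⁻¹' {I.get i} := by
    ext x
    simp [cyl]
  rw [hcyl]
  exact isClopen_iInter_of_finite fun i => (isClopen_discrete _).preimage (continuous_apply _)

lemma exists_eq_biUnion_cyl_of_isClopen [Fintype A] {C : Set (ℕ → A)} (hC : IsClopen C) :
    ∃ n, ∃ s ⊆ words A n, C = ⋃ I ∈ s, cyl I := by
  choose n hn using fun x : C => exists_cyl_wordOf_subset hC.isOpen x.2
  obtain ⟨t, ht⟩ := hC.isClosed.isCompact.elim_finite_subcover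
    (fun x : C => cyl (wordOf x.1 (n x))) (fun x => (isClopen_cyl _).isOpen)
    (fun x hx => Set.mem_iUnion.2 ⟨⟨x, hx⟩, mem_cyl_wordOf _ _⟩)
  refine ⟨t.sup n, (words A (t.sup n)).filter (fun I => cyl I ⊆ C), Finset.filter_subset _ _, ?_⟩
  ext x
  simp only [Set.mem_iUnion, Finset.mem_filter, mem_words]
  refine ⟨fun hx => ?_, fun ⟨_, ⟨_, hI⟩, hx⟩ => hI hx⟩
  obtain ⟨y, hy, hxy⟩ := Set.mem_iUnion₂.1 (ht hx)
  refine ⟨wordOf x (t.sup n), ⟨length_wordOf _ _, ?_⟩, mem_cyl_wordOf _ _⟩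
  refine (cyl_wordOf_anti x (Finset.le_sup hy)).trans ?_
  rw [mem_cyl_iff_wordOf_eq, length_wordOf] at hxy
  simpa only [hxy] using hn y

end CylinderTopology

section CylinderMeasure

variable {A : Type} [MeasurableSpace A]

lemma measurable_shiftMap : Measurable (shiftMap (A := A)) := by
  unfold shiftMap
  fun_prop

lemma measurable_blockMap [Countable A] [MeasurableSingletonClass A] {B : Type}
    [MeasurableSpace B] (t : A → B) : Measurable (blockMap t) :=
  measurable_pi_lambda _ fun n => (measurable_of_countable t).comp (measurable_pi_apply n)

variable [MeasurableSingletonClass A]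

lemma measurableSet_cyl (I : List A) : MeasurableSet (cyl I) := by
  have hcyl : cyl I = ⋂ i : Fin I.length, (fun x : ℕ → A => x i) ⁻¹' {I.get i} := by
    ext x
    simp [cyl]
  rw [hcyl]
  exact .iInter fun i => measurable_pi_apply _ (measurableSet_singleton _)

lemma measureReal_map_iterate_shiftMap (ρ : Measure (ℕ → A)) (n : ℕ) (J : List A) :
    (ρ.map shiftMap^[n]).real (cyl J) = ρ.real (shiftMap^[n] ⁻¹' cyl J) :=
  map_measureReal_apply (measurable_shiftMap.iterate n) (measurableSet_cyl J)

variable [Fintype A] (ρ : Measure (ℕ → A)) [IsFiniteMeasure ρ]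

lemma measureReal_biUnion_cyl {n : ℕ} {s : Finset (List A)} (hs : s ⊆ words A n) :
    ρ.real (⋃ I ∈ s, cyl I) = ∑ I ∈ s, ρ.real (cyl I) :=
  measureReal_biUnion_finset ((pairwiseDisjoint_cyl_words n).subset hs)
    fun _ _ => measurableSet_cyl _

lemma sum_measureReal_cyl_inter (n : ℕ) {T : Set (ℕ → A)} (hT : MeasurableSet T) :
    ∑ I ∈ words A n, ρ.real (cyl I ∩ T) = ρ.real T := by
  rw [← measureReal_biUnion_finset
    ((pairwiseDisjoint_cyl_words n).mono fun _ => Set.inter_subset_left)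
    fun I _ => (measurableSet_cyl I).inter hT]
  rw [← Set.iUnion₂_inter, biUnion_cyl_words, Set.univ_inter]

lemma sum_measureReal_cyl_append_right (I : List A) (m : ℕ) :
    ∑ J ∈ words A m, ρ.real (cyl (I ++ J)) = ρ.real (cyl I) := by
  have hmeas (J : List A) : MeasurableSet (shiftMap^[I.length] ⁻¹' cyl J) :=
    measurable_shiftMap.iterate _ (measurableSet_cyl J)
  simp only [cyl_append]
  rw [← measureReal_biUnion_finset (fun J hJ K hK h =>
      ((pairwiseDisjoint_cyl_words m hJ hK h).preimage _).mono
        Set.inter_subset_right Set.inter_subset_right)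
    fun J _ => (measurableSet_cyl I).inter (hmeas J)]
  rw [← Set.inter_iUnion₂, ← Set.preimage_iUnion₂, biUnion_cyl_words]
  simp

lemma sum_measureReal_cyl_append_left (J : List A) (n : ℕ) :
    ∑ I ∈ words A n, ρ.real (cyl (I ++ J)) = (ρ.map shiftMap^[n]).real (cyl J) := by
  rw [measureReal_map_iterate_shiftMap, ← sum_measureReal_cyl_inter ρ n
    (measurable_shiftMap.iterate _ (measurableSet_cyl J))]
  refine Finset.sum_congr rfl fun I hI => ?_
  rw [cyl_append, mem_words.1 hI]

lemma measureReal_map_blockMap_cyl {B : Type} [MeasurableSpace B] [MeasurableSingletonClass B]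
    (t : A → B) (J : List B) :
    (ρ.map (blockMap t)).real (cyl J) = ∑ I ∈ wordFiber t J, ρ.real (cyl I) := by
  rw [map_measureReal_apply (measurable_blockMap t) (measurableSet_cyl J), preimage_blockMap_cyl,
    wordFiber, measureReal_biUnion_cyl ρ (Finset.filter_subset _ _)]

end CylinderMeasure

lemma sum_measureReal_cyl {A : Type} [Fintype A] [MeasurableSpace A] [MeasurableSingletonClass A]
    (ρ : Measure (ℕ → A)) [IsProbabilityMeasure ρ] (n : ℕ) :
    ∑ I ∈ words A n, ρ.real (cyl I) = 1 := by
  rw [← measureReal_biUnion_cyl ρ subset_rfl, biUnion_cyl_words, probReal_univ]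

lemma borel_eq_generateFrom_isClopen {A : Type} [Finite A] [TopologicalSpace A]
    [DiscreteTopology A] [MeasurableSpace A] [BorelSpace A] :
    (inferInstance : MeasurableSpace (ℕ → A)) =
      MeasurableSpace.generateFrom {C : Set (ℕ → A) | IsClopen C} := by
  rw [← (isTopologicalBasis_isClopen (X := ℕ → A)).borel_eq_generateFrom]
  exact BorelSpace.measurable_eq

lemma measure_eq_of_cyl {A : Type} [Finite A] [TopologicalSpace A] [DiscreteTopology A]
    [MeasurableSpace A] [BorelSpace A] {ρ₁ ρ₂ : Measure (ℕ → A)} [IsProbabilityMeasure ρ₁]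
    [IsProbabilityMeasure ρ₂] (h : ∀ I : List A, ρ₁.real (cyl I) = ρ₂.real (cyl I)) :
    ρ₁ = ρ₂ := by
  have := Fintype.ofFinite A
  refine ext_of_generate_finite _ borel_eq_generateFrom_isClopen
    (fun s hs t ht _ => IsClopen.inter hs ht) (fun C hC => ?_) (by simp)
  obtain ⟨n, s, hs, rfl⟩ := exists_eq_biUnion_cyl_of_isClopen hC
  rw [← measureReal_eq_measureReal_iff (measure_ne_top _ _) (measure_ne_top _ _),
    measureReal_biUnion_cyl _ hs, measureReal_biUnion_cyl _ hs]
  exact Finset.sum_congr rfl fun I _ => h I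

section FiniteEntropy

variable {ι κ : Type*} (s : Finset ι) (t : Finset κ)

lemma sum_negMulLog_le_neg_sum_mul_log {p q : ι → ℝ} (hp : ∀ i ∈ s, 0 ≤ p i)
    (hq : ∀ i ∈ s, 0 ≤ q i) (hpq : ∀ i ∈ s, q i = 0 → p i = 0)
    (hsum : ∑ i ∈ s, q i ≤ ∑ i ∈ s, p i) :
    ∑ i ∈ s, Real.negMulLog (p i) ≤ -∑ i ∈ s, p i * Real.log (q i) := by
  have hterm : ∀ i ∈ s, Real.negMulLog (p i) + p i * Real.log (q i) ≤ q i - p i := by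
    intro i hi
    rcases (hp i hi).eq_or_lt with hpi | hpi
    · simpa [← hpi] using hq i hi
    · have hqi : 0 < q i := (hq i hi).lt_of_ne fun h0 => hpi.ne' (hpq i hi h0.symm)
      calc Real.negMulLog (p i) + p i * Real.log (q i) = p i * Real.log (q i / p i) := by
            rw [Real.log_div hqi.ne' hpi.ne', Real.negMulLog]
            ring
        _ ≤ p i * (q i / p i - 1) := by
            gcongr
            exact Real.log_le_sub_one_of_pos (div_pos hqi hpi)
        _ = q i - p i := by field_simp
  have hsum_terms := Finset.sum_le_sum hterm
  rw [Finset.sum_add_distrib, Finset.sum_sub_distrib] at hsum_terms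
  linarith

lemma sum_negMulLog_le_add_marginals {p : ι → κ → ℝ} (hp : ∀ i ∈ s, ∀ j ∈ t, 0 ≤ p i j)
    (hsum : ∑ i ∈ s, ∑ j ∈ t, p i j = 1) :
    ∑ i ∈ s, ∑ j ∈ t, Real.negMulLog (p i j) ≤
      ∑ i ∈ s, Real.negMulLog (∑ j ∈ t, p i j) + ∑ j ∈ t, Real.negMulLog (∑ i ∈ s, p i j) := by
  set r : ι → ℝ := fun i => ∑ j ∈ t, p i j
  set c : κ → ℝ := fun j => ∑ i ∈ s, p i j
  have hr : ∀ i ∈ s, ∀ j ∈ t, r i = 0 → p i j = 0 := fun i hi j hj h =>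
    (Finset.sum_eq_zero_iff_of_nonneg (hp i hi)).1 h j hj
  have hc : ∀ i ∈ s, ∀ j ∈ t, c j = 0 → p i j = 0 := fun i hi j hj h =>
    (Finset.sum_eq_zero_iff_of_nonneg fun i hi => hp i hi j hj).1 h i hi
  have hsum_c : ∑ j ∈ t, c j = 1 := Finset.sum_comm.trans hsum
  have hlog : ∀ i ∈ s, ∀ j ∈ t,
      p i j * Real.log (r i * c j) = p i j * Real.log (r i) + p i j * Real.log (c j) := by
    intro i hi j hj
    by_cases h : p i j = 0
    · simp [h]
    · rw [Real.log_mul (mt (hr i hi j hj) h) (mt (hc i hi j hj) h), mul_add]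
  calc ∑ i ∈ s, ∑ j ∈ t, Real.negMulLog (p i j)
      ≤ -∑ i ∈ s, ∑ j ∈ t, p i j * Real.log (r i * c j) := by
        rw [← Finset.sum_product', ← Finset.sum_product']
        refine sum_negMulLog_le_neg_sum_mul_log _ ?_ ?_ ?_ ?_
        · exact fun x hx => hp _ (Finset.mem_product.1 hx).1 _ (Finset.mem_product.1 hx).2
        · exact fun x hx => mul_nonneg (Finset.sum_nonneg (hp _ (Finset.mem_product.1 hx).1))
            (Finset.sum_nonneg fun i hi => hp i hi _ (Finset.mem_product.1 hx).2)
        · rintro ⟨i, j⟩ hx h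
          obtain ⟨hi, hj⟩ := Finset.mem_product.1 hx
          exact (mul_eq_zero.1 h).elim (hr i hi j hj) (hc i hi j hj)
        · rw [Finset.sum_product' (f := fun i j => r i * c j), Finset.sum_product', hsum]
          simp only [← Finset.mul_sum, hsum_c, mul_one]
          exact hsum.le
    _ = -(∑ i ∈ s, r i * Real.log (r i) + ∑ j ∈ t, c j * Real.log (c j)) := by
        rw [Finset.sum_congr rfl fun i hi => Finset.sum_congr rfl (hlog i hi)]
        simp only [Finset.sum_add_distrib]
        rw [Finset.sum_comm (f := fun i j => p i j * Real.log (c j))]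
        simp only [← Finset.sum_mul, r, c]
    _ = _ := by
        simp only [Real.negMulLog, neg_mul, Finset.sum_neg_distrib, r, c]
        ring

lemma negMulLog_sum_le {p : ι → ℝ} (hp : ∀ i ∈ s, 0 ≤ p i) :
    Real.negMulLog (∑ i ∈ s, p i) ≤ ∑ i ∈ s, Real.negMulLog (p i) := by
  rw [Real.negMulLog, ← Finset.sum_neg_distrib, Finset.sum_mul]
  refine Finset.sum_le_sum fun i hi => ?_
  rcases (hp i hi).eq_or_lt with h | h
  · simp [← h]
  · rw [Real.negMulLog, neg_mul, neg_mul, neg_le_neg_iff]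
    gcongr
    exact Finset.single_le_sum hp hi

end FiniteEntropy

section BlockEntropy

variable {A : Type} [Fintype A] [MeasurableSpace A]

/-- The entropy `-∑ ρ(I) log ρ(I)`, over words `I` of length `n`, of a measure on the full shift.
Unlike `Hblock`, it does not refer to a subshift carrying the measure. -/
def blockEntropy (ρ : Measure (ℕ → A)) (n : ℕ) : ℝ :=
  ∑ I ∈ words A n, Real.negMulLog (ρ.real (cyl I))

lemma blockEntropy_nonneg (ρ : Measure (ℕ → A)) [IsZeroOrProbabilityMeasure ρ] (n : ℕ) :
    0 ≤ blockEntropy ρ n :=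
  Finset.sum_nonneg fun _ _ => Real.negMulLog_nonneg measureReal_nonneg measureReal_le_one

lemma blockEntropy_le_card (ρ : Measure (ℕ → A)) (n : ℕ) :
    blockEntropy ρ n ≤ (words A n).card := by
  calc blockEntropy ρ n ≤ ∑ _I ∈ words A n, (1 : ℝ) := Finset.sum_le_sum fun _ _ =>
        (Real.negMulLog_le_one_sub_self measureReal_nonneg).trans
          (sub_le_self _ measureReal_nonneg)
    _ = (words A n).card := by simp

lemma bddBelow_blockEntropy_div (ρ : Measure (ℕ → A)) [IsZeroOrProbabilityMeasure ρ] :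
    BddBelow (Set.range fun n : ℕ => blockEntropy ρ n / n) :=
  ⟨0, by rintro _ ⟨n, rfl⟩; exact div_nonneg (blockEntropy_nonneg ρ n) n.cast_nonneg⟩

lemma sum_blockEntropy_le_of_average {N : ℕ} (hN : 0 < N) (m : ℕ) {ρ : ℕ → Measure (ℕ → A)}
    {ν : Measure (ℕ → A)}
    (h : ∀ I : List A, N * ν.real (cyl I) = ∑ t ∈ Finset.range N, (ρ t).real (cyl I)) :
    ∑ t ∈ Finset.range N, blockEntropy (ρ t) m ≤ N * blockEntropy ν m := by
  unfold blockEntropy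
  rw [Finset.sum_comm, Finset.mul_sum]
  refine Finset.sum_le_sum fun I _ => ?_
  have hN' : (0 : ℝ) < N := by exact_mod_cast hN
  have hJensen := Real.concaveOn_negMulLog.le_map_sum (t := Finset.range N)
    (w := fun _ => (N : ℝ)⁻¹) (p := fun t => (ρ t).real (cyl I)) (fun _ _ => by positivity)
    (by simp [hN'.ne']) (fun _ _ => measureReal_nonneg)
  simp only [smul_eq_mul, ← Finset.mul_sum, ← h] at hJensen
  rwa [inv_mul_cancel_left₀ hN'.ne', inv_mul_le_iff₀ hN'] at hJensen

lemma Hblock_eq_blockEntropy {X : Set (ℕ → A)} (hX : MeasurableSet X) {μ : Measure (ℕ → A)}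
    [IsProbabilityMeasure μ] (hμX : μ X = 1) (n : ℕ) : Hblock X μ n = blockEntropy μ n := by
  have hmw (I : List A) : mw X μ I = μ.real (cyl I) :=
    congrArg ENNReal.toReal (measure_inter_conull ((prob_compl_eq_zero_iff hX).2 hμX))
  rw [Hblock, blockEntropy, sum_ofFn_eq_sum_words n (fun I => mw X μ I * Real.log (mw X μ I)),
    ← Finset.sum_neg_distrib]
  refine Finset.sum_congr rfl fun I _ => ?_
  rw [hmw, Real.negMulLog, neg_mul]

variable [MeasurableSingletonClass A]

lemma blockEntropy_le_add (ρ : Measure (ℕ → A)) [IsFiniteMeasure ρ] (n m : ℕ) :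
    blockEntropy ρ n ≤ blockEntropy ρ (n + m) := by
  rw [blockEntropy, blockEntropy, sum_words_add]
  refine Finset.sum_le_sum fun I _ => ?_
  rw [← sum_measureReal_cyl_append_right ρ I m]
  exact negMulLog_sum_le _ fun _ _ => measureReal_nonneg

variable (ρ : Measure (ℕ → A)) [IsProbabilityMeasure ρ]

lemma blockEntropy_add_le (n m : ℕ) :
    blockEntropy ρ (n + m) ≤ blockEntropy ρ n + blockEntropy (ρ.map shiftMap^[n]) m := by
  have hsum : ∑ I ∈ words A n, ∑ J ∈ words A m, ρ.real (cyl (I ++ J)) = 1 := by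
    rw [← sum_words_add n m fun I => ρ.real (cyl I), sum_measureReal_cyl]
  have hmarg := sum_negMulLog_le_add_marginals _ _ (fun _ _ _ _ => measureReal_nonneg) hsum
  simp only [sum_measureReal_cyl_append_right, sum_measureReal_cyl_append_left] at hmarg
  rwa [blockEntropy, sum_words_add]

lemma mul_blockEntropy_le_sum (N m : ℕ) :
    m * blockEntropy ρ N ≤ ∑ t ∈ Finset.range N, blockEntropy (ρ.map shiftMap^[t]) m +
      ∑ r ∈ Finset.range m, ((words A r).card : ℝ) := by
  have hwindow : ∑ r ∈ Finset.range m, blockEntropy ρ (N + r) ≤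
      ∑ t ∈ Finset.range N, blockEntropy (ρ.map shiftMap^[t]) m +
        ∑ r ∈ Finset.range m, ((words A r).card : ℝ) := by
    induction N with
    | zero => simpa using Finset.sum_le_sum fun r _ => blockEntropy_le_card ρ r
    | succ N ih =>
      have hslide : ∑ r ∈ Finset.range m, blockEntropy ρ (N + 1 + r) + blockEntropy ρ N =
          ∑ r ∈ Finset.range m, blockEntropy ρ (N + r) + blockEntropy ρ (N + m) := by
        rw [← Finset.sum_range_succ (fun r => blockEntropy ρ (N + r)), Finset.sum_range_succ']
        simp only [add_zero, add_assoc, add_comm 1]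
      rw [Finset.sum_range_succ]
      linarith [blockEntropy_add_le ρ N m]
  calc m * blockEntropy ρ N = ∑ _r ∈ Finset.range m, blockEntropy ρ N := by simp
    _ ≤ ∑ r ∈ Finset.range m, blockEntropy ρ (N + r) :=
        Finset.sum_le_sum fun r _ => blockEntropy_le_add ρ N r
    _ ≤ _ := hwindow

variable {ρ}

lemma subadditive_blockEntropy (hρ : ρ.map shiftMap = ρ) : Subadditive (blockEntropy ρ) := by
  intro n m
  have hiter : ρ.map shiftMap^[n] = ρ :=
    ((MeasurePreserving.mk measurable_shiftMap hρ).iterate n).map_eq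
  simpa only [hiter] using blockEntropy_add_le ρ n m

lemma tendsto_blockEntropy_div {X : Set (ℕ → A)} (hX : MeasurableSet X) (hρX : ρ X = 1)
    (hρ : ρ.map shiftMap = ρ) :
    Tendsto (fun n : ℕ => blockEntropy ρ n / n) atTop (𝓝 (ent X ρ)) := by
  have hlim := (subadditive_blockEntropy hρ).tendsto_lim (bddBelow_blockEntropy_div ρ)
  unfold ent
  simp only [Hblock_eq_blockEntropy hX hρX]
  rwa [hlim.liminf_eq]

lemma mul_ent_le_blockEntropy {X : Set (ℕ → A)} (hX : MeasurableSet X) (hρX : ρ X = 1)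
    (hρ : ρ.map shiftMap = ρ) (n : ℕ) : n * ent X ρ ≤ blockEntropy ρ n := by
  have hsub := subadditive_blockEntropy hρ
  rw [tendsto_nhds_unique (tendsto_blockEntropy_div hX hρX hρ)
    (hsub.tendsto_lim (bddBelow_blockEntropy_div ρ))]
  rcases n.eq_zero_or_pos with rfl | hn
  · simpa using blockEntropy_nonneg ρ 0
  · have hdiv := hsub.lim_le_div (bddBelow_blockEntropy_div ρ) hn.ne'
    rwa [le_div_iff₀ (by exact_mod_cast hn), mul_comm] at hdiv

end BlockEntropy

section Language

variable {A : Type} {X : Set (ℕ → A)} {I J : List A}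

lemma iterate_shiftMap_mem (hX : shiftMap '' X ⊆ X) {x : ℕ → A} (hx : x ∈ X) (n : ℕ) :
    shiftMap^[n] x ∈ X :=
  (Set.mapsTo_iff_image_subset.2 hX).iterate n hx

lemma lang_wordOf {x : ℕ → A} (hx : x ∈ X) (n : ℕ) : Lang X (wordOf x n) :=
  ⟨x, mem_cyl_wordOf x n, hx⟩

lemma Lang.left (h : Lang X (I ++ J)) : Lang X I :=
  h.mono (Set.inter_subset_inter_left _ (cyl_append I J ▸ Set.inter_subset_left))

lemma Lang.right (h : Lang X (I ++ J)) (hX : shiftMap '' X ⊆ X) : Lang X J := by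
  obtain ⟨x, hx, hxX⟩ := h
  rw [cyl_append] at hx
  exact ⟨_, hx.2, iterate_shiftMap_mem hX hxX _⟩

lemma Lang.exists_append_right (h : Lang X I) (r : ℕ) :
    ∃ V : List A, V.length = r ∧ Lang X (I ++ V) := by
  obtain ⟨x, hx, hxX⟩ := h
  refine ⟨wordOf (shiftMap^[I.length] x) r, length_wordOf _ _, x, ?_, hxX⟩
  rw [cyl_append]
  exact ⟨hx, mem_cyl_wordOf _ _⟩

lemma Lang.exists_cons {p : ℕ} (h : Lang X I) (hX : shiftMap '' X ⊆ X)
    (hspec : WeakSpecification X p) : ∃ i : A, Lang X (i :: I) := by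
  obtain ⟨x, -, hx⟩ := id h
  obtain ⟨K, -, hK⟩ := hspec (wordOf x 1) I (lang_wordOf hx 1) h
  have hne : wordOf x 1 ++ K ≠ [] := by simp [wordOf]
  rw [← List.dropLast_append_getLast hne, List.append_assoc] at hK
  exact ⟨_, hK.right hX⟩

end Language

section TwoSidedExtension

variable {A : Type} [Fintype A] {f : List A → ℝ}

lemma fmn_eq_sum_words (f : List A → ℝ) (m n : ℕ) (I : List A) :
    fmn f m n I = ∑ U ∈ words A m, ∑ V ∈ words A n, f (U ++ I ++ V) := by
  rw [fmn, ← sum_ofFn_eq_sum_words]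
  exact Finset.sum_congr rfl fun u _ => sum_ofFn_eq_sum_words n fun V => f (List.ofFn u ++ I ++ V)

lemma fmn_nonneg (hf : ∀ I, 0 ≤ f I) (m n : ℕ) (I : List A) : 0 ≤ fmn f m n I :=
  Finset.sum_nonneg fun _ _ => Finset.sum_nonneg fun _ _ => hf _

lemma fmn_add_right (f : List A → ℝ) (m n s : ℕ) (I : List A) :
    fmn f m (n + s) I = ∑ U ∈ words A m, ∑ V ∈ words A n, ∑ W ∈ words A s,
      f (U ++ I ++ V ++ W) := by
  simp only [fmn_eq_sum_words, sum_words_add, List.append_assoc]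

lemma fmn_add_left (f : List A → ℝ) (m n t : ℕ) (I : List A) :
    fmn f (t + m) n I = ∑ U ∈ words A m, ∑ V ∈ words A n, ∑ W ∈ words A t,
      f (W ++ (U ++ I ++ V)) := by
  simp only [fmn_eq_sum_words, sum_words_add, List.append_assoc]
  rw [Finset.sum_comm]
  exact Finset.sum_congr rfl fun U _ => Finset.sum_comm

/-- The quasi-Bernoulli property of a weight on words, with `D` as set of admissible gap lengths.
It is the common content of `OmegaW p` (where `D = {0, …, p}`) and `OmegaS p` (where
`D = {p}`). -/
def QuasiBernoulli (D : Finset ℕ) (f : List A → ℝ) : Prop :=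
  ∃ c > 0, ∀ I J : List A, c * (f I * f J) ≤ ∑ d ∈ D, ∑ K ∈ words A d, f (I ++ K ++ J)

lemma le_sum_words_of_length_mem {D : Finset ℕ} {g : List A → ℝ} (hg : ∀ K, 0 ≤ g K) {K : List A}
    (hK : K.length ∈ D) : g K ≤ ∑ d ∈ D, ∑ K ∈ words A d, g K :=
  (Finset.single_le_sum (f := g) (fun _ _ => hg _) (mem_words.2 rfl)).trans
    (Finset.single_le_sum (f := fun d => ∑ K ∈ words A d, g K)
      (fun _ _ => Finset.sum_nonneg fun _ _ => hg _) hK)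

lemma QuasiBernoulli.exists_mul_fmn_le {D : Finset ℕ} (h : QuasiBernoulli D f) :
    ∃ c > 0, ∀ m₁ m₂ m₃ m₄, ∀ I J : List A, c * (fmn f m₁ m₂ I * fmn f m₃ m₄ J) ≤
      ∑ d ∈ D, ∑ G ∈ words A (m₂ + d + m₃), fmn f m₁ m₄ (I ++ G ++ J) := by
  obtain ⟨c, hc, hgap⟩ := h
  refine ⟨c, hc, fun m₁ m₂ m₃ m₄ I J => ?_⟩
  simp only [fmn_eq_sum_words]
  calc c * ((∑ U ∈ words A m₁, ∑ V ∈ words A m₂, f (U ++ I ++ V)) *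
        ∑ U' ∈ words A m₃, ∑ V' ∈ words A m₄, f (U' ++ J ++ V'))
      = ∑ U ∈ words A m₁, ∑ V ∈ words A m₂, ∑ U' ∈ words A m₃, ∑ V' ∈ words A m₄,
        c * (f (U ++ I ++ V) * f (U' ++ J ++ V')) := by
        simp only [Finset.sum_mul]
        simp only [Finset.mul_sum]
    _ ≤ ∑ U ∈ words A m₁, ∑ V ∈ words A m₂, ∑ U' ∈ words A m₃, ∑ V' ∈ words A m₄,
        ∑ d ∈ D, ∑ K ∈ words A d, f ((U ++ I ++ V) ++ K ++ (U' ++ J ++ V')) := by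
        gcongr
        exact hgap _ _
    _ = ∑ d ∈ D, ∑ U ∈ words A m₁, ∑ V ∈ words A m₂, ∑ U' ∈ words A m₃, ∑ V' ∈ words A m₄,
        ∑ K ∈ words A d, f ((U ++ I ++ V) ++ K ++ (U' ++ J ++ V')) := by
        simp only [Finset.sum_comm (t := D)]
    _ = ∑ d ∈ D, ∑ G ∈ words A (m₂ + d + m₃), ∑ U ∈ words A m₁, ∑ V' ∈ words A m₄,
        f (U ++ (I ++ G ++ J) ++ V') := by
        refine Finset.sum_congr rfl fun d _ => ?_
        rw [Finset.sum_comm (t := words A m₁)]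
        refine Finset.sum_congr rfl fun U _ => ?_
        rw [sum_words_add, sum_words_add]
        refine Finset.sum_congr rfl fun V _ => ?_
        rw [Finset.sum_comm (s := words A d)]
        refine Finset.sum_congr rfl fun U' _ => ?_
        rw [Finset.sum_comm]
        simp only [List.append_assoc]

end TwoSidedExtension

section OmegaW

variable {A : Type} [Fintype A] {p : ℕ} {f : List A → ℝ}

lemma OmegaS.quasiBernoulli (h : OmegaS p f) : QuasiBernoulli {p} f := by
  obtain ⟨hf, c, hc, -, hgap⟩ := h
  refine ⟨c, hc, fun I J => ?_⟩
  obtain ⟨K, hK, hle⟩ := hgap I J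
  exact hle.trans (le_sum_words_of_length_mem (fun K => (hf (I ++ K ++ J)).1) (by simp [hK]))

lemma OmegaW.nonneg (h : OmegaW p f) (I : List A) : 0 ≤ f I := (h.1 I).1

lemma OmegaW.sum_words (h : OmegaW p f) (n : ℕ) : ∑ I ∈ words A n, f I = 1 := by
  obtain ⟨-, -, -, hsum, -⟩ := h
  rw [← sum_ofFn_eq_sum_words, hsum]

lemma OmegaW.quasiBernoulli (h : OmegaW p f) : QuasiBernoulli (Finset.range (p + 1)) f := by
  obtain ⟨hf, c, hc, -, hgap, -⟩ := h
  refine ⟨c, hc, fun I J => ?_⟩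
  obtain ⟨K, hK, hle⟩ := hgap I J
  exact hle.trans (le_sum_words_of_length_mem (fun K => (hf (I ++ K ++ J)).1)
    (Finset.mem_range.2 (by omega)))

lemma OmegaW.reverse (h : OmegaW p f) : OmegaW p (f ∘ List.reverse) := by
  obtain ⟨hf, c, hc, hsum, hgap, hext⟩ := h
  refine ⟨fun I => hf _, c, hc, fun n => ?_, fun I J => ?_, fun I => ?_⟩
  · rw [sum_ofFn_eq_sum_words, ← hsum n, sum_ofFn_eq_sum_words, ← sum_words_reverse]
    simp only [Function.comp_apply, List.reverse_reverse]
  · obtain ⟨K, hK, hle⟩ := hgap J.reverse I.reverse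
    refine ⟨K.reverse, by simpa using hK, ?_⟩
    simpa [mul_comm (f I.reverse)] using hle
  · obtain ⟨i, j, hi, hj⟩ := hext I.reverse
    exact ⟨j, i, by simpa using hj, by simpa using hi⟩

lemma OmegaW.exists_mul_le_sum_append_of_le (h : OmegaW p f) (q : ℕ) :
    ∃ c > 0, ∀ r ≤ q, ∀ I : List A, c * f I ≤ ∑ V ∈ words A r, f (I ++ V) := by
  obtain ⟨hf, c, hc, -, -, hext⟩ := h
  have hpow (r : ℕ) : ∀ I : List A, c ^ r * f I ≤ ∑ V ∈ words A r, f (I ++ V) := by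
    induction r with
    | zero => simp [words_zero]
    | succ r ih =>
      intro I
      obtain ⟨-, j, -, hj⟩ := hext I
      rw [add_comm r 1, sum_words_add]
      calc c ^ (1 + r) * f I = c ^ r * (c * f I) := by ring
        _ ≤ c ^ r * f (I ++ [j]) := by gcongr
        _ ≤ ∑ V ∈ words A r, f (I ++ [j] ++ V) := ih _
        _ ≤ ∑ U ∈ words A 1, ∑ V ∈ words A r, f (I ++ (U ++ V)) := by
          simp only [← List.append_assoc]
          exact Finset.single_le_sum (f := fun U => ∑ V ∈ words A r, f (I ++ U ++ V))
            (fun _ _ => Finset.sum_nonneg fun _ _ => (hf _).1) (mem_words.2 rfl)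
  refine ⟨min c 1 ^ q, by positivity, fun r hr I => le_trans ?_ (hpow r I)⟩
  have hmin : min c 1 ^ q ≤ c ^ r :=
    (pow_le_pow_of_le_one (by positivity) (min_le_right _ _) hr).trans
      (pow_le_pow_left₀ (by positivity) (min_le_left _ _) r)
  exact mul_le_mul_of_nonneg_right hmin (hf I).1

lemma OmegaW.exists_mul_le_sum_append_right (h : OmegaW p f) :
    ∃ c > 0, ∀ n, p ≤ n → ∀ I : List A, c * f I ≤ ∑ V ∈ words A n, f (I ++ V) := by
  obtain ⟨c, hc, hgap⟩ := h.quasiBernoulli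
  obtain ⟨e, he, hext⟩ := h.exists_mul_le_sum_append_of_le p
  refine ⟨c * e / (p + 1), by positivity, fun n hn I => ?_⟩
  obtain ⟨n', rfl⟩ := Nat.exists_eq_add_of_le hn
  have hsum_gap : c * f I ≤ ∑ d ∈ Finset.range (p + 1), ∑ W ∈ words A (d + n'), f (I ++ W) := by
    calc c * f I = ∑ V ∈ words A n', c * (f I * f V) := by
          rw [← Finset.mul_sum, ← Finset.mul_sum, h.sum_words, mul_one]
      _ ≤ ∑ V ∈ words A n', ∑ d ∈ Finset.range (p + 1), ∑ K ∈ words A d, f (I ++ K ++ V) :=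
          Finset.sum_le_sum fun V _ => hgap I V
      _ = _ := by
          rw [Finset.sum_comm]
          refine Finset.sum_congr rfl fun d _ => ?_
          rw [Finset.sum_comm, sum_words_add]
          simp only [List.append_assoc]
  have hpad : ∀ d ∈ Finset.range (p + 1), e * ∑ W ∈ words A (d + n'), f (I ++ W) ≤
      ∑ V ∈ words A (p + n'), f (I ++ V) := by
    intro d hd
    rw [Finset.mem_range] at hd
    rw [show p + n' = d + n' + (p - d) by omega, sum_words_add (d + n'), Finset.mul_sum]
    refine Finset.sum_le_sum fun W _ => ?_
    simpa only [List.append_assoc] using hext (p - d) (by omega) (I ++ W)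
  rw [div_mul_eq_mul_div, div_le_iff₀ (by positivity)]
  calc c * e * f I = e * (c * f I) := by ring
    _ ≤ e * ∑ d ∈ Finset.range (p + 1), ∑ W ∈ words A (d + n'), f (I ++ W) := by gcongr
    _ ≤ ∑ _d ∈ Finset.range (p + 1), ∑ V ∈ words A (p + n'), f (I ++ V) := by
        rw [Finset.mul_sum]
        exact Finset.sum_le_sum hpad
    _ = (∑ V ∈ words A (p + n'), f (I ++ V)) * (p + 1) := by simp [mul_comm]

lemma OmegaW.exists_mul_le_sum_append_left (h : OmegaW p f) :
    ∃ c > 0, ∀ n, p ≤ n → ∀ I : List A, c * f I ≤ ∑ V ∈ words A n, f (V ++ I) := by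
  obtain ⟨c, hc, hle⟩ := h.reverse.exists_mul_le_sum_append_right
  refine ⟨c, hc, fun n hn I => ?_⟩
  rw [← sum_words_reverse]
  simpa using hle n hn I.reverse

lemma OmegaW.exists_mul_fmn_le_fmn (h : OmegaW p f) :
    ∃ c > 0, ∀ m n m' n', m + p ≤ m' → n + p ≤ n' → ∀ I : List A,
      c * fmn f m n I ≤ fmn f m' n' I := by
  obtain ⟨c, hc, hright⟩ := h.exists_mul_le_sum_append_right
  obtain ⟨e, he, hleft⟩ := h.exists_mul_le_sum_append_left
  refine ⟨e * c, by positivity, fun m n m' n' hm hn I => ?_⟩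
  obtain ⟨s, rfl⟩ := Nat.exists_eq_add_of_le (show n ≤ n' by omega)
  obtain ⟨t, rfl⟩ := Nat.exists_eq_add_of_le' (show m ≤ m' by omega)
  calc e * c * fmn f m n I = e * (c * fmn f m n I) := by ring
    _ ≤ e * fmn f m (n + s) I := by
        rw [fmn_add_right, fmn_eq_sum_words]
        simp only [Finset.mul_sum]
        gcongr with U _ V _
        simpa only [Finset.mul_sum] using mul_le_mul_of_nonneg_left (hright s (by omega) _) he.le
    _ ≤ fmn f (t + m) (n + s) I := by
        rw [fmn_add_left, fmn_eq_sum_words, Finset.mul_sum]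
        simp only [Finset.mul_sum]
        gcongr with U _ V _
        exact hleft t (by omega) _

end OmegaW

section OrbitAverage

variable {A : Type} [MeasurableSpace A]

/-- The average of the images of `ρ` under `σ^t` for `0 ≤ t ≤ N`. There are `N + 1` terms, so that
this is a probability measure for every `N`. -/
def orbitAverage (ρ : ProbabilityMeasure (ℕ → A)) (N : ℕ) : ProbabilityMeasure (ℕ → A) :=
  ⟨((N + 1 : ℕ) : ℝ≥0∞)⁻¹ •
      ∑ t ∈ Finset.range (N + 1), (ρ : Measure (ℕ → A)).map shiftMap^[t], by
    have hmass (t : ℕ) : (ρ : Measure (ℕ → A)).map shiftMap^[t] Set.univ = 1 :=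
      (Measure.isProbabilityMeasure_map (measurable_shiftMap.iterate t).aemeasurable).measure_univ
    constructor
    simp only [Measure.smul_apply, Measure.coe_finsetSum, Finset.sum_apply, hmass, smul_eq_mul,
      Finset.sum_const, Finset.card_range, nsmul_eq_mul, mul_one]
    exact ENNReal.inv_mul_cancel (by simp) (by simp)⟩

variable (ρ : ProbabilityMeasure (ℕ → A)) (N : ℕ)

lemma mul_measureReal_orbitAverage (S : Set (ℕ → A)) :
    ((N + 1 : ℕ) : ℝ) * (orbitAverage ρ N : Measure (ℕ → A)).real S =
      ∑ t ∈ Finset.range (N + 1), ((ρ : Measure (ℕ → A)).map shiftMap^[t]).real S := by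
  simp only [Measure.real, orbitAverage, ProbabilityMeasure.coe_mk, Measure.smul_apply,
    Measure.coe_finsetSum, Finset.sum_apply, smul_eq_mul, ENNReal.toReal_mul]
  rw [ENNReal.toReal_sum fun t _ => measure_ne_top _ _, ENNReal.toReal_inv, ENNReal.toReal_natCast,
    mul_inv_cancel_left₀ (by positivity)]

lemma mul_integral_orbitAverage {g : (ℕ → A) → ℝ} (hgm : Measurable g)
    (hg : ∃ C, ∀ x, ‖g x‖ ≤ C) :
    ((N + 1 : ℕ) : ℝ) * ∫ x, g x ∂(orbitAverage ρ N : Measure (ℕ → A)) =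
      ∫ x, ∑ t ∈ Finset.range (N + 1), g (shiftMap^[t] x) ∂(ρ : Measure (ℕ → A)) := by
  obtain ⟨C, hC⟩ := hg
  rw [orbitAverage, ProbabilityMeasure.coe_mk, integral_smul_measure, integral_finsetSum_measure,
    ENNReal.toReal_inv, ENNReal.toReal_natCast, smul_eq_mul, mul_inv_cancel_left₀ (by positivity),
    integral_finsetSum]
  · exact Finset.sum_congr rfl fun t _ => integral_map (measurable_shiftMap.iterate t).aemeasurable
      hgm.aestronglyMeasurable
  · exact fun t _ => .of_bound (hgm.comp (measurable_shiftMap.iterate t)).aestronglyMeasurable C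
      (.of_forall fun x => hC _)
  · exact fun t _ => .of_bound hgm.aestronglyMeasurable C (.of_forall fun x => hC x)

variable {ρ} in
lemma measureReal_orbitAverage_eq_one {X : Set (ℕ → A)} (hXm : MeasurableSet X)
    (hX : shiftMap '' X ⊆ X) (hρ : (ρ : Measure (ℕ → A)).real X = 1) :
    (orbitAverage ρ N : Measure (ℕ → A)).real X = 1 := by
  have hmap (t : ℕ) : ((ρ : Measure (ℕ → A)).map shiftMap^[t]).real X = 1 := by
    rw [map_measureReal_apply (measurable_shiftMap.iterate t) hXm]
    exact measureReal_le_one.antisymm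
      (hρ ▸ measureReal_mono fun x hx => iterate_shiftMap_mem hX hx t)
  have havg := mul_measureReal_orbitAverage ρ N X
  simp only [hmap, Finset.sum_const, Finset.card_range, nsmul_eq_mul] at havg
  exact mul_left_cancel₀ (by positivity) havg

lemma abs_orbitAverage_preimage_sub_le {S : Set (ℕ → A)} (hS : MeasurableSet S) :
    |(orbitAverage ρ N : Measure (ℕ → A)).real (shiftMap ⁻¹' S) -
      (orbitAverage ρ N : Measure (ℕ → A)).real S| ≤ 1 / ((N + 1 : ℕ) : ℝ) := by
  have hstep (t : ℕ) : ((ρ : Measure (ℕ → A)).map shiftMap^[t]).real (shiftMap ⁻¹' S) =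
      ((ρ : Measure (ℕ → A)).map shiftMap^[t + 1]).real S := by
    rw [map_measureReal_apply (measurable_shiftMap.iterate t) (measurable_shiftMap hS),
      map_measureReal_apply (measurable_shiftMap.iterate (t + 1)) hS,
      Function.iterate_succ', Set.preimage_comp]
  have hbound (t : ℕ) : ((ρ : Measure (ℕ → A)).map shiftMap^[t]).real S ∈ Set.Icc (0 : ℝ) 1 := by
    rw [map_measureReal_apply (measurable_shiftMap.iterate t) hS]
    exact ⟨measureReal_nonneg, measureReal_le_one⟩
  have hN : (0 : ℝ) < ((N + 1 : ℕ) : ℝ) := by positivity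
  have htelescope : ((N + 1 : ℕ) : ℝ) * ((orbitAverage ρ N : Measure (ℕ → A)).real
      (shiftMap ⁻¹' S) - (orbitAverage ρ N : Measure (ℕ → A)).real S) =
      ((ρ : Measure (ℕ → A)).map shiftMap^[N + 1]).real S -
        ((ρ : Measure (ℕ → A)).map shiftMap^[0]).real S := by
    simp only [mul_sub, mul_measureReal_orbitAverage, hstep, ← Finset.sum_sub_distrib]
    exact Finset.sum_range_sub (fun t => ((ρ : Measure (ℕ → A)).map shiftMap^[t]).real S) (N + 1)
  rw [le_div_iff₀' hN, ← abs_of_pos hN, ← abs_mul, htelescope]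
  exact abs_sub_le_of_nonneg_of_le (hbound _).1 (hbound _).2 (hbound _).1 (hbound _).2

end OrbitAverage

lemma blockMap_iterate_shiftMap {A B : Type} (t : A → B) (n : ℕ) (x : ℕ → A) :
    blockMap t (shiftMap^[n] x) = shiftMap^[n] (blockMap t x) := by
  funext i
  simp only [blockMap, iterate_shiftMap_apply]

lemma map_blockMap_map_iterate_shiftMap {A B : Type} [Countable A] [MeasurableSpace A]
    [MeasurableSingletonClass A] [MeasurableSpace B] (ρ : Measure (ℕ → A)) (t : A → B) (n : ℕ) :
    (ρ.map shiftMap^[n]).map (blockMap t) = (ρ.map (blockMap t)).map shiftMap^[n] := by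
  rw [Measure.map_map (measurable_blockMap t) (measurable_shiftMap.iterate n),
    Measure.map_map (measurable_shiftMap.iterate n) (measurable_blockMap t)]
  exact congrArg (ρ.map ·) (funext fun x => blockMap_iterate_shiftMap t n x)

lemma mul_blockEntropy_le_mul_blockEntropy_orbitAverage {A B : Type} [Countable A]
    [MeasurableSpace A] [MeasurableSingletonClass A] [Fintype B] [MeasurableSpace B]
    [MeasurableSingletonClass B] (t : A → B) (ρ : ProbabilityMeasure (ℕ → A)) (N m : ℕ) :
    m * blockEntropy ((ρ : Measure (ℕ → A)).map (blockMap t)) (N + 1) ≤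
      ((N + 1 : ℕ) : ℝ) * blockEntropy ((orbitAverage ρ N : Measure (ℕ → A)).map (blockMap t)) m +
        ∑ r ∈ Finset.range m, ((words B r).card : ℝ) := by
  have hprob : IsProbabilityMeasure ((ρ : Measure (ℕ → A)).map (blockMap t)) :=
    Measure.isProbabilityMeasure_map (measurable_blockMap t).aemeasurable
  refine (mul_blockEntropy_le_sum _ (N + 1) m).trans ?_
  gcongr
  refine sum_blockEntropy_le_of_average N.succ_pos m fun I => ?_
  rw [map_measureReal_apply (measurable_blockMap t) (measurableSet_cyl I),
    mul_measureReal_orbitAverage]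
  refine Finset.sum_congr rfl fun s _ => ?_
  rw [← map_blockMap_map_iterate_shiftMap,
    map_measureReal_apply (measurable_blockMap t) (measurableSet_cyl I)]

section Limit

lemma tendsto_div_succ {l : Filter ℕ} (hl : l ≤ atTop) (c : ℝ) :
    Tendsto (fun N : ℕ => c / ((N + 1 : ℕ) : ℝ)) l (𝓝 0) :=
  ((tendsto_const_div_atTop_nhds_zero_nat c).comp (tendsto_add_atTop_nat 1)).mono_left hl

variable {A : Type} [TopologicalSpace A] [DiscreteTopology A] [MeasurableSpace A] [BorelSpace A]

lemma exists_tendsto_of_compact [Finite A] (ν : ℕ → ProbabilityMeasure (ℕ → A)) :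
    ∃ (μ : ProbabilityMeasure (ℕ → A)) (l : Filter ℕ), l.NeBot ∧ l ≤ atTop ∧ Tendsto ν l (𝓝 μ) :=
  ⟨((hyperfilter ℕ).map ν).lim, hyperfilter ℕ, inferInstance, Nat.hyperfilter_le_atTop,
    ((hyperfilter ℕ).map ν).le_nhds_lim⟩

section Clopen

variable [Countable A] {μ : ProbabilityMeasure (ℕ → A)} {l : Filter ℕ}
  {ν : ℕ → ProbabilityMeasure (ℕ → A)}

lemma tendsto_measureReal_of_isClopen (hν : Tendsto ν l (𝓝 μ)) {C : Set (ℕ → A)}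
    (hC : IsClopen C) : Tendsto (fun N => (ν N : Measure (ℕ → A)).real C) l
      (𝓝 ((μ : Measure (ℕ → A)).real C)) :=
  NNReal.tendsto_coe.2 (ProbabilityMeasure.tendsto_measure_of_isClopen_of_tendsto hν hC)

lemma tendsto_blockEntropy_map_blockMap {B : Type} [Fintype B] [TopologicalSpace B]
    [DiscreteTopology B] [MeasurableSpace B] [MeasurableSingletonClass B] (t : A → B)
    (hν : Tendsto ν l (𝓝 μ)) (m : ℕ) :
    Tendsto (fun N => blockEntropy ((ν N : Measure (ℕ → A)).map (blockMap t)) m) l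
      (𝓝 (blockEntropy ((μ : Measure (ℕ → A)).map (blockMap t)) m)) := by
  refine tendsto_finsetSum _ fun J _ => (Real.continuous_negMulLog.tendsto _).comp ?_
  simp only [map_measureReal_apply (measurable_blockMap t) (measurableSet_cyl J)]
  exact tendsto_measureReal_of_isClopen hν ((isClopen_cyl J).preimage (continuous_blockMap t))

lemma measure_eq_one_of_tendsto [l.NeBot] (hν : Tendsto ν l (𝓝 μ)) {X : Set (ℕ → A)}
    (hX : IsClosed X) (hνX : ∀ N, (ν N : Measure (ℕ → A)).real X = 1) :
    (μ : Measure (ℕ → A)) X = 1 := by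
  have hsup := ProbabilityMeasure.limsup_measure_closed_le_of_tendsto hν hX
  have hone (N : ℕ) : (ν N : Measure (ℕ → A)) X = 1 :=
    (ENNReal.toReal_eq_one_iff _).1 (hνX N)
  simp only [hone, limsup_const] at hsup
  exact prob_le_one.antisymm hsup

lemma map_shiftMap_eq_of_tendsto_orbitAverage {A : Type} [Finite A] [TopologicalSpace A]
    [DiscreteTopology A] [MeasurableSpace A] [BorelSpace A] {μ : ProbabilityMeasure (ℕ → A)}
    {l : Filter ℕ} {ρ : ℕ → ProbabilityMeasure (ℕ → A)} [l.NeBot] (hl : l ≤ atTop)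
    (hρ : Tendsto (fun N => orbitAverage (ρ N) N) l (𝓝 μ)) :
    (μ : Measure (ℕ → A)).map shiftMap = μ := by
  have := Measure.isProbabilityMeasure_map (μ := (μ : Measure (ℕ → A)))
    (measurable_shiftMap (A := A)).aemeasurable
  refine measure_eq_of_cyl fun I => ?_
  rw [map_measureReal_apply measurable_shiftMap (measurableSet_cyl I), ← sub_eq_zero]
  exact tendsto_nhds_unique
    ((tendsto_measureReal_of_isClopen hρ ((isClopen_cyl I).preimage continuous_shiftMap)).sub
      (tendsto_measureReal_of_isClopen hρ (isClopen_cyl I)))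
    (squeeze_zero_norm (fun N => abs_orbitAverage_preimage_sub_le (ρ N) N (measurableSet_cyl I))
      (tendsto_div_succ hl 1))

variable {ρ : ℕ → ProbabilityMeasure (ℕ → A)}

lemma le_measureReal_of_tendsto_orbitAverage [l.NeBot] (hl : l ≤ atTop)
    (hρ : Tendsto (fun N => orbitAverage (ρ N) N) l (𝓝 μ)) {C : Set (ℕ → A)} (hC : IsClopen C)
    {c : ℝ} (a b : ℕ) (h : ∀ N t, a ≤ t → t + b ≤ N + 1 →
      c ≤ ((ρ N : Measure (ℕ → A)).map shiftMap^[t]).real C) :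
    c ≤ (μ : Measure (ℕ → A)).real C := by
  rcases le_or_gt c 0 with hc | hc
  · exact hc.trans measureReal_nonneg
  have hlim := (tendsto_measureReal_of_isClopen hρ hC).add
    (tendsto_div_succ hl (c * (a + b : ℕ)))
  rw [add_zero] at hlim
  refine ge_of_tendsto hlim (.of_forall fun N => ?_)
  have hN : (0 : ℝ) < ((N + 1 : ℕ) : ℝ) := by positivity
  have hsum : ((N + 1 - (a + b) : ℕ) : ℝ) * c ≤
      ((N + 1 : ℕ) : ℝ) * (orbitAverage (ρ N) N : Measure (ℕ → A)).real C := by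
    rw [mul_measureReal_orbitAverage]
    calc ((N + 1 - (a + b) : ℕ) : ℝ) * c
        = ∑ _t ∈ Finset.Ico a (N + 1 - b), c := by
          rw [Finset.sum_const, Nat.card_Ico, nsmul_eq_mul, Nat.sub_sub, add_comm b]
      _ ≤ ∑ t ∈ Finset.Ico a (N + 1 - b), ((ρ N : Measure (ℕ → A)).map shiftMap^[t]).real C :=
          Finset.sum_le_sum fun t ht => by
            rw [Finset.mem_Ico] at ht
            exact h N t ht.1 (by omega)
      _ ≤ _ := Finset.sum_le_sum_of_subset_of_nonneg
          (fun t ht => by simp only [Finset.mem_Ico, Finset.mem_range] at ht ⊢; omega)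
          fun _ _ _ => measureReal_nonneg
  have hcast : (N + 1 : ℕ) ≤ ((N + 1 - (a + b) : ℕ) : ℝ) + (a + b : ℕ) := by
    exact_mod_cast le_tsub_add
  refine le_of_mul_le_mul_left ?_ hN
  rw [mul_add, mul_div_cancel₀ _ hN.ne']
  linarith [mul_le_mul_of_nonneg_right hcast hc.le]

lemma measureReal_le_of_tendsto_orbitAverage [l.NeBot] (hl : l ≤ atTop)
    (hρ : Tendsto (fun N => orbitAverage (ρ N) N) l (𝓝 μ)) {C : Set (ℕ → A)} (hC : IsClopen C)
    {c : ℝ} (a b : ℕ) (h : ∀ N t, a ≤ t → t + b ≤ N + 1 →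
      ((ρ N : Measure (ℕ → A)).map shiftMap^[t]).real C ≤ c) :
    (μ : Measure (ℕ → A)).real C ≤ c := by
  have hcompl := le_measureReal_of_tendsto_orbitAverage hl hρ hC.compl (c := 1 - c) a b
    fun N t ha hb => by
      have := Measure.isProbabilityMeasure_map (μ := (ρ N : Measure (ℕ → A)))
        (measurable_shiftMap.iterate t).aemeasurable
      rw [probReal_compl_eq_one_sub hC.isOpen.measurableSet]
      linarith [h N t ha hb]
  rw [probReal_compl_eq_one_sub hC.isOpen.measurableSet] at hcompl
  linarith

end Clopen

end Limit

section WordMeasure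

variable {A : Type} [Fintype A] {f : List A → ℝ}

/-- A weight on words that restricts to a probability vector on the words of each length. -/
structure WordDistribution (f : List A → ℝ) : Prop where
  nonneg : ∀ I, 0 ≤ f I
  sum_words : ∀ n, ∑ I ∈ words A n, f I = 1

variable [MeasurableSpace A] (h : WordDistribution f) (pt : List A → ℕ → A) (N : ℕ)

/-- The discrete measure giving mass `f J` to the chosen point `pt J`, for each word `J` of
length `N`. -/
def WordDistribution.measure (h : WordDistribution f) (pt : List A → ℕ → A) (N : ℕ) :
    ProbabilityMeasure (ℕ → A) :=
  ⟨∑ J ∈ words A N, ENNReal.ofReal (f J) • Measure.dirac (pt J), by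
    constructor
    simp only [Measure.coe_finsetSum, Finset.sum_apply, Measure.smul_apply, measure_univ,
      smul_eq_mul, mul_one]
    rw [← ENNReal.ofReal_sum_of_nonneg fun _ _ => h.nonneg _, h.sum_words, ENNReal.ofReal_one]⟩

lemma WordDistribution.integral_measure {g : (ℕ → A) → ℝ} (hg : StronglyMeasurable g) :
    ∫ x, g x ∂(h.measure pt N : Measure (ℕ → A)) = ∑ J ∈ words A N, f J * g (pt J) := by
  rw [WordDistribution.measure, ProbabilityMeasure.coe_mk, integral_finsetSum_measure]
  · refine Finset.sum_congr rfl fun J _ => ?_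
    rw [integral_smul_measure, integral_dirac' _ _ hg, ENNReal.toReal_ofReal (h.nonneg _),
      smul_eq_mul]
  · exact fun J _ => (integrable_dirac' hg (by simp)).smul_measure ENNReal.ofReal_ne_top

lemma WordDistribution.measureReal_measure {S : Set (ℕ → A)} (hS : MeasurableSet S) :
    (h.measure pt N : Measure (ℕ → A)).real S =
      ∑ J ∈ words A N, f J * S.indicator 1 (pt J) := by
  rw [← integral_indicator_one hS,
    h.integral_measure _ _ (stronglyMeasurable_one.indicator hS)]

variable {pt}

lemma WordDistribution.measureReal_measure_eq_one {X : Set (ℕ → A)} (hXm : MeasurableSet X)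
    (hX : ∀ J, pt J ∈ X) : (h.measure pt N : Measure (ℕ → A)).real X = 1 := by
  rw [h.measureReal_measure _ _ hXm, ← h.sum_words N]
  exact Finset.sum_congr rfl fun J _ => by simp [hX J]

variable [MeasurableSingletonClass A] {N}

lemma WordDistribution.measureReal_map_measure_cyl (hpt : ∀ J, f J ≠ 0 → pt J ∈ cyl J)
    {t s : ℕ} {I : List A} (hN : t + I.length + s = N) :
    ((h.measure pt N : Measure (ℕ → A)).map shiftMap^[t]).real (cyl I) = fmn f t s I := by
  have hterm {U M V : List A} (hU : U ∈ words A t) (hM : M ∈ words A I.length) :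
      f (U ++ M ++ V) * (shiftMap^[t] ⁻¹' cyl I).indicator 1 (pt (U ++ M ++ V)) =
        if M = I then f (U ++ I ++ V) else 0 := by
    by_cases hf : f (U ++ M ++ V) = 0
    · rw [hf, zero_mul]
      split_ifs with hMI
      · rw [← hMI, hf]
      · rfl
    have hmem : pt (U ++ M ++ V) ∈ shiftMap^[t] ⁻¹' cyl M := by
      have := hpt _ hf
      rw [cyl_append, cyl_append, mem_words.1 hU] at this
      exact this.1.2
    split_ifs with hMI
    · rw [← hMI, Set.indicator_of_mem hmem, Pi.one_apply, mul_one]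
    · rw [Set.indicator_of_notMem, mul_zero]
      exact Set.disjoint_left.1 (disjoint_cyl (mem_words.1 hM) hMI) hmem
  have hmeas : MeasurableSet (shiftMap^[t] ⁻¹' cyl I) :=
    measurable_shiftMap.iterate t (measurableSet_cyl I)
  rw [measureReal_map_iterate_shiftMap, h.measureReal_measure _ _ hmeas, ← hN, sum_words_add,
    sum_words_add, fmn_eq_sum_words]
  refine Finset.sum_congr rfl fun U hU => ?_
  rw [Finset.sum_comm]
  refine Finset.sum_congr rfl fun V _ => ?_
  rw [Finset.sum_congr rfl fun M hM => hterm hU hM, Finset.sum_ite_eq', if_pos (mem_words.2 rfl)]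

end WordMeasure

section CylinderComparable

variable {A : Type} [Fintype A] {f : List A → ℝ}

lemma OmegaW.wordDistribution {p : ℕ} (h : OmegaW p f) : WordDistribution f :=
  ⟨h.nonneg, h.sum_words⟩

variable [MeasurableSpace A] {μ : Measure (ℕ → A)}

/-- The measure of the cylinder over `I` is comparable, uniformly in `I`, with the supremum of
`fmn f m n I` over all `m` and `n`. -/
structure CylinderComparable (f : List A → ℝ) (μ : Measure (ℕ → A)) : Prop where
  exists_mul_fmn_le : ∃ c > 0, ∀ m n I, c * fmn f m n I ≤ μ.real (cyl I)
  le_of_fmn_le : ∀ I c, (∀ m n, fmn f m n I ≤ c) → μ.real (cyl I) ≤ c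

lemma CylinderComparable.exists_half_le_fmn (hμ : CylinderComparable f μ) {I : List A}
    (hI : 0 < μ.real (cyl I)) : ∃ m n, μ.real (cyl I) / 2 ≤ fmn f m n I := by
  by_contra! h
  linarith [hμ.le_of_fmn_le I _ fun m n => (h m n).le]

lemma cylinderComparable_of_tendsto [TopologicalSpace A] [DiscreteTopology A] [BorelSpace A]
    {p : ℕ} (hf : OmegaW p f) {pt : List A → ℕ → A} (hpt : ∀ J, f J ≠ 0 → pt J ∈ cyl J)
    {μ : ProbabilityMeasure (ℕ → A)} {l : Filter ℕ} [l.NeBot] (hl : l ≤ atTop)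
    (hμ : Tendsto (fun N => orbitAverage (hf.wordDistribution.measure pt (N + 1)) N) l (𝓝 μ)) :
    CylinderComparable f (μ : Measure (ℕ → A)) := by
  have hcyl {N t : ℕ} {I : List A} (hN : t + I.length ≤ N + 1) :
      ((hf.wordDistribution.measure pt (N + 1) : Measure (ℕ → A)).map shiftMap^[t]).real (cyl I) =
        fmn f t (N + 1 - (t + I.length)) I :=
    hf.wordDistribution.measureReal_map_measure_cyl hpt (by omega)
  obtain ⟨c, hc, hfmn⟩ := hf.exists_mul_fmn_le_fmn
  refine ⟨⟨c, hc, fun m n I => ?_⟩, fun I c hc => ?_⟩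
  · refine le_measureReal_of_tendsto_orbitAverage hl hμ (isClopen_cyl I) (m + p)
      (I.length + (n + p)) fun N t ha hb => ?_
    rw [hcyl (by omega)]
    exact hfmn m n _ _ ha (by omega) I
  · refine measureReal_le_of_tendsto_orbitAverage hl hμ (isClopen_cyl I) 0 I.length
      fun N t _ hb => ?_
    rw [hcyl hb]
    exact hc _ _

end CylinderComparable

section EventuallyMixes

variable {A : Type} [MeasurableSpace A]

/-- The lower mixing bound `c μ(S) μ(T) ≤ ∑_{d ∈ D} μ(S ∩ σ^{-g-d} T)` for all large `g`. -/
def EventuallyMixes (μ : Measure (ℕ → A)) (D : Finset ℕ) (c : ℝ) (S T : Set (ℕ → A)) : Prop :=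
  ∀ᶠ g in atTop, c * (μ.real S * μ.real T) ≤ ∑ d ∈ D, μ.real (S ∩ shiftMap^[g + d] ⁻¹' T)

variable {μ : Measure (ℕ → A)} [IsProbabilityMeasure μ] {D : Finset ℕ} {c : ℝ}
  {S T : Set (ℕ → A)}

lemma EventuallyMixes.biUnion_left {ι : Type*} {s : Finset ι} {S : ι → Set (ℕ → A)}
    (hdisj : (s : Set ι).PairwiseDisjoint S) (hS : ∀ i ∈ s, MeasurableSet (S i))
    (hT : MeasurableSet T) (h : ∀ i ∈ s, EventuallyMixes μ D c (S i) T) :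
    EventuallyMixes μ D c (⋃ i ∈ s, S i) T := by
  filter_upwards [(Filter.eventually_all_finset s).2 h] with g hg
  have hsum (r : ℕ) : μ.real ((⋃ i ∈ s, S i) ∩ shiftMap^[r] ⁻¹' T) =
      ∑ i ∈ s, μ.real (S i ∩ shiftMap^[r] ⁻¹' T) := by
    rw [Set.iUnion₂_inter, measureReal_biUnion_finset
      (hdisj.mono fun _ => Set.inter_subset_left)
      fun i hi => (hS i hi).inter (measurable_shiftMap.iterate r hT)]
  simp only [hsum]
  rw [measureReal_biUnion_finset hdisj hS, Finset.sum_mul, Finset.mul_sum, Finset.sum_comm]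
  exact Finset.sum_le_sum hg

lemma EventuallyMixes.biUnion_right {ι : Type*} {t : Finset ι} {T : ι → Set (ℕ → A)}
    (hdisj : (t : Set ι).PairwiseDisjoint T) (hT : ∀ i ∈ t, MeasurableSet (T i))
    (hS : MeasurableSet S) (h : ∀ i ∈ t, EventuallyMixes μ D c S (T i)) :
    EventuallyMixes μ D c S (⋃ i ∈ t, T i) := by
  filter_upwards [(Filter.eventually_all_finset t).2 h] with g hg
  have hsum (r : ℕ) : μ.real (S ∩ shiftMap^[r] ⁻¹' ⋃ i ∈ t, T i) =
      ∑ i ∈ t, μ.real (S ∩ shiftMap^[r] ⁻¹' T i) := by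
    rw [Set.preimage_iUnion₂, Set.inter_iUnion₂, measureReal_biUnion_finset
      (fun i hi j hj hij => ((hdisj hi hj hij).preimage _).mono Set.inter_subset_right
        Set.inter_subset_right)
      fun i hi => hS.inter (measurable_shiftMap.iterate r (hT i hi))]
  simp only [hsum]
  rw [measureReal_biUnion_finset hdisj hT, Finset.mul_sum, Finset.mul_sum, Finset.sum_comm]
  exact Finset.sum_le_sum hg

end EventuallyMixes

section MixingOfCylinders

variable {A : Type} [Fintype A] [MeasurableSpace A] [MeasurableSingletonClass A]
  {μ : Measure (ℕ → A)} [IsProbabilityMeasure μ] {D : Finset ℕ}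

lemma sum_measureReal_cyl_append_append (I J : List A) (g : ℕ) :
    ∑ G ∈ words A g, μ.real (cyl (I ++ G ++ J)) =
      μ.real (cyl I ∩ shiftMap^[I.length + g] ⁻¹' cyl J) := by
  rw [← measureReal_restrict_apply (measurableSet_cyl I),
    ← sum_measureReal_cyl_append_right _ I g]
  refine Finset.sum_congr rfl fun G hG => ?_
  rw [measureReal_restrict_apply (measurableSet_cyl _), cyl_append (I ++ G), List.length_append,
    mem_words.1 hG]

lemma CylinderComparable.exists_eventuallyMixes_cyl {f : List A → ℝ} {p : ℕ}
    (hμ : CylinderComparable f μ) (hf : OmegaW p f) (hD : QuasiBernoulli D f) :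
    ∃ c > 0, ∀ I J : List A, EventuallyMixes μ D c (cyl I) (cyl J) := by
  obtain ⟨c₀, hc₀, hlower⟩ := hμ.exists_mul_fmn_le
  obtain ⟨c₁, hc₁, hextend⟩ := hf.exists_mul_fmn_le_fmn
  obtain ⟨c₂, hc₂, hglue⟩ := hD.exists_mul_fmn_le
  refine ⟨c₀ * c₁ * c₂ / 4, by positivity, fun I J => ?_⟩
  by_cases hIJ : μ.real (cyl I) * μ.real (cyl J) = 0
  · refine .of_forall fun g => ?_
    rw [hIJ, mul_zero]
    positivity
  have hI : 0 < μ.real (cyl I) := measureReal_nonneg.lt_of_ne' (left_ne_zero_of_mul hIJ)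
  have hJ : 0 < μ.real (cyl J) := measureReal_nonneg.lt_of_ne' (right_ne_zero_of_mul hIJ)
  obtain ⟨m₁, m₂, hfI⟩ := hμ.exists_half_le_fmn hI
  obtain ⟨m₃, m₄, hfJ⟩ := hμ.exists_half_le_fmn hJ
  filter_upwards [eventually_ge_atTop (I.length + (m₂ + p + m₃))] with g hg
  obtain ⟨n, hn, rfl⟩ : ∃ n, m₂ + p ≤ n ∧ g = I.length + (n + m₃) :=
    ⟨g - I.length - m₃, by omega, by omega⟩
  have hfI' : c₁ * (μ.real (cyl I) / 2) ≤ fmn f (m₁ + p) n I :=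
    (mul_le_mul_of_nonneg_left hfI hc₁.le).trans (hextend m₁ m₂ _ _ le_rfl hn I)
  calc c₀ * c₁ * c₂ / 4 * (μ.real (cyl I) * μ.real (cyl J))
      = c₀ * (c₂ * (c₁ * (μ.real (cyl I) / 2) * (μ.real (cyl J) / 2))) := by ring
    _ ≤ c₀ * (c₂ * (fmn f (m₁ + p) n I * fmn f m₃ m₄ J)) := by
        gcongr
        exact fmn_nonneg hf.nonneg _ _ _
    _ ≤ c₀ * ∑ d ∈ D, ∑ G ∈ words A (n + d + m₃), fmn f (m₁ + p) m₄ (I ++ G ++ J) := by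
        gcongr
        exact hglue _ _ _ _ I J
    _ ≤ ∑ d ∈ D, ∑ G ∈ words A (n + d + m₃), μ.real (cyl (I ++ G ++ J)) := by
        simp only [Finset.mul_sum]
        exact Finset.sum_le_sum fun d _ => Finset.sum_le_sum fun G _ => hlower _ _ _
    _ = ∑ d ∈ D, μ.real (cyl I ∩ shiftMap^[I.length + (n + m₃) + d] ⁻¹' cyl J) := by
        refine Finset.sum_congr rfl fun d _ => ?_
        rw [sum_measureReal_cyl_append_append]
        congr 4
        omega

end MixingOfCylinders

lemma abs_measureReal_sub_le {Ω : Type*} [MeasurableSpace Ω] {ρ : Measure Ω}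
    [IsFiniteMeasure ρ] {S T : Set Ω} {ε : ℝ} (hST : ρ.real (S \ T) ≤ ε)
    (hTS : ρ.real (T \ S) ≤ ε) :
    |ρ.real S - ρ.real T| ≤ ε := by
  have hS : ρ.real S ≤ ρ.real T + ρ.real (S \ T) :=
    (measureReal_mono (by rw [Set.union_sdiff_self]; exact Set.subset_union_right)).trans
      (measureReal_union_le T (S \ T))
  have hT : ρ.real T ≤ ρ.real S + ρ.real (T \ S) :=
    (measureReal_mono (by rw [Set.union_sdiff_self]; exact Set.subset_union_right)).trans
      (measureReal_union_le S (T \ S))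
  rw [abs_le]
  constructor <;> linarith

lemma measureReal_inter_preimage_le_add {Ω : Type*} [MeasurableSpace Ω] {ρ : Measure Ω}
    [IsFiniteMeasure ρ] {g : Ω → Ω} (hg : MeasurePreserving g ρ ρ) {S S' T T' : Set Ω}
    (hT : MeasurableSet T) (hT' : MeasurableSet T') :
    ρ.real (S' ∩ g ⁻¹' T') ≤ ρ.real (S ∩ g ⁻¹' T) + ρ.real (S' \ S) + ρ.real (T' \ T) := by
  have hsub : S' ∩ g ⁻¹' T' ⊆ (S ∩ g ⁻¹' T ∪ S' \ S) ∪ g ⁻¹' (T' \ T) := by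
    rintro x ⟨hxS', hxT'⟩
    by_cases hxS : x ∈ S
    · by_cases hxT : g x ∈ T
      · exact .inl (.inl ⟨hxS, hxT⟩)
      · exact .inr ⟨hxT', hxT⟩
    · exact .inl (.inr ⟨hxS', hxS⟩)
  rw [← hg.measureReal_preimage (hT'.diff hT).nullMeasurableSet]
  refine (measureReal_mono hsub).trans ((measureReal_union_le _ _).trans ?_)
  gcongr
  exact measureReal_union_le _ _

section Approximation

variable {A : Type} [Finite A] [TopologicalSpace A] [DiscreteTopology A] [MeasurableSpace A]
  [BorelSpace A] {μ : Measure (ℕ → A)} [IsProbabilityMeasure μ] {S T : Set (ℕ → A)}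

lemma exists_isClopen_measureReal_sdiff_le (hS : MeasurableSet S) {ε : ℝ} (hε : 0 < ε) :
    ∃ C, IsClopen C ∧ μ.real (S \ C) ≤ ε ∧ μ.real (C \ S) ≤ ε := by
  have hε' : ENNReal.ofReal ε ≠ 0 := by simpa using hε
  obtain ⟨K, hKS, hK, hSK⟩ := hS.exists_isClosed_sdiff_lt (μ := μ) (measure_ne_top _ _) hε'
  obtain ⟨U, hSU, hU, -, hUS⟩ := hS.exists_isOpen_sdiff_lt (μ := μ) (measure_ne_top _ _) hε'
  obtain ⟨C, hC, hKC, hCU⟩ := exists_clopen_of_closed_subset_open hK hU (hKS.trans hSU)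
  exact ⟨C, hC,
    ENNReal.toReal_le_of_le_ofReal hε.le
      ((measure_mono (Set.sdiff_subset_sdiff_right hKC)).trans hSK.le),
    ENNReal.toReal_le_of_le_ofReal hε.le
      ((measure_mono (Set.sdiff_subset_sdiff_left hCU)).trans hUS.le)⟩

lemma eventuallyMixes_of_isClopen {D : Finset ℕ} {c : ℝ}
    (h : ∀ I J : List A, EventuallyMixes μ D c (cyl I) (cyl J))
    (hS : IsClopen S) (hT : IsClopen T) : EventuallyMixes μ D c S T := by
  have := Fintype.ofFinite A
  obtain ⟨n, s, hs, rfl⟩ := exists_eq_biUnion_cyl_of_isClopen hS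
  obtain ⟨m, t, ht, rfl⟩ := exists_eq_biUnion_cyl_of_isClopen hT
  refine .biUnion_left ((pairwiseDisjoint_cyl_words n).subset hs)
    (fun I _ => measurableSet_cyl I)
    (Finset.measurableSet_biUnion _ fun J _ => measurableSet_cyl J) fun I _ => ?_
  exact .biUnion_right ((pairwiseDisjoint_cyl_words m).subset ht)
    (fun J _ => measurableSet_cyl J) (measurableSet_cyl I) fun J _ => h I J

lemma eventually_mul_sub_le_of_isClopen (hμ : μ.map shiftMap = μ) {D : Finset ℕ} {c : ℝ}
    (hc : 0 ≤ c) (h : ∀ S T, IsClopen S → IsClopen T → EventuallyMixes μ D c S T)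
    (hS : MeasurableSet S) (hT : MeasurableSet T) {ε : ℝ} (hε : 0 < ε) :
    ∀ᶠ g in atTop, c * (μ.real S * μ.real T) - (2 * c + 2 * D.card) * ε ≤
      ∑ d ∈ D, μ.real (S ∩ shiftMap^[g + d] ⁻¹' T) := by
  have hpres : MeasurePreserving shiftMap μ μ := ⟨measurable_shiftMap, hμ⟩
  obtain ⟨S', hS', hSS', hS'S⟩ := exists_isClopen_measureReal_sdiff_le (μ := μ) hS hε
  obtain ⟨T', hT', hTT', hT'T⟩ := exists_isClopen_measureReal_sdiff_le (μ := μ) hT hε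
  have hprod : μ.real S * μ.real T ≤ μ.real S' * μ.real T' + 2 * ε := by
    have hdS := (abs_le.1 (abs_measureReal_sub_le hSS' hS'S)).2
    have hdT := (abs_le.1 (abs_measureReal_sub_le hTT' hT'T)).2
    have hS1 : μ.real S ≤ 1 := measureReal_le_one
    have hT1 : μ.real T' ≤ 1 := measureReal_le_one
    nlinarith [mul_le_mul_of_nonneg_left hdT (measureReal_nonneg (μ := μ) (s := S)),
      mul_le_mul_of_nonneg_right hdS (measureReal_nonneg (μ := μ) (s := T'))]
  filter_upwards [h S' T' hS' hT'] with g hg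
  have hsum : ∑ d ∈ D, μ.real (S' ∩ shiftMap^[g + d] ⁻¹' T') ≤
      ∑ d ∈ D, μ.real (S ∩ shiftMap^[g + d] ⁻¹' T) + D.card * (2 * ε) := by
    rw [← nsmul_eq_mul, ← Finset.sum_const, ← Finset.sum_add_distrib]
    refine Finset.sum_le_sum fun d _ => ?_
    linarith [measureReal_inter_preimage_le_add (hpres.iterate (g + d)) (S := S) (S' := S') hT
      hT'.isOpen.measurableSet]
  linarith [mul_le_mul_of_nonneg_left hprod hc]

lemma mul_le_liminf_of_eventuallyMixes_cyl (hμ : μ.map shiftMap = μ) {D : Finset ℕ} {c : ℝ}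
    (hc : 0 < c) (h : ∀ I J : List A, EventuallyMixes μ D c (cyl I) (cyl J))
    (hS : MeasurableSet S) (hT : MeasurableSet T) :
    c * (μ.real S * μ.real T) ≤
      liminf (fun n => ∑ d ∈ D, μ.real (S ∩ shiftMap^[n + d] ⁻¹' T)) atTop := by
  refine le_of_forall_pos_sub_le fun δ hδ => ?_
  have hcob : IsCoboundedUnder (· ≥ ·) atTop
      fun n => ∑ d ∈ D, μ.real (S ∩ shiftMap^[n + d] ⁻¹' T) :=
    IsBoundedUnder.isCoboundedUnder_ge ⟨∑ _d ∈ D, 1, eventually_map.2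
      (.of_forall fun n => Finset.sum_le_sum fun d _ => measureReal_le_one)⟩
  refine le_liminf_of_le hcob ?_
  have h0 : 0 < 2 * c + 2 * (D.card : ℝ) := by positivity
  have := eventually_mul_sub_le_of_isClopen hμ hc.le (fun _ _ => eventuallyMixes_of_isClopen h)
    hS hT (div_pos hδ h0)
  simpa only [mul_div_cancel₀ _ h0.ne'] using this

end Approximation

lemma ergodic_of_mul_le_liminf {A : Type} [MeasurableSpace A] {μ : Measure (ℕ → A)}
    [IsProbabilityMeasure μ] (hμ : μ.map shiftMap = μ) {D : Finset ℕ} {c : ℝ} (hc : 0 < c)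
    (h : ∀ S T, MeasurableSet S → MeasurableSet T → c * (μ.real S * μ.real T) ≤
      liminf (fun n => ∑ d ∈ D, μ.real (S ∩ shiftMap^[n + d] ⁻¹' T)) atTop) :
    Ergodic shiftMap μ := by
  refine ⟨⟨measurable_shiftMap, hμ⟩, ⟨fun S hS hinv => ?_⟩⟩
  have hiter (n : ℕ) : shiftMap^[n] ⁻¹' S = S := by
    rw [Set.preimage_iterate_eq, Function.iterate_fixed hinv]
  have hzero : ∀ n, ∑ d ∈ D, μ.real (S ∩ shiftMap^[n + d] ⁻¹' Sᶜ) = 0 := fun n =>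
    Finset.sum_eq_zero fun d _ => by
      rw [Set.preimage_compl, hiter, Set.inter_compl_self, measureReal_empty]
  have hmul := h S Sᶜ hS hS.compl
  simp only [hzero, liminf_const] at hmul
  have hprod : μ.real S * μ.real Sᶜ = 0 :=
    (nonpos_of_mul_nonpos_right hmul hc).antisymm (by positivity)
  rw [eventuallyConst_set']
  exact (mul_eq_zero.1 hprod).imp (fun hS0 => ae_eq_empty.2 ((measureReal_eq_zero_iff).1 hS0))
    fun hS0 => ae_eq_univ.2 ((measureReal_eq_zero_iff).1 hS0)

section DonskerVaradhan

variable {ι : Type*} {s u : Finset ι} {q : ι → ℝ} {t : ℝ}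

lemma sum_mul_ite_exp_div_two_le_one (hsu : s ⊆ u) (hq : ∀ i ∈ u, 0 ≤ q i)
    (hq1 : ∑ i ∈ u, q i = 1) (ht : ∑ i ∈ s, q i ≤ Real.exp (-t)) :
    ∑ i ∈ u, q i * (if i ∈ s then Real.exp t else 1) / 2 ≤ 1 := by
  calc ∑ i ∈ u, q i * (if i ∈ s then Real.exp t else 1) / 2
      ≤ ∑ i ∈ u, (q i / 2 + Real.exp t / 2 * if i ∈ s then q i else 0) := by
        refine Finset.sum_le_sum fun i hi => ?_
        have := hq i hi
        split_ifs <;> linarith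
    _ = 1 / 2 + Real.exp t / 2 * ∑ i ∈ s, q i := by
        rw [Finset.sum_add_distrib, ← Finset.sum_div, hq1, ← Finset.mul_sum,
          Finset.sum_ite_mem, Finset.inter_eq_right.2 hsu]
    _ ≤ 1 / 2 + Real.exp t / 2 * Real.exp (-t) := by gcongr
    _ = 1 := by
        rw [div_mul_eq_mul_div, ← Real.exp_add, add_neg_cancel, Real.exp_zero]
        norm_num

lemma mul_sum_le_of_sum_le_exp_neg {p : ι → ℝ} (hsu : s ⊆ u) (hp : ∀ i ∈ u, 0 ≤ p i)
    (hq : ∀ i ∈ u, 0 ≤ q i) (hpq : ∀ i ∈ u, q i = 0 → p i = 0) (hp1 : ∑ i ∈ u, p i = 1)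
    (hq1 : ∑ i ∈ u, q i = 1) (ht : ∑ i ∈ s, q i ≤ Real.exp (-t)) :
    t * ∑ i ∈ s, p i ≤ ∑ i ∈ u, p i * (Real.log (p i) - Real.log (q i)) + Real.log 2 := by
  -- Donsker–Varadhan: apply Gibbs' inequality to `q` tilted by `exp t` on `s`.
  set r : ι → ℝ := fun i => q i * (if i ∈ s then Real.exp t else 1) / 2 with hr
  have hfactor (i : ι) : 0 < (if i ∈ s then Real.exp t else 1) := by
    split_ifs <;> positivity
  have hr0 : ∀ i ∈ u, 0 ≤ r i := fun i hi =>
    div_nonneg (mul_nonneg (hq i hi) (hfactor i).le) zero_le_two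
  have hgibbs := sum_negMulLog_le_neg_sum_mul_log u hp hr0
    (fun i hi h0 => hpq i hi (by simpa only [hr, div_eq_zero_iff, mul_eq_zero,
      (hfactor i).ne', OfNat.ofNat_ne_zero, or_false] using h0))
    (hp1 ▸ sum_mul_ite_exp_div_two_le_one hsu hq hq1 ht)
  have hterm : ∀ i ∈ u, p i * Real.log (r i) =
      p i * Real.log (q i) + t * (if i ∈ s then p i else 0) - p i * Real.log 2 := by
    intro i hi
    rcases eq_or_ne (p i) 0 with h0 | h0
    · simp [h0]
    · have hqi : q i ≠ 0 := fun h => h0 (hpq i hi h)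
      rw [hr, Real.log_div (mul_ne_zero hqi (hfactor i).ne') two_ne_zero,
        Real.log_mul hqi (hfactor i).ne']
      split_ifs
      · rw [Real.log_exp]
        ring
      · rw [Real.log_one]
        ring
  rw [Finset.sum_congr rfl hterm, Finset.sum_sub_distrib, Finset.sum_add_distrib, ← Finset.sum_mul,
    hp1, ← Finset.mul_sum, Finset.sum_ite_mem, Finset.inter_eq_right.2 hsu] at hgibbs
  simp only [mul_sub, Finset.sum_sub_distrib]
  simp only [Real.negMulLog, neg_mul, Finset.sum_neg_distrib] at hgibbs
  linarith

end DonskerVaradhan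

/-- The relative entropy of `η`, on words of length `n`, with respect to a weight `f`. -/
def wordDivergence {A : Type} [Fintype A] [MeasurableSpace A] (η : Measure (ℕ → A))
    (f : List A → ℝ) (n : ℕ) : ℝ :=
  ∑ I ∈ words A n, η.real (cyl I) * (Real.log (η.real (cyl I)) - Real.log (f I))

section AbsoluteContinuity

variable {A : Type} [Fintype A] [TopologicalSpace A] [DiscreteTopology A] [MeasurableSpace A]
  [BorelSpace A] {μ η : Measure (ℕ → A)} [IsProbabilityMeasure μ] [IsProbabilityMeasure η]

omit [IsProbabilityMeasure μ] in
lemma wordDivergence_cyl_le {f : List A → ℝ} (hf : ∀ I, 0 ≤ f I) {c : ℝ} (hc : 0 < c)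
    (hfμ : ∀ I, c * f I ≤ μ.real (cyl I)) (hz : ∀ I, f I = 0 → η.real (cyl I) = 0) (n : ℕ) :
    wordDivergence η (fun I => μ.real (cyl I)) n ≤ wordDivergence η f n - Real.log c := by
  rw [wordDivergence, wordDivergence, ← one_mul (Real.log c), ← sum_measureReal_cyl η n,
    Finset.sum_mul, ← Finset.sum_sub_distrib]
  refine Finset.sum_le_sum fun I _ => ?_
  rw [← mul_sub]
  rcases eq_or_ne (η.real (cyl I)) 0 with h0 | h0
  · simp [h0]
  · have hfI : 0 < f I := (hf I).lt_of_ne' fun h => h0 (hz I h)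
    have hlog := Real.log_le_log (mul_pos hc hfI) (hfμ I)
    rw [Real.log_mul hc.ne' hfI.ne'] at hlog
    exact mul_le_mul_of_nonneg_left (by linarith) measureReal_nonneg

lemma mul_measureReal_le_of_isClopen {C : ℝ}
    (hC : ∀ n, wordDivergence η (fun I => μ.real (cyl I)) n ≤ C)
    (hz : ∀ I, μ.real (cyl I) = 0 → η.real (cyl I) = 0) {K : Set (ℕ → A)} (hK : IsClopen K) {t : ℝ}
    (ht : μ.real K ≤ Real.exp (-t)) : t * η.real K ≤ C + Real.log 2 := by
  obtain ⟨n, s, hs, rfl⟩ := exists_eq_biUnion_cyl_of_isClopen hK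
  rw [measureReal_biUnion_cyl μ hs] at ht
  rw [measureReal_biUnion_cyl η hs]
  refine (mul_sum_le_of_sum_le_exp_neg hs (fun _ _ => measureReal_nonneg)
    (fun _ _ => measureReal_nonneg) (fun I _ => hz I) (sum_measureReal_cyl η n)
    (sum_measureReal_cyl μ n) ht).trans ?_
  gcongr
  exact hC n

omit [Fintype A] in
lemma measureReal_eq_zero_of_isClosed [Finite A] {C : ℝ}
    (h : ∀ K, IsClopen K → ∀ t : ℝ, μ.real K ≤ Real.exp (-t) → t * η.real K ≤ C)
    {K : Set (ℕ → A)} (hK : IsClosed K) (hμK : μ K = 0) : η.real K = 0 := by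
  refine measureReal_nonneg.antisymm' (ge_of_tendsto (tendsto_const_div_atTop_nhds_zero_nat C) ?_)
  filter_upwards [eventually_gt_atTop 0] with t ht
  have hμK' : μ K < ENNReal.ofReal (Real.exp (-t)) := by
    rw [hμK]
    exact ENNReal.ofReal_pos.2 (Real.exp_pos _)
  obtain ⟨U, hKU, hUo, hμU⟩ := K.exists_isOpen_lt_of_lt _ hμK'
  obtain ⟨Q, hQ, hKQ, hQU⟩ := exists_clopen_of_closed_subset_open hK hUo hKU
  have hμQ : μ.real Q ≤ Real.exp (-t) :=
    ENNReal.toReal_le_of_le_ofReal (Real.exp_pos _).le ((measure_mono hQU).trans hμU.le)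
  rw [le_div_iff₀ (Nat.cast_pos.2 ht), mul_comm]
  exact (mul_le_mul_of_nonneg_left (measureReal_mono hKQ) t.cast_nonneg).trans (h Q hQ t hμQ)

lemma absolutelyContinuous_of_wordDivergence_le {C : ℝ}
    (hC : ∀ n, wordDivergence η (fun I => μ.real (cyl I)) n ≤ C)
    (hz : ∀ I, μ.real (cyl I) = 0 → η.real (cyl I) = 0) : η ≪ μ := by
  refine Measure.AbsolutelyContinuous.mk fun S hS h0 => ?_
  rw [hS.measure_eq_iSup_isClosed_of_ne_top (measure_ne_top _ _)]
  simp only [ENNReal.iSup_eq_zero]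
  exact fun K hKS hK => (measureReal_eq_zero_iff).1 <|
    measureReal_eq_zero_of_isClosed (fun K hK t => mul_measureReal_le_of_isClopen hC hz hK) hK
      (measure_mono_null hKS h0)

end AbsoluteContinuity

section LimitMeasure

variable {A : Type} [Fintype A] [TopologicalSpace A] [DiscreteTopology A] [MeasurableSpace A]
  [BorelSpace A] {f : List A → ℝ} {p : ℕ} {μ : Measure (ℕ → A)} [IsProbabilityMeasure μ]

lemma CylinderComparable.exists_mul_le_liminf (hμf : CylinderComparable f μ) (hf : OmegaW p f)
    (hμ : μ.map shiftMap = μ) {D : Finset ℕ} (hD : QuasiBernoulli D f) :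
    ∃ c > 0, ∀ S T, MeasurableSet S → MeasurableSet T → c * (μ.real S * μ.real T) ≤
      liminf (fun n => ∑ d ∈ D, μ.real (S ∩ shiftMap^[n + d] ⁻¹' T)) atTop := by
  obtain ⟨c, hc, h⟩ := hμf.exists_eventuallyMixes_cyl hf hD
  exact ⟨c, hc, fun S T hS hT => mul_le_liminf_of_eventuallyMixes_cyl hμ hc h hS hT⟩

lemma CylinderComparable.ergodic (hμf : CylinderComparable f μ) (hf : OmegaW p f)
    (hμ : μ.map shiftMap = μ) : Ergodic shiftMap μ := by
  obtain ⟨c, hc, h⟩ := hμf.exists_mul_le_liminf hf hμ hf.quasiBernoulli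
  exact ergodic_of_mul_le_liminf hμ hc h

lemma CylinderComparable.eq_of_wordDivergence_le (hμf : CylinderComparable f μ)
    (hf : OmegaW p f) (hμ : μ.map shiftMap = μ) {η : Measure (ℕ → A)} [IsProbabilityMeasure η]
    (hη : η.map shiftMap = η) {C : ℝ} (hC : ∀ n, wordDivergence η f n ≤ C)
    (hz : ∀ I, f I = 0 → η.real (cyl I) = 0) : η = μ := by
  obtain ⟨c, hc, hfmn⟩ := hμf.exists_mul_fmn_le
  have hfμ (I : List A) : c * f I ≤ μ.real (cyl I) := by
    simpa [fmn_eq_sum_words, words_zero] using hfmn 0 0 I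
  have hzμ (I : List A) (hI : μ.real (cyl I) = 0) : η.real (cyl I) = 0 :=
    hz I ((nonpos_of_mul_nonpos_right (hI ▸ hfμ I) hc).antisymm (hf.nonneg I))
  refine (hμf.ergodic hf hμ).eq_of_absolutelyContinuous ⟨measurable_shiftMap, hη⟩ ?_
  refine absolutelyContinuous_of_wordDivergence_le (C := C - Real.log c) (fun n => ?_) hzμ
  exact (wordDivergence_cyl_le hf.nonneg hc hfμ hz n).trans (by linarith [hC n])

end LimitMeasure

section AlmostAdditive

variable {v : ℕ → ℝ} {c : ℝ} (h : ∀ n m, |v (n + m) - (v n + v m)| ≤ c)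

include h

lemma mul_sub_le_of_almost_additive (n k : ℕ) : k * (v n - c) ≤ v (k * n) + c := by
  induction k with
  | zero =>
    have := (abs_le.1 (h 0 0)).2
    rw [add_zero] at this
    simp only [Nat.cast_zero, zero_mul]
    linarith
  | succ k ih =>
    have := (abs_le.1 (h (k * n) n)).1
    rw [Nat.succ_mul]
    push_cast
    linarith

lemma exists_abs_sub_mul_le_of_almost_additive : ∃ P : ℝ, ∀ n : ℕ, |v n - n * P| ≤ c := by
  have hsub : Subadditive fun n => v n + c := fun n m => by linarith [(abs_le.1 (h n m)).2]
  have hbdd : BddBelow (Set.range fun n : ℕ => (v n + c) / n) := by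
    refine ⟨min 0 (v 1 - c), ?_⟩
    rintro _ ⟨n, rfl⟩
    rcases n.eq_zero_or_pos with rfl | hn
    · simp
    · have hle := mul_sub_le_of_almost_additive h 1 n
      rw [mul_one, mul_comm] at hle
      exact min_le_of_right_le ((le_div_iff₀ (by positivity)).2 hle)
  refine ⟨hsub.lim, fun n => ?_⟩
  rcases n.eq_zero_or_pos with rfl | hn
  · simpa [abs_sub_comm] using h 0 0
  have hn' : (0 : ℝ) < n := by positivity
  have hupper := (le_div_iff₀ hn').1 (hsub.lim_le_div hbdd hn.ne')
  have hlower : v n - c ≤ hsub.lim * n := by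
    have hlim := (hsub.tendsto_lim hbdd).comp (tendsto_id.atTop_mul_const' hn)
    refine ge_of_tendsto (hlim.mul_const (n : ℝ)) ?_
    filter_upwards [eventually_gt_atTop 0] with k hk
    have hk' : (0 : ℝ) < k := by positivity
    have hmul : (v (k * n) + c) / (k * n) * n = (v (k * n) + c) / k := by field_simp
    simp only [Function.comp_apply, id, Nat.cast_mul, hmul]
    rw [le_div_iff₀ hk', mul_comm]
    exact mul_sub_le_of_almost_additive h n k
  rw [abs_le]
  constructor <;> linarith

end AlmostAdditive

section GibbsWeight

variable {A : Type} [Fintype A] {X : Set (ℕ → A)} {u : List A → ℝ} {q : ℕ}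

/-- The `n`-th partition function of a weight on words. -/
def partitionSum (u : List A → ℝ) (n : ℕ) : ℝ := ∑ I ∈ words A n, u I

/-- The partition functions of `u` grow exponentially at rate `P`, up to a bounded factor. -/
def HasPressure (u : List A → ℝ) (P c : ℝ) : Prop :=
  ∀ n : ℕ, |Real.log (partitionSum u n) - n * P| ≤ c

/-- A weight on words supported on the language of `X` which is supermultiplicative across bounded
gaps, up to constants, and whose partition function is submultiplicative up to a constant. -/
structure GibbsWeight (X : Set (ℕ → A)) (u : List A → ℝ) : Prop where
  pos : ∀ I, Lang X I → 0 < u I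
  eq_zero : ∀ I, ¬ Lang X I → u I = 0
  le_append : ∀ r : ℕ, ∃ c > 0, ∀ I K J : List A, K.length ≤ r → Lang X (I ++ K ++ J) →
    c * (u I * u J) ≤ u (I ++ K ++ J)
  partitionSum_add_le : ∃ c > 0, ∀ n m,
    partitionSum u (n + m) ≤ c * (partitionSum u n * partitionSum u m)

/-- The weight `u` rescaled to total mass one on the words of each given length. -/
def normalizedWeight (u : List A → ℝ) (I : List A) : ℝ := u I / partitionSum u I.length

namespace GibbsWeight

variable (hu : GibbsWeight X u)

include hu

lemma nonneg (I : List A) : 0 ≤ u I := by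
  by_cases hI : Lang X I
  · exact (hu.pos I hI).le
  · exact (hu.eq_zero I hI).ge

lemma partitionSum_pos (hne : X.Nonempty) (n : ℕ) : 0 < partitionSum u n := by
  obtain ⟨x, hx⟩ := hne
  exact Finset.sum_pos' (fun I _ => hu.nonneg I)
    ⟨wordOf x n, mem_words.2 (length_wordOf x n), hu.pos _ (lang_wordOf hx n)⟩

lemma exists_partitionSum_add_add_le (hne : X.Nonempty) (r : ℕ) : ∃ c > 0, ∀ n m, ∀ d ≤ r,
    partitionSum u (n + d + m) ≤ c * (partitionSum u n * partitionSum u m) := by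
  have hZ := hu.partitionSum_pos hne
  obtain ⟨c, hc, hadd⟩ := hu.partitionSum_add_le
  set b := ∑ d ∈ Finset.range (r + 1), partitionSum u d
  have hb0 : 0 < b := Finset.sum_pos (fun d _ => hZ d) ⟨0, by simp⟩
  refine ⟨c * c * b, by positivity, fun n m d hd => ?_⟩
  have hdb : partitionSum u d ≤ b :=
    Finset.single_le_sum (f := partitionSum u) (fun d _ => (hZ d).le)
      (Finset.mem_range.2 (Nat.lt_succ_of_le hd))
  have hn := (hZ n).le
  have hm := (hZ m).le
  calc partitionSum u (n + d + m) ≤ c * (partitionSum u (n + d) * partitionSum u m) := hadd _ _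
    _ ≤ c * (c * (partitionSum u n * b) * partitionSum u m) := by
        gcongr
        exact (hadd n d).trans (by gcongr)
    _ = c * c * b * (partitionSum u n * partitionSum u m) := by ring

lemma exists_partitionSum_mul_le (hne : X.Nonempty) (hspec : WeakSpecification X q) :
    ∃ c > 0, ∀ n m, partitionSum u n * partitionSum u m ≤ c * partitionSum u (n + m) := by
  have hZ := hu.partitionSum_pos hne
  obtain ⟨c₁, hc₁, hle⟩ := hu.le_append q
  obtain ⟨c₂, hc₂, hadd⟩ := hu.exists_partitionSum_add_add_le hne q
  have hZ0 := hZ 0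
  have hgap (I J : List A) : c₁ * (u I * u J) ≤
      ∑ d ∈ Finset.range (q + 1), ∑ K ∈ words A d, u (I ++ K ++ J) := by
    by_cases hIJ : Lang X I ∧ Lang X J
    · obtain ⟨K, hK, hL⟩ := hspec I J hIJ.1 hIJ.2
      exact (hle I K J hK hL).trans (le_sum_words_of_length_mem (g := fun K => u (I ++ K ++ J))
        (fun _ => hu.nonneg _) (Finset.mem_range_succ_iff.2 hK))
    · have h0 : u I * u J = 0 :=
        mul_eq_zero.2 ((not_and_or.1 hIJ).imp (hu.eq_zero I) (hu.eq_zero J))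
      rw [h0, mul_zero]
      exact Finset.sum_nonneg fun _ _ => Finset.sum_nonneg fun _ _ => hu.nonneg _
  refine ⟨c₁⁻¹ * ((q + 1) * (c₂ * partitionSum u 0)), by positivity, fun n m => ?_⟩
  rw [mul_assoc, ← div_le_iff₀' (by positivity), div_inv_eq_mul, mul_comm]
  calc c₁ * (partitionSum u n * partitionSum u m)
      = ∑ I ∈ words A n, ∑ J ∈ words A m, c₁ * (u I * u J) := by
        rw [partitionSum, partitionSum, Finset.sum_mul_sum, Finset.mul_sum]
        simp only [Finset.mul_sum]
    _ ≤ ∑ I ∈ words A n, ∑ J ∈ words A m, ∑ d ∈ Finset.range (q + 1),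
          ∑ K ∈ words A d, u (I ++ K ++ J) := by
        gcongr
        exact hgap _ _
    _ = ∑ d ∈ Finset.range (q + 1), partitionSum u (n + d + m) := by
        simp only [partitionSum, sum_words_add, Finset.sum_comm (t := Finset.range (q + 1))]
        refine Finset.sum_congr rfl fun d _ => Finset.sum_congr rfl fun I _ => Finset.sum_comm
    _ ≤ ∑ _d ∈ Finset.range (q + 1), c₂ * (partitionSum u (n + m) * partitionSum u 0) := by
        refine Finset.sum_le_sum fun d hd => ?_
        have := hadd (n + m) 0 d (Finset.mem_range_succ_iff.1 hd)
        rwa [add_zero, Nat.add_right_comm] at this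
    _ = (q + 1) * (c₂ * partitionSum u 0) * partitionSum u (n + m) := by
        rw [Finset.sum_const, Finset.card_range, nsmul_eq_mul]
        push_cast
        ring

lemma exists_hasPressure (hne : X.Nonempty) (hspec : WeakSpecification X q) :
    ∃ P c, HasPressure u P c := by
  have hZ := hu.partitionSum_pos hne
  obtain ⟨c₁, hc₁, hle⟩ := hu.partitionSum_add_le
  obtain ⟨c₂, hc₂, hge⟩ := hu.exists_partitionSum_mul_le hne hspec
  obtain ⟨P, hP⟩ := exists_abs_sub_mul_le_of_almost_additive
    (v := fun n => Real.log (partitionSum u n)) (c := max (Real.log c₁) (Real.log c₂))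
    fun n m => by
      have hupper := Real.log_le_log (hZ _) (hle n m)
      have hlower := Real.log_le_log (mul_pos (hZ n) (hZ m)) (hge n m)
      rw [Real.log_mul hc₁.ne' (mul_pos (hZ n) (hZ m)).ne',
        Real.log_mul (hZ n).ne' (hZ m).ne'] at hupper
      rw [Real.log_mul hc₂.ne' (hZ _).ne', Real.log_mul (hZ n).ne' (hZ m).ne'] at hlower
      rw [abs_le]
      constructor <;> linarith [le_max_left (Real.log c₁) (Real.log c₂),
        le_max_right (Real.log c₁) (Real.log c₂)]
  exact ⟨P, _, hP⟩

lemma normalizedWeight_nonneg (I : List A) : 0 ≤ normalizedWeight u I :=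
  div_nonneg (hu.nonneg I) (Finset.sum_nonneg fun J _ => hu.nonneg J)

lemma sum_normalizedWeight (hne : X.Nonempty) (n : ℕ) :
    ∑ I ∈ words A n, normalizedWeight u I = 1 := by
  have hterm : ∀ I ∈ words A n, normalizedWeight u I = u I / partitionSum u n := fun I hI => by
    rw [normalizedWeight, mem_words.1 hI]
  rw [Finset.sum_congr rfl hterm, ← Finset.sum_div]
  exact div_self (hu.partitionSum_pos hne n).ne'

lemma normalizedWeight_ne_zero_iff (hne : X.Nonempty) {I : List A} :
    normalizedWeight u I ≠ 0 ↔ Lang X I := by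
  rw [normalizedWeight, div_ne_zero_iff, and_iff_left (hu.partitionSum_pos hne _).ne',
    ← not_iff_not, not_not]
  exact ⟨fun h hI => (hu.pos I hI).ne' h, hu.eq_zero I⟩

lemma normalizedWeight_le_one (hne : X.Nonempty) (I : List A) : normalizedWeight u I ≤ 1 :=
  hu.sum_normalizedWeight hne I.length ▸
    Finset.single_le_sum (fun J _ => hu.normalizedWeight_nonneg J) (mem_words.2 rfl)

lemma exists_mul_normalizedWeight_le (hne : X.Nonempty) (r : ℕ) : ∃ c > 0, ∀ I K J : List A,
    K.length ≤ r → Lang X (I ++ K ++ J) →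
    c * (normalizedWeight u I * normalizedWeight u J) ≤ normalizedWeight u (I ++ K ++ J) := by
  have hZ := hu.partitionSum_pos hne
  obtain ⟨c₁, hc₁, hle⟩ := hu.le_append r
  obtain ⟨c₂, hc₂, hadd⟩ := hu.exists_partitionSum_add_add_le hne r
  refine ⟨c₁ / c₂, by positivity, fun I K J hK hL => ?_⟩
  have hZI := hZ I.length
  have hZJ := hZ J.length
  have hZL := hZ (I.length + K.length + J.length)
  calc c₁ / c₂ * (normalizedWeight u I * normalizedWeight u J)
      = c₁ * (u I * u J) / (c₂ * (partitionSum u I.length * partitionSum u J.length)) := by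
        simp only [normalizedWeight]
        field_simp
    _ ≤ u (I ++ K ++ J) / partitionSum u (I.length + K.length + J.length) := by
        have := hu.nonneg (I ++ K ++ J)
        gcongr
        exacts [hle I K J hK hL, hadd _ _ _ hK]
    _ = normalizedWeight u (I ++ K ++ J) := by
        simp only [normalizedWeight, List.length_append]

lemma normalizedWeight_nil (hne : X.Nonempty) : normalizedWeight u [] = 1 := by
  simpa [words_zero] using hu.sum_normalizedWeight hne 0

lemma exists_gap_normalizedWeight {G : List A → Prop} (hne : X.Nonempty)
    (hG : ∀ K, G K → K.length ≤ q) (hG' : ∃ K, G K)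
    (hspec : ∀ I J, Lang X I → Lang X J → ∃ K, G K ∧ Lang X (I ++ K ++ J)) :
    ∃ c > 0, ∀ I J : List A, ∃ K, G K ∧
      c * (normalizedWeight u I * normalizedWeight u J) ≤ normalizedWeight u (I ++ K ++ J) := by
  obtain ⟨c, hc, hle⟩ := hu.exists_mul_normalizedWeight_le hne q
  refine ⟨c, hc, fun I J => ?_⟩
  by_cases hIJ : Lang X I ∧ Lang X J
  · obtain ⟨K, hK, hL⟩ := hspec I J hIJ.1 hIJ.2
    exact ⟨K, hK, hle I K J (hG K hK) hL⟩
  · obtain ⟨K, hK⟩ := hG'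
    have h0 : normalizedWeight u I * normalizedWeight u J = 0 := by
      rw [← hu.normalizedWeight_ne_zero_iff hne, ← hu.normalizedWeight_ne_zero_iff hne,
        ← mul_ne_zero_iff, not_not] at hIJ
      exact hIJ
    exact ⟨K, hK, by rw [h0, mul_zero]; exact hu.normalizedWeight_nonneg _⟩

lemma exists_mul_normalizedWeight_le_cons (hne : X.Nonempty) (hX : shiftMap '' X ⊆ X)
    (hspec : WeakSpecification X q) :
    ∃ c > 0, ∀ I, ∃ i j, c * normalizedWeight u I ≤ normalizedWeight u (i :: I) ∧
      c * normalizedWeight u I ≤ normalizedWeight u (I ++ [j]) := by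
  obtain ⟨c, hc, hle⟩ := hu.exists_mul_normalizedWeight_le hne 1
  refine ⟨c, hc, fun I => ?_⟩
  by_cases hI : Lang X I
  · obtain ⟨i, hi⟩ := hI.exists_cons hX hspec
    obtain ⟨V, hV, hIV⟩ := hI.exists_append_right 1
    obtain ⟨j, rfl⟩ := List.length_eq_one_iff.1 hV
    refine ⟨i, j, ?_, ?_⟩
    · have := hle [] [i] I le_rfl hi
      rwa [hu.normalizedWeight_nil hne, one_mul] at this
    · have := hle I [j] [] le_rfl (by rwa [List.append_nil])
      rwa [hu.normalizedWeight_nil hne, mul_one, List.append_nil] at this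
  · obtain ⟨x, -⟩ := id hne
    have h0 : normalizedWeight u I = 0 := by
      simpa using (hu.normalizedWeight_ne_zero_iff hne).not.2 hI
    rw [h0, mul_zero]
    exact ⟨x 0, x 0, hu.normalizedWeight_nonneg _, hu.normalizedWeight_nonneg _⟩

lemma omegaW (hne : X.Nonempty) (hX : shiftMap '' X ⊆ X) (hspec : WeakSpecification X q) :
    OmegaW q (normalizedWeight u) := by
  obtain ⟨c₁, hc₁, hgap⟩ := hu.exists_gap_normalizedWeight (G := fun K => K.length ≤ q) hne
    (fun _ h => h) ⟨[], q.zero_le⟩ hspec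
  obtain ⟨c₂, hc₂, hcons⟩ := hu.exists_mul_normalizedWeight_le_cons hne hX hspec
  have hmono {c : ℝ} (hc : min c₁ c₂ ≤ c) {y z : ℝ} (hy : 0 ≤ y) (h : c * y ≤ z) :
      min c₁ c₂ * y ≤ z := (mul_le_mul_of_nonneg_right hc hy).trans h
  have h0 := hu.normalizedWeight_nonneg
  refine ⟨fun I => ⟨h0 I, hu.normalizedWeight_le_one hne I⟩, min c₁ c₂, lt_min hc₁ hc₂,
    fun n => (sum_ofFn_eq_sum_words n _).trans (hu.sum_normalizedWeight hne n),
    fun I J => ?_, fun I => ?_⟩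
  · obtain ⟨K, hK, hle⟩ := hgap I J
    exact ⟨K, hK, hmono (min_le_left _ _) (mul_nonneg (h0 I) (h0 J)) hle⟩
  · obtain ⟨i, j, hi, hj⟩ := hcons I
    exact ⟨i, j, hmono (min_le_right _ _) (h0 I) hi, hmono (min_le_right _ _) (h0 I) hj⟩

lemma omegaS (hne : X.Nonempty) (hspec : Specification X q) :
    OmegaS q (normalizedWeight u) := by
  obtain ⟨x, -⟩ := id hne
  obtain ⟨c, hc, hgap⟩ := hu.exists_gap_normalizedWeight (G := fun K => K.length = q) hne
    (fun _ h => h.le) ⟨wordOf x q, length_wordOf x q⟩ hspec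
  exact ⟨fun I => ⟨hu.normalizedWeight_nonneg I, hu.normalizedWeight_le_one hne I⟩, c, hc,
    fun n => (sum_ofFn_eq_sum_words n _).trans (hu.sum_normalizedWeight hne n), hgap⟩

end GibbsWeight

end GibbsWeight

section WordFiber

variable {A B C : Type} [Fintype A]

lemma wordFiber_id (J : List A) : wordFiber id J = {J} := by
  ext I
  rw [mem_wordFiber, List.map_id, Finset.mem_singleton]

lemma sum_wordFiber_append (t : A → B) (J₁ J₂ : List B) (g : List A → ℝ) :
    ∑ I ∈ wordFiber t (J₁ ++ J₂), g I =
      ∑ U ∈ wordFiber t J₁, ∑ V ∈ wordFiber t J₂, g (U ++ V) := by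
  rw [← Finset.sum_product']
  refine Finset.sum_nbij' (fun I => (I.take J₁.length, I.drop J₁.length)) (fun P => P.1 ++ P.2)
    ?_ ?_ ?_ ?_ ?_
  · intro I hI
    rw [mem_wordFiber] at hI
    simp [mem_wordFiber, List.map_take, List.map_drop, hI]
  · rintro ⟨U, V⟩ h
    rw [Finset.mem_product, mem_wordFiber, mem_wordFiber] at h
    rw [mem_wordFiber, List.map_append, h.1, h.2]
  · simp
  · rintro ⟨U, V⟩ h
    rw [Finset.mem_product, mem_wordFiber] at h
    simp [← h.1]
  · simp

lemma sum_wordFiber_comp [Fintype B] (t₂ : B → C) (t₁ : A → B) (J : List C) (g : List A → ℝ) :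
    ∑ I ∈ wordFiber (t₂ ∘ t₁) J, g I = ∑ K ∈ wordFiber t₂ J, ∑ I ∈ wordFiber t₁ K, g I := by
  rw [← Finset.sum_fiberwise_of_maps_to (t := wordFiber t₂ J) (g := fun I => I.map t₁)]
  · refine Finset.sum_congr rfl fun K hK => Finset.sum_congr ?_ fun _ _ => rfl
    ext I
    rw [Finset.mem_filter, mem_wordFiber, mem_wordFiber, and_iff_right_iff_imp]
    rintro rfl
    rw [← List.map_map, mem_wordFiber.1 hK]
  · intro I hI
    rw [mem_wordFiber] at hI ⊢
    rw [List.map_map, hI]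

lemma sum_words_eq_sum_wordFiber [Fintype B] (t : A → B) (n : ℕ) (g : List A → ℝ) :
    ∑ I ∈ words A n, g I = ∑ J ∈ words B n, ∑ I ∈ wordFiber t J, g I := by
  rw [← Finset.sum_fiberwise_of_maps_to (t := words B n) (g := fun I => I.map t)]
  · refine Finset.sum_congr rfl fun J hJ => Finset.sum_congr ?_ fun _ _ => rfl
    ext I
    rw [Finset.mem_filter, mem_wordFiber, and_iff_right_iff_imp]
    rintro rfl
    rwa [mem_words, List.length_map, ← mem_words] at hJ
  · intro I hI
    rw [mem_words] at hI ⊢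
    rw [List.length_map, hI]

end WordFiber

section QuasiMultiplicative

variable {A B : Type} {X : Set (ℕ → A)} {φ : List A → ℝ} {s : ℝ}

/-- A nonnegative weight on words which is submultiplicative up to a constant. -/
structure QuasiSubmultiplicative {A : Type} (φ : List A → ℝ) : Prop where
  nonneg : ∀ I, 0 ≤ φ I
  append_le : ∃ c > 0, ∀ I J, φ (I ++ J) ≤ c * (φ I * φ J)

/-- A weight supported on the language of `X` which is submultiplicative, and supermultiplicative
across bounded gaps inside the language, up to constants. -/
structure QuasiMultiplicative {A : Type} (X : Set (ℕ → A)) (φ : List A → ℝ) : Prop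
    extends QuasiSubmultiplicative φ where
  pos : ∀ I, Lang X I → 0 < φ I
  eq_zero : ∀ I, ¬ Lang X I → φ I = 0
  le_append : ∀ r : ℕ, ∃ c > 0, ∀ I K J : List A, K.length ≤ r → Lang X (I ++ K ++ J) →
    c * (φ I * φ J) ≤ φ (I ++ K ++ J)

lemma QuasiSubmultiplicative.append_append_le [Finite A] (hφ : QuasiSubmultiplicative φ) (r : ℕ) :
    ∃ c > 0, ∀ I K J : List A, K.length ≤ r → φ (I ++ K ++ J) ≤ c * (φ I * φ J) := by
  have := Fintype.ofFinite A
  have h0 := hφ.nonneg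
  obtain ⟨c, hc, happend⟩ := hφ.append_le
  set b := 1 + ∑ n ∈ Finset.range (r + 1), ∑ K ∈ words A n, φ K
  have hb : 0 < b :=
    add_pos_of_pos_of_nonneg one_pos
      (Finset.sum_nonneg fun _ _ => Finset.sum_nonneg fun K _ => h0 K)
  refine ⟨c * c * b, by positivity, fun I K J hK => ?_⟩
  have hKb : φ K ≤ b := (le_sum_words_of_length_mem h0 (Finset.mem_range_succ_iff.2 hK)).trans
    (le_add_of_nonneg_left zero_le_one)
  have hI := h0 I
  have hJ := h0 J
  calc φ (I ++ K ++ J) ≤ c * (φ (I ++ K) * φ J) := happend _ _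
    _ ≤ c * (c * (φ I * b) * φ J) := by
        gcongr
        exact (happend I K).trans (by gcongr)
    _ = c * c * b * (φ I * φ J) := by ring

lemma QuasiSubmultiplicative.rpow (hφ : QuasiSubmultiplicative φ) (hs : 0 ≤ s) :
    QuasiSubmultiplicative fun I => φ I ^ s := by
  obtain ⟨c, hc, happend⟩ := hφ.append_le
  refine ⟨fun I => Real.rpow_nonneg (hφ.nonneg I) s, c ^ s, by positivity, fun I J => ?_⟩
  rw [← Real.mul_rpow (hφ.nonneg I) (hφ.nonneg J),
    ← Real.mul_rpow hc.le (mul_nonneg (hφ.nonneg I) (hφ.nonneg J))]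
  exact Real.rpow_le_rpow (hφ.nonneg _) (happend I J) hs

variable [Fintype A]

lemma QuasiSubmultiplicative.sum_wordFiber (hφ : QuasiSubmultiplicative φ) (t : A → B) :
    QuasiSubmultiplicative fun J => ∑ I ∈ wordFiber t J, φ I := by
  obtain ⟨c, hc, happend⟩ := hφ.append_le
  refine ⟨fun J => Finset.sum_nonneg fun I _ => hφ.nonneg I, c, hc, fun J₁ J₂ => ?_⟩
  rw [sum_wordFiber_append, Finset.sum_mul_sum, Finset.mul_sum]
  refine Finset.sum_le_sum fun U _ => ?_
  rw [Finset.mul_sum]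
  exact Finset.sum_le_sum fun V _ => happend U V

lemma QuasiSubmultiplicative.partitionSum_add_le (hφ : QuasiSubmultiplicative φ) : ∃ c > 0, ∀ n m,
    partitionSum φ (n + m) ≤ c * (partitionSum φ n * partitionSum φ m) := by
  obtain ⟨c, hc, happend⟩ := hφ.append_le
  refine ⟨c, hc, fun n m => ?_⟩
  rw [partitionSum, partitionSum, partitionSum, sum_words_add, Finset.sum_mul_sum, Finset.mul_sum]
  refine Finset.sum_le_sum fun U _ => ?_
  rw [Finset.mul_sum]
  exact Finset.sum_le_sum fun V _ => happend U V

/-- The push-forward of a weight on words over `A` under a letter-to-letter map, with exponent `s`: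
the `ℓ^(1/s)`-norm of the weight over each fibre. -/
def projWeight (t : A → B) (s : ℝ) (φ : List A → ℝ) (J : List B) : ℝ :=
  (∑ I ∈ wordFiber t J, φ I ^ s⁻¹) ^ s

lemma QuasiSubmultiplicative.projWeight (hφ : QuasiSubmultiplicative φ) (hs : 0 ≤ s)
    (t : A → B) : QuasiSubmultiplicative (projWeight t s φ) :=
  ((hφ.rpow (inv_nonneg.2 hs)).sum_wordFiber t).rpow hs

lemma projWeight_rpow_inv (h0 : ∀ I, 0 ≤ φ I) (hs : s ≠ 0) (t : A → B) (J : List B) :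
    projWeight t s φ J ^ s⁻¹ = ∑ I ∈ wordFiber t J, φ I ^ s⁻¹ :=
  Real.rpow_rpow_inv (Finset.sum_nonneg fun I _ => Real.rpow_nonneg (h0 I) _) hs

lemma projWeight_map_pos (h0 : ∀ I, 0 ≤ φ I) (t : A → B) {I : List A} (hI : 0 < φ I) :
    0 < projWeight t s φ (I.map t) :=
  Real.rpow_pos_of_pos (Finset.sum_pos' (fun K _ => Real.rpow_nonneg (h0 K) _)
    ⟨I, mem_wordFiber.2 rfl, Real.rpow_pos_of_pos hI _⟩) _

end QuasiMultiplicative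

section Chain

lemma map_tauFrom_succ {B : ℕ → Type} (π : ∀ i, B i → B (i + 1)) (j i : ℕ) (I : List (B j)) :
    I.map (tauFrom π j (i + 1)) = (I.map (tauFrom π j i)).map (π (j + i)) :=
  List.map_map.symm

variable {B : ℕ → Type} [∀ i, Fintype (B i)] {π : ∀ i, B i → B (i + 1)} {j : ℕ} {s : ℕ → ℝ}
  {φ : List (B j) → ℝ} {X : Set (ℕ → B j)}

/-- The weight `φ` pushed forward `i` steps along the chain of alphabets, with exponent `s l` at
the `l`-th step. -/
def chainWeight (π : ∀ i, B i → B (i + 1)) (j : ℕ) (s : ℕ → ℝ) (φ : List (B j) → ℝ) :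
    (i : ℕ) → List (B (j + i)) → ℝ
  | 0 => φ
  | i + 1 => projWeight (π (j + i)) (s i) (chainWeight π j s φ i)

/-- The weight on words over the first alphabet whose total mass over the fibre of a word `J` over
the `K`-th alphabet is `chainWeight π j s φ K J ^ (s K)⁻¹`, and whose conditional masses between
consecutive levels `i` and `i + 1` are proportional to `chainWeight π j s φ i ^ (s i)⁻¹`. -/
def liftedWeight (π : ∀ i, B i → B (i + 1)) (j : ℕ) (s : ℕ → ℝ) (φ : List (B j) → ℝ) (K : ℕ)
    (I : List (B j)) : ℝ :=
  φ I ^ (s 0)⁻¹ * ∏ i ∈ Finset.range K,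
    chainWeight π j s φ (i + 1) (I.map (tauFrom π j (i + 1))) ^ ((s (i + 1))⁻¹ - (s i)⁻¹)

lemma QuasiSubmultiplicative.chainWeight (hφ : QuasiSubmultiplicative φ) (hs : ∀ i, 0 < s i)
    (i : ℕ) : QuasiSubmultiplicative (chainWeight π j s φ i) := by
  induction i with
  | zero => exact hφ
  | succ i ih => exact ih.projWeight (hs i).le _

lemma chainWeight_map_pos (hφ : QuasiSubmultiplicative φ) (hs : ∀ i, 0 < s i) {I : List (B j)}
    (hI : 0 < φ I) (i : ℕ) : 0 < chainWeight π j s φ i (I.map (tauFrom π j i)) := by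
  induction i with
  | zero => exact (List.map_id I).symm ▸ hI
  | succ i ih =>
    rw [map_tauFrom_succ]
    exact projWeight_map_pos (hφ.chainWeight hs i).nonneg _ ih

lemma liftedWeight_nonneg (hφ : QuasiSubmultiplicative φ) (hs : ∀ i, 0 < s i) (K : ℕ)
    (I : List (B j)) : 0 ≤ liftedWeight π j s φ K I :=
  mul_nonneg (Real.rpow_nonneg (hφ.nonneg I) _)
    (Finset.prod_nonneg fun i _ => Real.rpow_nonneg ((hφ.chainWeight hs (i + 1)).nonneg _) _)

lemma liftedWeight_succ (K : ℕ) (I : List (B j)) :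
    liftedWeight π j s φ (K + 1) I = liftedWeight π j s φ K I *
      chainWeight π j s φ (K + 1) (I.map (tauFrom π j (K + 1))) ^ ((s (K + 1))⁻¹ - (s K)⁻¹) := by
  rw [liftedWeight, Finset.prod_range_succ, ← mul_assoc]
  rfl

lemma sum_wordFiber_liftedWeight_self (hφ : QuasiSubmultiplicative φ) (hs : ∀ i, 0 < s i) (K : ℕ)
    (J : List (B (j + K))) :
    ∑ I ∈ wordFiber (tauFrom π j K) J, liftedWeight π j s φ K I =
      chainWeight π j s φ K J ^ (s K)⁻¹ := by
  induction K with
  | zero =>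
    change ∑ I ∈ wordFiber id J, liftedWeight π j s φ 0 I = φ J ^ (s 0)⁻¹
    rw [wordFiber_id, Finset.sum_singleton, liftedWeight, Finset.prod_range_zero, mul_one]
  | succ K ih =>
    have h0 := (hφ.chainWeight (π := π) hs (K + 1)).nonneg J
    calc ∑ I ∈ wordFiber (tauFrom π j (K + 1)) J, liftedWeight π j s φ (K + 1) I
        = (∑ I ∈ wordFiber (tauFrom π j (K + 1)) J, liftedWeight π j s φ K I) *
            chainWeight π j s φ (K + 1) J ^ ((s (K + 1))⁻¹ - (s K)⁻¹) := by
          rw [Finset.sum_mul]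
          refine Finset.sum_congr rfl fun I hI => ?_
          rw [liftedWeight_succ, mem_wordFiber.1 hI]
      _ = chainWeight π j s φ (K + 1) J ^ (s K)⁻¹ *
            chainWeight π j s φ (K + 1) J ^ ((s (K + 1))⁻¹ - (s K)⁻¹) := by
          congr 1
          exact (sum_wordFiber_comp (π (j + K)) (tauFrom π j K) J _).trans
            ((Finset.sum_congr rfl fun w _ => ih w).trans
              (projWeight_rpow_inv (hφ.chainWeight hs K).nonneg (hs K).ne' _ J).symm)
      _ = chainWeight π j s φ (K + 1) J ^ (s (K + 1))⁻¹ := by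
          have hne : (s K)⁻¹ + ((s (K + 1))⁻¹ - (s K)⁻¹) ≠ 0 := by
            rw [add_sub_cancel]
            exact inv_ne_zero (hs _).ne'
          rw [← Real.rpow_add' h0 hne, add_sub_cancel]

lemma sum_wordFiber_liftedWeight (hφ : QuasiSubmultiplicative φ) (hs : ∀ i, 0 < s i) {i K : ℕ}
    (hiK : i ≤ K) (I : List (B j)) :
    ∑ I' ∈ wordFiber (tauFrom π j i) (I.map (tauFrom π j i)), liftedWeight π j s φ K I' =
      chainWeight π j s φ i (I.map (tauFrom π j i)) ^ (s i)⁻¹ * ∏ l ∈ Finset.Ico i K,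
        chainWeight π j s φ (l + 1) (I.map (tauFrom π j (l + 1))) ^ ((s (l + 1))⁻¹ - (s l)⁻¹) := by
  have hmap {I' : List (B j)} (hI' : I'.map (tauFrom π j i) = I.map (tauFrom π j i)) {l : ℕ}
      (hl : i ≤ l) : I'.map (tauFrom π j l) = I.map (tauFrom π j l) := by
    induction l, hl using Nat.le_induction with
    | base => exact hI'
    | succ l _ ih => rw [map_tauFrom_succ, map_tauFrom_succ, ih]
  induction K, hiK using Nat.le_induction with
  | base =>
    rw [sum_wordFiber_liftedWeight_self hφ hs, Finset.Ico_self, Finset.prod_empty, mul_one]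
  | succ K hiK ih =>
    rw [Finset.prod_Ico_succ_top hiK, ← mul_assoc, ← ih, Finset.sum_mul]
    refine Finset.sum_congr rfl fun I' hI' => ?_
    rw [liftedWeight_succ, hmap (mem_wordFiber.1 hI') (hiK.trans K.le_succ)]

lemma exists_mul_chainWeight_rpow_le (hφ : QuasiMultiplicative X φ) (hs : ∀ i, 0 < s i) {e : ℝ}
    (he : e ≤ 0) (i r : ℕ) : ∃ c > 0, ∀ I G J : List (B j), G.length ≤ r → Lang X (I ++ G ++ J) →
      c * (chainWeight π j s φ i (I.map (tauFrom π j i)) ^ e *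
        chainWeight π j s φ i (J.map (tauFrom π j i)) ^ e) ≤
          chainWeight π j s φ i ((I ++ G ++ J).map (tauFrom π j i)) ^ e := by
  have hchain := hφ.toQuasiSubmultiplicative.chainWeight (π := π) hs i
  obtain ⟨c, hc, hle⟩ := hchain.append_append_le r
  refine ⟨c ^ e, by positivity, fun I G J hG hL => ?_⟩
  have hpos := chainWeight_map_pos (π := π) hφ.toQuasiSubmultiplicative hs (hφ.pos _ hL) i
  rw [← Real.mul_rpow (hchain.nonneg _) (hchain.nonneg _),
    ← Real.mul_rpow hc.le (mul_nonneg (hchain.nonneg _) (hchain.nonneg _))]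
  refine Real.rpow_le_rpow_of_nonpos hpos ?_ he
  rw [List.map_append, List.map_append]
  exact hle _ _ _ ((List.length_map _).trans_le hG)

lemma exists_liftedWeight_le_append (hφ : QuasiMultiplicative X φ) (hs : ∀ i, 0 < s i)
    (hmono : Monotone s) (K r : ℕ) :
    ∃ c > 0, ∀ I G J : List (B j), G.length ≤ r → Lang X (I ++ G ++ J) →
      c * (liftedWeight π j s φ K I * liftedWeight π j s φ K J) ≤
        liftedWeight π j s φ K (I ++ G ++ J) := by
  have h0 := hφ.nonneg
  induction K with
  | zero =>
    obtain ⟨c, hc, hle⟩ := hφ.le_append r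
    refine ⟨c ^ (s 0)⁻¹, by positivity, fun I G J hG hL => ?_⟩
    simp only [liftedWeight, Finset.prod_range_zero, mul_one]
    rw [← Real.mul_rpow (h0 I) (h0 J), ← Real.mul_rpow hc.le (mul_nonneg (h0 I) (h0 J))]
    exact Real.rpow_le_rpow (mul_nonneg hc.le (mul_nonneg (h0 I) (h0 J))) (hle I G J hG hL)
      (inv_nonneg.2 (hs 0).le)
  | succ K ih =>
    obtain ⟨c₁, hc₁, hlift⟩ := ih
    obtain ⟨c₂, hc₂, hchain⟩ := exists_mul_chainWeight_rpow_le (π := π) hφ hs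
      (sub_nonpos.2 (inv_anti₀ (hs K) (hmono K.le_succ))) (K + 1) r
    refine ⟨c₁ * c₂, by positivity, fun I G J hG hL => ?_⟩
    have h0 := (hφ.toQuasiSubmultiplicative.chainWeight (π := π) hs (K + 1)).nonneg
    have hmul := mul_le_mul (hlift I G J hG hL) (hchain I G J hG hL)
      (mul_nonneg hc₂.le (mul_nonneg (Real.rpow_nonneg (h0 _) _) (Real.rpow_nonneg (h0 _) _)))
      (liftedWeight_nonneg hφ.toQuasiSubmultiplicative hs K _)
    simp only [liftedWeight_succ]
    refine le_of_eq_of_le ?_ hmul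
    ring

lemma partitionSum_liftedWeight (hφ : QuasiSubmultiplicative φ) (hs : ∀ i, 0 < s i) (K n : ℕ) :
    partitionSum (liftedWeight π j s φ K) n =
      partitionSum (fun J => chainWeight π j s φ K J ^ (s K)⁻¹) n := by
  rw [partitionSum, sum_words_eq_sum_wordFiber (tauFrom π j K)]
  exact Finset.sum_congr rfl fun J _ => sum_wordFiber_liftedWeight_self hφ hs K J

lemma QuasiMultiplicative.gibbsWeight_liftedWeight (hφ : QuasiMultiplicative X φ)
    (hs : ∀ i, 0 < s i) (hmono : Monotone s) (K : ℕ) : GibbsWeight X (liftedWeight π j s φ K) where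
  pos I hI := by
    have := chainWeight_map_pos (π := π) hφ.toQuasiSubmultiplicative hs (hφ.pos I hI)
    exact mul_pos (Real.rpow_pos_of_pos (hφ.pos I hI) _)
      (Finset.prod_pos fun i _ => Real.rpow_pos_of_pos (this (i + 1)) _)
  eq_zero I hI := by
    rw [liftedWeight, hφ.eq_zero I hI, Real.zero_rpow (inv_ne_zero (hs 0).ne'), zero_mul]
  le_append r := exists_liftedWeight_le_append hφ hs hmono K r
  partitionSum_add_le := by
    have hsub := hφ.toQuasiSubmultiplicative
    simp only [partitionSum_liftedWeight hsub hs]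
    exact ((hsub.chainWeight hs K).rpow (inv_nonneg.2 (hs K).le)).partitionSum_add_le

end Chain

section WordMarginal

variable {A B : Type} [Fintype A] {f : List A → ℝ} {t : A → B}

/-- The push-forward of a weight on words under a letter-to-letter map. -/
def wordMarginal (t : A → B) (f : List A → ℝ) (J : List B) : ℝ := ∑ I ∈ wordFiber t J, f I

lemma wordMarginal_nonneg (hf : ∀ I, 0 ≤ f I) (J : List B) : 0 ≤ wordMarginal t f J :=
  Finset.sum_nonneg fun I _ => hf I

lemma wordMarginal_id (f : List A → ℝ) : wordMarginal id f = f := by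
  funext J
  rw [wordMarginal, wordFiber_id, Finset.sum_singleton]

lemma sum_wordMarginal [Fintype B] (t : A → B) (f : List A → ℝ) (n : ℕ) :
    ∑ J ∈ words B n, wordMarginal t f J = ∑ I ∈ words A n, f I :=
  (sum_words_eq_sum_wordFiber t n f).symm

lemma wordMarginal_normalizedWeight (t : A → B) (u : List A → ℝ) (J : List B) :
    wordMarginal t (normalizedWeight u) J = wordMarginal t u J / partitionSum u J.length := by
  rw [wordMarginal, wordMarginal, Finset.sum_div]
  refine Finset.sum_congr rfl fun I hI => ?_
  rw [normalizedWeight, ← mem_wordFiber.1 hI, List.length_map]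

end WordMarginal

section WordDivergence

variable {A : Type} [Fintype A] [MeasurableSpace A] {ρ : Measure (ℕ → A)} {r : List A → ℝ}

lemma blockEntropy_add_wordDivergence (ρ : Measure (ℕ → A)) (r : List A → ℝ) (n : ℕ) :
    blockEntropy ρ n + wordDivergence ρ r n =
      -∑ I ∈ words A n, ρ.real (cyl I) * Real.log (r I) := by
  rw [blockEntropy, wordDivergence, ← Finset.sum_add_distrib, ← Finset.sum_neg_distrib]
  refine Finset.sum_congr rfl fun I _ => ?_
  rw [Real.negMulLog]
  ring

lemma wordDivergence_eq_zero {n : ℕ} (h : ∀ I ∈ words A n, ρ.real (cyl I) = r I) :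
    wordDivergence ρ r n = 0 :=
  Finset.sum_eq_zero fun I hI => by rw [h I hI, sub_self, mul_zero]

lemma wordDivergence_nonneg [TopologicalSpace A] [DiscreteTopology A] [BorelSpace A]
    [IsProbabilityMeasure ρ] (hr : ∀ I, 0 ≤ r I) {n : ℕ} (hsum : ∑ I ∈ words A n, r I = 1)
    (hz : ∀ I, r I = 0 → ρ.real (cyl I) = 0) : 0 ≤ wordDivergence ρ r n := by
  have hgibbs := sum_negMulLog_le_neg_sum_mul_log (words A n) (p := fun I => ρ.real (cyl I))
    (fun _ _ => measureReal_nonneg) (fun I _ => hr I) (fun I _ => hz I)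
    (hsum.trans (sum_measureReal_cyl ρ n).symm).le
  rw [← blockEntropy_add_wordDivergence] at hgibbs
  exact le_add_iff_nonneg_right _ |>.1 hgibbs

end WordDivergence

section Pushforward

variable {A B : Type} [Fintype A] [TopologicalSpace A] [DiscreteTopology A] [MeasurableSpace A]
  [BorelSpace A] [Fintype B] [TopologicalSpace B] [DiscreteTopology B] [MeasurableSpace B]
  [BorelSpace B] {ρ : Measure (ℕ → A)} [IsProbabilityMeasure ρ] {f : List A → ℝ} {t : A → B}

lemma measureReal_map_blockMap_cyl_eq_wordMarginal (t : A → B) {n : ℕ}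
    (h : ∀ I ∈ words A n, ρ.real (cyl I) = f I) {J : List B} (hJ : J ∈ words B n) :
    (ρ.map (blockMap t)).real (cyl J) = wordMarginal t f J := by
  rw [measureReal_map_blockMap_cyl, wordMarginal]
  refine Finset.sum_congr rfl fun I hI => h I ?_
  rwa [mem_words, ← List.length_map t, mem_wordFiber.1 hI, ← mem_words]

omit [Fintype B] in
lemma measureReal_map_blockMap_cyl_eq_zero (hf : ∀ I, 0 ≤ f I)
    (hz : ∀ I, f I = 0 → ρ.real (cyl I) = 0) {J : List B} (hJ : wordMarginal t f J = 0) :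
    (ρ.map (blockMap t)).real (cyl J) = 0 := by
  rw [measureReal_map_blockMap_cyl]
  exact Finset.sum_eq_zero fun I hI =>
    hz I ((Finset.sum_eq_zero_iff_of_nonneg fun I _ => hf I).1 hJ I hI)

lemma sum_measureReal_map_blockMap_mul (ρ : Measure (ℕ → A)) [IsProbabilityMeasure ρ] (t : A → B)
    (n : ℕ) (g : List B → ℝ) :
    ∑ J ∈ words B n, (ρ.map (blockMap t)).real (cyl J) * g J =
      ∑ I ∈ words A n, ρ.real (cyl I) * g (I.map t) := by
  rw [sum_words_eq_sum_wordFiber t]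
  refine Finset.sum_congr rfl fun J _ => ?_
  rw [measureReal_map_blockMap_cyl, Finset.sum_mul]
  exact Finset.sum_congr rfl fun I hI => by rw [mem_wordFiber.1 hI]

end Pushforward

section PartialSums

variable {a : ℕ → ℝ}

/-- The exponents `a 0 + ⋯ + a i` of the weights along the chain. -/
def cumWeight (a : ℕ → ℝ) (i : ℕ) : ℝ := ∑ l ∈ Finset.range (i + 1), a l

lemma cumWeight_succ (a : ℕ → ℝ) (i : ℕ) : cumWeight a (i + 1) = cumWeight a i + a (i + 1) :=
  Finset.sum_range_succ a (i + 1)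

lemma monotone_cumWeight (ha : ∀ i, 0 ≤ a i) : Monotone (cumWeight a) :=
  monotone_nat_of_le_succ fun i =>
    (le_add_of_nonneg_right (ha (i + 1))).trans_eq (cumWeight_succ a i).symm

lemma cumWeight_pos (ha₀ : 0 < a 0) (ha : ∀ i, 0 ≤ a i) (i : ℕ) : 0 < cumWeight a i :=
  ha₀.trans_le (Finset.single_le_sum (fun l _ => ha l) (Finset.mem_range.2 i.succ_pos))

lemma sum_mul_inv_cumWeight (h : ∀ i, cumWeight a i ≠ 0) (L : ℕ → ℝ) (K : ℕ) :
    ∑ i ∈ Finset.range (K + 1), a i * ((cumWeight a i)⁻¹ * L i + ∑ l ∈ Finset.Ico i K,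
      ((cumWeight a (l + 1))⁻¹ - (cumWeight a l)⁻¹) * L (l + 1)) = L 0 := by
  induction K with
  | zero =>
    have h0 : cumWeight a 0 = a 0 := Finset.sum_range_one a
    simp [← h0, mul_inv_cancel_left₀ (h 0)]
  | succ K ih =>
    have hstep : ∀ i ∈ Finset.range (K + 1), a i * ((cumWeight a i)⁻¹ * L i +
        ∑ l ∈ Finset.Ico i (K + 1), ((cumWeight a (l + 1))⁻¹ - (cumWeight a l)⁻¹) * L (l + 1)) =
        a i * ((cumWeight a i)⁻¹ * L i +
          ∑ l ∈ Finset.Ico i K, ((cumWeight a (l + 1))⁻¹ - (cumWeight a l)⁻¹) * L (l + 1)) +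
        a i * (((cumWeight a (K + 1))⁻¹ - (cumWeight a K)⁻¹) * L (K + 1)) := fun i hi => by
      rw [Finset.sum_Ico_succ_top (Finset.mem_range_succ_iff.1 hi)]
      ring
    rw [Finset.sum_range_succ, Finset.sum_congr rfl hstep, Finset.sum_add_distrib, ih,
      ← Finset.sum_mul, Finset.Ico_self, Finset.sum_empty, ← cumWeight]
    have hK := h K
    have hK' := h (K + 1)
    have ha : a (K + 1) = cumWeight a (K + 1) - cumWeight a K := by
      rw [cumWeight_succ, add_sub_cancel_left]
    rw [ha]
    field_simp
    ring

end PartialSums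

section ChainIdentity

variable {B : ℕ → Type} [∀ i, Fintype (B i)] {π : ∀ i, B i → B (i + 1)} {j : ℕ} {a : ℕ → ℝ}
  {φ : List (B j) → ℝ} {X : Set (ℕ → B j)}

/-- The distribution on words of each length whose limit is the weighted equilibrium state of the
potential with weight `φ`. -/
def equilibriumWeight (π : ∀ i, B i → B (i + 1)) (j : ℕ) (a : ℕ → ℝ) (φ : List (B j) → ℝ) (K : ℕ) :
    List (B j) → ℝ :=
  normalizedWeight (liftedWeight π j (cumWeight a) φ K)

lemma log_wordMarginal_liftedWeight (hφ : QuasiMultiplicative X φ) {s : ℕ → ℝ}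
    (hs : ∀ i, 0 < s i) {i K : ℕ} (hiK : i ≤ K) {I : List (B j)} (hI : Lang X I) :
    Real.log (wordMarginal (tauFrom π j i) (liftedWeight π j s φ K) (I.map (tauFrom π j i))) =
      (s i)⁻¹ * Real.log (chainWeight π j s φ i (I.map (tauFrom π j i))) +
        ∑ l ∈ Finset.Ico i K, ((s (l + 1))⁻¹ - (s l)⁻¹) *
          Real.log (chainWeight π j s φ (l + 1) (I.map (tauFrom π j (l + 1)))) := by
  have hpos := chainWeight_map_pos (π := π) hφ.toQuasiSubmultiplicative hs (hφ.pos I hI)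
  rw [wordMarginal, sum_wordFiber_liftedWeight hφ.toQuasiSubmultiplicative hs hiK,
    Real.log_mul (Real.rpow_pos_of_pos (hpos i) _).ne'
      (Finset.prod_ne_zero_iff.2 fun l _ => (Real.rpow_pos_of_pos (hpos (l + 1)) _).ne'),
    Real.log_rpow (hpos i), Real.log_prod fun l _ => (Real.rpow_pos_of_pos (hpos (l + 1)) _).ne']
  congr 1
  exact Finset.sum_congr rfl fun l _ => Real.log_rpow (hpos (l + 1)) _

variable (hφ : QuasiMultiplicative X φ) (ha₀ : 0 < a 0) (ha : ∀ i, 0 ≤ a i) (K : ℕ)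

include hφ ha₀ ha

lemma gibbsWeight_liftedWeight_cumWeight :
    GibbsWeight X (liftedWeight π j (cumWeight a) φ K) :=
  hφ.gibbsWeight_liftedWeight (cumWeight_pos ha₀ ha) (monotone_cumWeight ha) K

lemma sum_mul_log_wordMarginal_equilibriumWeight {I : List (B j)} (hI : Lang X I) :
    ∑ i ∈ Finset.range (K + 1), a i * Real.log (wordMarginal (tauFrom π j i)
      (equilibriumWeight π j a φ K) (I.map (tauFrom π j i))) =
    Real.log (φ I) -
      cumWeight a K * Real.log (partitionSum (liftedWeight π j (cumWeight a) φ K) I.length) := by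
  have hs := cumWeight_pos ha₀ ha
  have hu := gibbsWeight_liftedWeight_cumWeight (π := π) hφ ha₀ ha K
  have hZ := hu.partitionSum_pos (hI.imp fun _ h => h.2) I.length
  have hmarg (i : ℕ) : 0 < wordMarginal (tauFrom π j i) (liftedWeight π j (cumWeight a) φ K)
      (I.map (tauFrom π j i)) :=
    Finset.sum_pos' (fun I' _ => hu.nonneg I') ⟨I, mem_wordFiber.2 rfl, hu.pos I hI⟩
  have hterm : ∀ i ∈ Finset.range (K + 1), a i * Real.log (wordMarginal (tauFrom π j i)
      (equilibriumWeight π j a φ K) (I.map (tauFrom π j i))) =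
      a i * Real.log (wordMarginal (tauFrom π j i) (liftedWeight π j (cumWeight a) φ K)
        (I.map (tauFrom π j i))) -
      a i * Real.log (partitionSum (liftedWeight π j (cumWeight a) φ K) I.length) := fun i _ => by
    rw [equilibriumWeight, wordMarginal_normalizedWeight, List.length_map,
      Real.log_div (hmarg i).ne' hZ.ne', mul_sub]
  have hlift := sum_mul_inv_cumWeight (fun i => (hs i).ne') (fun i =>
    Real.log (chainWeight π j (cumWeight a) φ i (I.map (tauFrom π j i)))) K
  rw [Finset.sum_congr rfl hterm, Finset.sum_sub_distrib, ← Finset.sum_mul]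
  refine congrArg₂ (· - ·) ?_ rfl
  rw [show I.map (tauFrom π j 0) = I from List.map_id I] at hlift
  refine (Finset.sum_congr rfl fun i hi => ?_).trans hlift
  rw [log_wordMarginal_liftedWeight hφ hs (Finset.mem_range_succ_iff.1 hi) hI]

variable [∀ i, TopologicalSpace (B i)] [∀ i, DiscreteTopology (B i)]
  [∀ i, MeasurableSpace (B i)] [∀ i, BorelSpace (B i)] {η : Measure (ℕ → B j)}
  [IsProbabilityMeasure η]

lemma sum_mul_blockEntropy_add_wordDivergence (hz : ∀ I, ¬ Lang X I → η.real (cyl I) = 0) (n : ℕ) :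
    ∑ i ∈ Finset.range (K + 1), a i * (blockEntropy (η.map (blockMap (tauFrom π j i))) n +
      wordDivergence (η.map (blockMap (tauFrom π j i)))
        (wordMarginal (tauFrom π j i) (equilibriumWeight π j a φ K)) n) +
      ∑ I ∈ words (B j) n, η.real (cyl I) * Real.log (φ I) =
    cumWeight a K * Real.log (partitionSum (liftedWeight π j (cumWeight a) φ K) n) := by
  have hword : ∀ I ∈ words (B j) n, ∑ i ∈ Finset.range (K + 1), a i * (η.real (cyl I) *
      Real.log (wordMarginal (tauFrom π j i) (equilibriumWeight π j a φ K)
        (I.map (tauFrom π j i)))) =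
      η.real (cyl I) * Real.log (φ I) - η.real (cyl I) * (cumWeight a K *
        Real.log (partitionSum (liftedWeight π j (cumWeight a) φ K) n)) := fun I hI => by
    simp only [mul_left_comm (a _), ← Finset.mul_sum, ← mul_sub]
    by_cases hL : Lang X I
    · rw [sum_mul_log_wordMarginal_equilibriumWeight hφ ha₀ ha K hL, mem_words.1 hI]
    · rw [hz I hL, zero_mul, zero_mul]
  simp only [blockEntropy_add_wordDivergence, sum_measureReal_map_blockMap_mul, mul_neg,
    Finset.sum_neg_distrib, Finset.mul_sum]
  rw [Finset.sum_comm, Finset.sum_congr rfl hword, Finset.sum_sub_distrib, ← Finset.sum_mul,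
    sum_measureReal_cyl, one_mul, neg_sub, sub_add_cancel]

lemma sum_mul_blockEntropy_add_mul_wordDivergence_le (hz : ∀ I, ¬ Lang X I → η.real (cyl I) = 0)
    (hne : X.Nonempty) (n : ℕ) :
    ∑ i ∈ Finset.range (K + 1), a i * blockEntropy (η.map (blockMap (tauFrom π j i))) n +
      a 0 * wordDivergence η (equilibriumWeight π j a φ K) n +
      ∑ I ∈ words (B j) n, η.real (cyl I) * Real.log (φ I) ≤
    cumWeight a K * Real.log (partitionSum (liftedWeight π j (cumWeight a) φ K) n) := by
  have hu := gibbsWeight_liftedWeight_cumWeight (π := π) hφ ha₀ ha K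
  have hzf (I : List (B j)) (hI : equilibriumWeight π j a φ K I = 0) : η.real (cyl I) = 0 :=
    hz I fun hL => (hu.normalizedWeight_ne_zero_iff hne).2 hL hI
  have hdiv (i : ℕ) : 0 ≤ wordDivergence (η.map (blockMap (tauFrom π j i)))
      (wordMarginal (tauFrom π j i) (equilibriumWeight π j a φ K)) n := by
    have := Measure.isProbabilityMeasure_map (μ := η)
      (measurable_blockMap (tauFrom π j i)).aemeasurable
    exact wordDivergence_nonneg (wordMarginal_nonneg hu.normalizedWeight_nonneg)
      ((sum_wordMarginal _ _ n).trans (hu.sum_normalizedWeight hne n)) fun J =>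
        measureReal_map_blockMap_cyl_eq_zero hu.normalizedWeight_nonneg hzf
  have hdiv₀ : wordDivergence (η.map (blockMap (tauFrom π j 0)))
      (wordMarginal (tauFrom π j 0) (equilibriumWeight π j a φ K)) n =
      wordDivergence η (equilibriumWeight π j a φ K) n := by
    change wordDivergence (η.map id) (wordMarginal id _) n = _
    rw [Measure.map_id, wordMarginal_id]
  rw [← sum_mul_blockEntropy_add_wordDivergence (π := π) hφ ha₀ ha K hz n]
  simp only [mul_add, Finset.sum_add_distrib]
  gcongr
  rw [← hdiv₀]
  exact Finset.single_le_sum (f := fun i => a i * wordDivergence (η.map (blockMap (tauFrom π j i)))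
    (wordMarginal (tauFrom π j i) (equilibriumWeight π j a φ K)) n)
    (fun i _ => mul_nonneg (ha i) (hdiv i)) (Finset.mem_range.2 K.succ_pos)

lemma sum_mul_blockEntropy_add_eq (hz : ∀ I, ¬ Lang X I → η.real (cyl I) = 0) {n : ℕ}
    (hη : ∀ I ∈ words (B j) n, η.real (cyl I) = equilibriumWeight π j a φ K I) :
    ∑ i ∈ Finset.range (K + 1), a i * blockEntropy (η.map (blockMap (tauFrom π j i))) n +
      ∑ I ∈ words (B j) n, η.real (cyl I) * Real.log (φ I) =
    cumWeight a K * Real.log (partitionSum (liftedWeight π j (cumWeight a) φ K) n) := by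
  rw [← sum_mul_blockEntropy_add_wordDivergence (π := π) hφ ha₀ ha K hz n]
  congr 1
  refine Finset.sum_congr rfl fun i _ => ?_
  rw [wordDivergence_eq_zero fun J hJ =>
    measureReal_map_blockMap_cyl_eq_wordMarginal (tauFrom π j i) hη hJ, add_zero]

end ChainIdentity

section BirkhoffWeight

variable {A : Type} {X : Set (ℕ → A)} {g : (ℕ → A) → ℝ} {c : ℝ} {pt : List A → ℕ → A}

/-- The condition defining the class `V(σ)`: the Birkhoff sums of `g` over `n` steps vary by at most
`c` on each `n`-cylinder of `X`. -/
def BoundedDistortion (X : Set (ℕ → A)) (g : (ℕ → A) → ℝ) (c : ℝ) : Prop :=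
  ∀ n, ∀ x ∈ X, ∀ y ∈ X, (∀ i < n, x i = y i) →
    |birkhoffSum shiftMap g n x - birkhoffSum shiftMap g n y| ≤ c

/-- A choice of a point of `X` for each word, lying in the cylinder over the word if the latter is
in the language of `X`. -/
structure IsRepresentative (X : Set (ℕ → A)) (pt : List A → ℕ → A) : Prop where
  mem : ∀ I, pt I ∈ X
  mem_cyl : ∀ I, Lang X I → pt I ∈ cyl I

/-- The weight on words of a potential `g`: the exponential of its Birkhoff sum at a point of the
cylinder. -/
def birkhoffWeight (X : Set (ℕ → A)) (g : (ℕ → A) → ℝ) (pt : List A → ℕ → A) (I : List A) : ℝ :=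
  if Lang X I then Real.exp (birkhoffSum shiftMap g I.length (pt I)) else 0

lemma exists_isRepresentative (hne : X.Nonempty) : ∃ pt, IsRepresentative X pt := by
  have hpoint (I : List A) : ∃ x ∈ X, Lang X I → x ∈ cyl I := by
    by_cases h : Lang X I
    · obtain ⟨x, hxI, hxX⟩ := h
      exact ⟨x, hxX, fun _ => hxI⟩
    · exact hne.imp fun x hx => ⟨hx, fun hI => absurd hI h⟩
  choose pt hmem hcyl using hpoint
  exact ⟨pt, hmem, hcyl⟩

lemma log_birkhoffWeight {I : List A} (hI : Lang X I) :
    Real.log (birkhoffWeight X g pt I) = birkhoffSum shiftMap g I.length (pt I) := by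
  rw [birkhoffWeight, if_pos hI, Real.log_exp]

lemma birkhoffWeight_nonneg (I : List A) : 0 ≤ birkhoffWeight X g pt I := by
  rw [birkhoffWeight]
  split_ifs <;> positivity

lemma BoundedDistortion.abs_sub_le (hg : BoundedDistortion X g c) {I : List A} {x y : ℕ → A}
    (hx : x ∈ X) (hy : y ∈ X) (hxI : x ∈ cyl I) (hyI : y ∈ cyl I) :
    |birkhoffSum shiftMap g I.length x - birkhoffSum shiftMap g I.length y| ≤ c :=
  hg _ x hx y hy fun i hi => (hxI ⟨i, hi⟩).trans (hyI ⟨i, hi⟩).symm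

lemma abs_birkhoffSum_append_sub_le (hg : BoundedDistortion X g c) (hX : shiftMap '' X ⊆ X)
    (hpt : IsRepresentative X pt) {I J : List A} (hL : Lang X (I ++ J)) :
    |birkhoffSum shiftMap g (I ++ J).length (pt (I ++ J)) -
      (birkhoffSum shiftMap g I.length (pt I) + birkhoffSum shiftMap g J.length (pt J))| ≤
        2 * c := by
  have hmem := hpt.mem_cyl _ hL
  rw [cyl_append] at hmem
  rw [List.length_append, birkhoffSum_add, add_sub_add_comm, two_mul]
  exact (abs_add_le _ _).trans <| add_le_add
    (hg.abs_sub_le (hpt.mem _) (hpt.mem _) hmem.1 (hpt.mem_cyl _ hL.left))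
    (hg.abs_sub_le (iterate_shiftMap_mem hX (hpt.mem _) _) (hpt.mem _) hmem.2
      (hpt.mem_cyl _ (hL.right hX)))

lemma birkhoffWeight_append_le (hg : BoundedDistortion X g c) (hX : shiftMap '' X ⊆ X)
    (hpt : IsRepresentative X pt) (I J : List A) : birkhoffWeight X g pt (I ++ J) ≤
      Real.exp (2 * c) * (birkhoffWeight X g pt I * birkhoffWeight X g pt J) := by
  by_cases hL : Lang X (I ++ J)
  · rw [birkhoffWeight, birkhoffWeight, birkhoffWeight, if_pos hL, if_pos hL.left,
      if_pos (hL.right hX), ← Real.exp_add, ← Real.exp_add, Real.exp_le_exp]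
    linarith [(abs_le.1 (abs_birkhoffSum_append_sub_le hg hX hpt hL)).2]
  · rw [birkhoffWeight, if_neg hL]
    exact mul_nonneg (Real.exp_pos _).le
      (mul_nonneg (birkhoffWeight_nonneg I) (birkhoffWeight_nonneg J))

lemma le_birkhoffWeight_append (hg : BoundedDistortion X g c) (hX : shiftMap '' X ⊆ X)
    (hpt : IsRepresentative X pt) {M : ℝ} (hM : ∀ x, |g x| ≤ M) {r : ℕ} {I G J : List A}
    (hG : G.length ≤ r) (hL : Lang X (I ++ G ++ J)) :
    Real.exp (-(4 * c + r * M)) * (birkhoffWeight X g pt I * birkhoffWeight X g pt J) ≤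
      birkhoffWeight X g pt (I ++ G ++ J) := by
  have hgap : -(r * M) ≤ birkhoffSum shiftMap g G.length (pt G) := by
    calc -(r * M) ≤ -(G.length * M) := by
          gcongr
          exact (abs_nonneg _).trans (hM (pt G))
      _ = ∑ _i ∈ Finset.range G.length, -M := by simp
      _ ≤ birkhoffSum shiftMap g G.length (pt G) :=
          Finset.sum_le_sum fun i _ => (abs_le.1 (hM _)).1
  have hIGJ := (abs_le.1 (abs_birkhoffSum_append_sub_le hg hX hpt hL)).1
  have hIG := (abs_le.1 (abs_birkhoffSum_append_sub_le hg hX hpt hL.left)).1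
  rw [birkhoffWeight, birkhoffWeight, birkhoffWeight, if_pos hL, if_pos hL.left.left,
    if_pos (hL.right hX), ← Real.exp_add, ← Real.exp_add, Real.exp_le_exp]
  linarith

lemma quasiMultiplicative_birkhoffWeight (hg : BoundedDistortion X g c) (hX : shiftMap '' X ⊆ X)
    (hpt : IsRepresentative X pt) {M : ℝ} (hM : ∀ x, |g x| ≤ M) :
    QuasiMultiplicative X (birkhoffWeight X g pt) where
  nonneg := birkhoffWeight_nonneg
  append_le := ⟨_, Real.exp_pos _, birkhoffWeight_append_le hg hX hpt⟩
  pos I hI := by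
    rw [birkhoffWeight, if_pos hI]
    exact Real.exp_pos _
  eq_zero I hI := if_neg hI
  le_append r := ⟨_, Real.exp_pos _, fun _ _ _ hG hL => le_birkhoffWeight_append hg hX hpt hM hG hL⟩

end BirkhoffWeight

lemma measureReal_cyl_eq_zero_of_not_lang {A : Type} [MeasurableSpace A] {X : Set (ℕ → A)}
    {η : Measure (ℕ → A)} [IsProbabilityMeasure η] (hX : MeasurableSet X) (hηX : η X = 1)
    {I : List A} (hI : ¬ Lang X I) : η.real (cyl I) = 0 := by
  have hdisj : cyl I ⊆ Xᶜ := fun x hxI hxX => hI ⟨x, hxI, hxX⟩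
  rw [measureReal_def, measure_mono_null hdisj ((prob_compl_eq_zero_iff hX).2 hηX),
    ENNReal.toReal_zero]

section Integral

variable {A : Type} [TopologicalSpace A] [DiscreteTopology A] [MeasurableSpace A] [BorelSpace A]
  {X : Set (ℕ → A)} {η : Measure (ℕ → A)} [IsProbabilityMeasure η] {g : (ℕ → A) → ℝ} {c : ℝ}
  {pt : List A → ℕ → A}

lemma integrable_comp_iterate_shiftMap [Finite A] (hg : Continuous g) (i : ℕ) :
    Integrable (fun x => g (shiftMap^[i] x)) η :=
  (BoundedContinuousFunction.mkOfCompact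
    ⟨_, hg.comp (continuous_shiftMap.iterate i)⟩).integrable η

lemma integral_birkhoffSum [Finite A] (hη : η.map shiftMap = η) (hg : Continuous g) (n : ℕ) :
    ∫ x, birkhoffSum shiftMap g n x ∂η = n * ∫ x, g x ∂η := by
  have hmp : MeasurePreserving (shiftMap (A := A)) η η := ⟨measurable_shiftMap, hη⟩
  have hterm (i : ℕ) : ∫ x, g (shiftMap^[i] x) ∂η = ∫ x, g x ∂η := by
    conv_rhs => rw [← (hmp.iterate i).map_eq]
    exact (integral_map (hmp.iterate i).aemeasurable hg.aestronglyMeasurable).symm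
  simp only [birkhoffSum]
  rw [integral_finsetSum _ fun i _ => integrable_comp_iterate_shiftMap hg i]
  simp [hterm]

variable [Fintype A]

lemma integral_comp_wordOf (η : Measure (ℕ → A)) [IsProbabilityMeasure η] (n : ℕ)
    (F : List A → ℝ) : Integrable (fun x => F (wordOf x n)) η ∧
      ∫ x, F (wordOf x n) ∂η = ∑ I ∈ words A n, η.real (cyl I) * F I := by
  have hF : (fun x => F (wordOf x n)) =
      fun x => ∑ I ∈ words A n, (cyl I).indicator (fun _ => F I) x := by
    funext x
    rw [Finset.sum_eq_single_of_mem _ (mem_words.2 (length_wordOf x n)),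
      Set.indicator_of_mem (mem_cyl_wordOf x n)]
    intro I hI hne
    refine Set.indicator_of_notMem (fun hxI => hne ?_) _
    rw [← mem_cyl_iff_wordOf_eq.1 hxI, mem_words.1 hI]
  have hint : ∀ I ∈ words A n, Integrable ((cyl I).indicator fun _ => F I) η :=
    fun I _ => (integrable_const _).indicator (measurableSet_cyl I)
  rw [hF]
  refine ⟨integrable_finsetSum _ hint, ?_⟩
  rw [integral_finsetSum _ hint]
  simp [integral_indicator_const, measurableSet_cyl]

lemma mul_integral_le_sum_mul_log_birkhoffWeight (hX : MeasurableSet X) (hηX : η X = 1)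
    (hη : η.map shiftMap = η) (hgc : Continuous g) (hg : BoundedDistortion X g c)
    (hpt : IsRepresentative X pt) (n : ℕ) : n * ∫ x, g x ∂η ≤
      ∑ I ∈ words A n, η.real (cyl I) * Real.log (birkhoffWeight X g pt I) + c := by
  obtain ⟨hint, heq⟩ := integral_comp_wordOf η n fun I => Real.log (birkhoffWeight X g pt I)
  have hint' : Integrable (birkhoffSum shiftMap g n) η :=
    integrable_finsetSum _ fun i _ => integrable_comp_iterate_shiftMap hgc i
  have hae : ∀ᵐ x ∂η, x ∈ X := (prob_compl_eq_zero_iff hX).2 hηX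
  calc n * ∫ x, g x ∂η = ∫ x, birkhoffSum shiftMap g n x ∂η := (integral_birkhoffSum hη hgc n).symm
    _ ≤ ∫ x, Real.log (birkhoffWeight X g pt (wordOf x n)) + c ∂η := by
        refine integral_mono_ae hint' (hint.add (integrable_const c)) ?_
        filter_upwards [hae] with x hx
        have hL := lang_wordOf hx n
        have hle := hg.abs_sub_le hx (hpt.mem _) (mem_cyl_wordOf x n) (hpt.mem_cyl _ hL)
        rw [log_birkhoffWeight hL]
        rw [length_wordOf] at hle ⊢
        linarith [(abs_le.1 hle).2]
    _ = _ := by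
        rw [integral_add hint (integrable_const c), heq, integral_const, probReal_univ, one_smul]

end Integral

section FactorChain

variable {B : ℕ → Type} [∀ i, MeasurableSpace (B i)] {X : ∀ i, Set (ℕ → B i)}
  {π : ∀ i, B i → B (i + 1)} {j K : ℕ} {a : ℕ → ℝ}

/-- The one-block maps obtained by composing `π j, π (j + 1), …` send `X j` into the measurable sets
`X j, …, X (j + K)`. -/
structure FactorChain (X : ∀ i, Set (ℕ → B i)) (π : ∀ i, B i → B (i + 1)) (j K : ℕ) : Prop where
  measurableSet : ∀ i ≤ K, MeasurableSet (X (j + i))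
  mapsTo : ∀ i ≤ K, Set.MapsTo (blockMap (tauFrom π j i)) (X j) (X (j + i))

lemma factorChain_of_mapsTo (hX : ∀ i ≤ K, MeasurableSet (X (j + i)))
    (hπ : ∀ i < K, Set.MapsTo (blockMap (π (j + i))) (X (j + i)) (X (j + i + 1))) :
    FactorChain X π j K where
  measurableSet := hX
  mapsTo i := by
    induction i with
    | zero => exact fun _ => Set.mapsTo_id _
    | succ i ih => exact fun hi => (hπ i hi).comp (ih (by omega))

/-- The functional maximized by the weighted equilibrium states. -/
def weightedValue [∀ i, Fintype (B i)] (X : ∀ i, Set (ℕ → B i)) (π : ∀ i, B i → B (i + 1)) (j : ℕ)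
    (a : ℕ → ℝ) (K : ℕ) (g : (ℕ → B j) → ℝ) (η : Measure (ℕ → B j)) : ℝ :=
  ∫ x, g x ∂η + ∑ i ∈ Finset.range (K + 1),
    a i * ent (X (j + i)) (η.map (blockMap (tauFrom π j i)))

variable [∀ i, TopologicalSpace (B i)] [∀ i, DiscreteTopology (B i)] [∀ i, BorelSpace (B i)]

lemma map_shiftMap_map_blockMap {A B : Type} [Countable A] [MeasurableSpace A]
    [MeasurableSingletonClass A] [MeasurableSpace B] (t : A → B) {η : Measure (ℕ → A)}
    (hη : η.map shiftMap = η) : (η.map (blockMap t)).map shiftMap = η.map (blockMap t) := by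
  rw [Measure.map_map measurable_shiftMap (measurable_blockMap t)]
  conv_rhs => rw [← hη, Measure.map_map (measurable_blockMap t) measurable_shiftMap]
  rfl

variable {η : Measure (ℕ → B j)} [IsProbabilityMeasure η]

lemma FactorChain.measure_map_eq_one [Countable (B j)] (h : FactorChain X π j K)
    (hηX : η (X j) = 1) {i : ℕ} (hi : i ≤ K) :
    η.map (blockMap (tauFrom π j i)) (X (j + i)) = 1 := by
  rw [Measure.map_apply (measurable_blockMap _) (h.measurableSet i hi)]
  exact prob_le_one.antisymm (hηX ▸ measure_mono (h.mapsTo i hi))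

variable [∀ i, Fintype (B i)]

lemma FactorChain.mul_sum_ent_le (h : FactorChain X π j K) (hηX : η (X j) = 1)
    (hη : η.map shiftMap = η) (ha : ∀ i, 0 ≤ a i) (n : ℕ) :
    n * ∑ i ∈ Finset.range (K + 1), a i * ent (X (j + i)) (η.map (blockMap (tauFrom π j i))) ≤
      ∑ i ∈ Finset.range (K + 1), a i * blockEntropy (η.map (blockMap (tauFrom π j i))) n := by
  rw [Finset.mul_sum]
  refine Finset.sum_le_sum fun i hi => ?_
  have hiK := Finset.mem_range_succ_iff.1 hi
  have := Measure.isProbabilityMeasure_map (μ := η)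
    (measurable_blockMap (tauFrom π j i)).aemeasurable
  rw [mul_left_comm]
  exact mul_le_mul_of_nonneg_left (mul_ent_le_blockEntropy (h.measurableSet i hiK)
    (h.measure_map_eq_one hηX hiK) (map_shiftMap_map_blockMap _ hη) n) (ha i)

lemma FactorChain.tendsto_sum_mul_blockEntropy_div (h : FactorChain X π j K) (hηX : η (X j) = 1)
    (hη : η.map shiftMap = η) (a : ℕ → ℝ) :
    Tendsto (fun n : ℕ => ∑ i ∈ Finset.range (K + 1),
      a i * (blockEntropy (η.map (blockMap (tauFrom π j i))) n / n)) atTop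
      (𝓝 (∑ i ∈ Finset.range (K + 1),
        a i * ent (X (j + i)) (η.map (blockMap (tauFrom π j i))))) := by
  refine tendsto_finsetSum _ fun i hi => ?_
  have hiK := Finset.mem_range_succ_iff.1 hi
  have := Measure.isProbabilityMeasure_map (μ := η)
    (measurable_blockMap (tauFrom π j i)).aemeasurable
  exact (tendsto_blockEntropy_div (h.measurableSet i hiK) (h.measure_map_eq_one hηX hiK)
    (map_shiftMap_map_blockMap _ hη)).const_mul _

end FactorChain

section VariationalPrinciple

variable {B : ℕ → Type} [∀ i, Fintype (B i)] [∀ i, TopologicalSpace (B i)]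
  [∀ i, DiscreteTopology (B i)] [∀ i, MeasurableSpace (B i)] [∀ i, BorelSpace (B i)]
  {X : ∀ i, Set (ℕ → B i)} {π : ∀ i, B i → B (i + 1)} {j K : ℕ} {a : ℕ → ℝ} (ha₀ : 0 < a 0)
  (ha : ∀ i, 0 ≤ a i) {g : (ℕ → B j) → ℝ} {pt : List (B j) → ℕ → B j}
  (hpt : IsRepresentative (X j) pt) (hφ : QuasiMultiplicative (X j) (birkhoffWeight (X j) g pt))

include ha₀ ha hpt hφ

section UpperBound

variable {η : Measure (ℕ → B j)} [IsProbabilityMeasure η] {c : ℝ}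

lemma FactorChain.mul_weightedValue_add_le (h : FactorChain X π j K) (hne : (X j).Nonempty)
    (hgc : Continuous g) (hg : BoundedDistortion (X j) g c) (hηX : η (X j) = 1)
    (hη : η.map shiftMap = η) (n : ℕ) :
    n * weightedValue X π j a K g η +
      a 0 * wordDivergence η (equilibriumWeight π j a (birkhoffWeight (X j) g pt) K) n ≤
    cumWeight a K * Real.log
      (partitionSum (liftedWeight π j (cumWeight a) (birkhoffWeight (X j) g pt) K) n) + c := by
  have hX : MeasurableSet (X j) := h.measurableSet 0 K.zero_le
  have hword := sum_mul_blockEntropy_add_mul_wordDivergence_le (π := π) hφ ha₀ ha K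
    (fun _ => measureReal_cyl_eq_zero_of_not_lang hX hηX) hne n
  have hent := h.mul_sum_ent_le hηX hη ha n
  have hint := mul_integral_le_sum_mul_log_birkhoffWeight hX hηX hη hgc hg hpt n
  rw [weightedValue, mul_add]
  linarith

lemma FactorChain.weightedValue_le (h : FactorChain X π j K) (hne : (X j).Nonempty)
    (hgc : Continuous g) (hg : BoundedDistortion (X j) g c) (hηX : η (X j) = 1)
    (hη : η.map shiftMap = η) {P c' : ℝ}
    (hP : HasPressure (liftedWeight π j (cumWeight a) (birkhoffWeight (X j) g pt) K) P c') :
    weightedValue X π j a K g η ≤ cumWeight a K * P := by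
  have hX : MeasurableSet (X j) := h.measurableSet 0 K.zero_le
  have hu := gibbsWeight_liftedWeight_cumWeight (π := π) hφ ha₀ ha K
  have hlin (n : ℕ) : n * (weightedValue X π j a K g η - cumWeight a K * P) ≤
      cumWeight a K * c' + c := by
    have hle := h.mul_weightedValue_add_le ha₀ ha hpt hφ hne hgc hg hηX hη n
    have hdiv : 0 ≤ wordDivergence η (equilibriumWeight π j a (birkhoffWeight (X j) g pt) K) n :=
      wordDivergence_nonneg hu.normalizedWeight_nonneg (hu.sum_normalizedWeight hne n) fun I hI =>
        measureReal_cyl_eq_zero_of_not_lang hX hηX fun hL =>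
          (hu.normalizedWeight_ne_zero_iff hne).2 hL hI
    nlinarith [(abs_le.1 (hP n)).2, mul_nonneg ha₀.le hdiv, cumWeight_pos ha₀ ha K]
  by_contra! hlt
  obtain ⟨n, hn⟩ := exists_nat_gt ((cumWeight a K * c' + c) /
    (weightedValue X π j a K g η - cumWeight a K * P))
  rw [div_lt_iff₀ (sub_pos.2 hlt)] at hn
  exact (hlin n).not_gt hn

lemma FactorChain.wordDivergence_le (h : FactorChain X π j K) (hne : (X j).Nonempty)
    (hgc : Continuous g) (hg : BoundedDistortion (X j) g c) (hηX : η (X j) = 1)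
    (hη : η.map shiftMap = η) {P c' : ℝ}
    (hP : HasPressure (liftedWeight π j (cumWeight a) (birkhoffWeight (X j) g pt) K) P c')
    (hmax : cumWeight a K * P ≤ weightedValue X π j a K g η) (n : ℕ) :
    wordDivergence η (equilibriumWeight π j a (birkhoffWeight (X j) g pt) K) n ≤
      (cumWeight a K * c' + c) / a 0 := by
  have hle := h.mul_weightedValue_add_le ha₀ ha hpt hφ hne hgc hg hηX hη n
  have hmax_n := mul_le_mul_of_nonneg_left hmax n.cast_nonneg
  have hP_n := mul_le_mul_of_nonneg_left (abs_le.1 (hP n)).2 (cumWeight_pos ha₀ ha K).le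
  rw [le_div_iff₀ ha₀]
  linarith

end UpperBound

section LowerBound

variable (hX : MeasurableSet (X j)) (hne : (X j).Nonempty)
  (h : WordDistribution (equilibriumWeight π j a (birkhoffWeight (X j) g pt) K))

include hX hne

lemma sum_mul_blockEntropy_measure_add_integral (hgc : Continuous g) (n : ℕ) :
    ∑ i ∈ Finset.range (K + 1), a i * blockEntropy
      ((h.measure pt n : Measure (ℕ → B j)).map (blockMap (tauFrom π j i))) n +
      ∫ x, birkhoffSum shiftMap g n x ∂(h.measure pt n : Measure (ℕ → B j)) =
    cumWeight a K * Real.log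
      (partitionSum (liftedWeight π j (cumWeight a) (birkhoffWeight (X j) g pt) K) n) := by
  have hu := gibbsWeight_liftedWeight_cumWeight (π := π) hφ ha₀ ha K
  have hsupp (I : List (B j)) (hI : equilibriumWeight π j a (birkhoffWeight (X j) g pt) K I ≠ 0) :
      Lang (X j) I := (hu.normalizedWeight_ne_zero_iff hne).1 hI
  have hmass : (h.measure pt n : Measure (ℕ → B j)) (X j) = 1 :=
    (ENNReal.toReal_eq_one_iff _).1 (h.measureReal_measure_eq_one n hX hpt.mem)
  have hcyl : ∀ I ∈ words (B j) n, (h.measure pt n : Measure (ℕ → B j)).real (cyl I) =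
      equilibriumWeight π j a (birkhoffWeight (X j) g pt) K I := fun I hI => by
    simpa [fmn_eq_sum_words, words_zero] using h.measureReal_map_measure_cyl (t := 0) (s := 0)
      (fun J hJ => hpt.mem_cyl J (hsupp J hJ)) (by simpa using mem_words.1 hI)
  have hint : StronglyMeasurable (birkhoffSum shiftMap g n) :=
    (continuous_finsetSum _ fun i _ => hgc.comp (continuous_shiftMap.iterate i)).stronglyMeasurable
  rw [← sum_mul_blockEntropy_add_eq (π := π) hφ ha₀ ha K
    (fun _ => measureReal_cyl_eq_zero_of_not_lang hX hmass) hcyl, h.integral_measure pt n hint]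
  refine congrArg _ (Finset.sum_congr rfl fun I hI => ?_)
  rw [hcyl I hI]
  by_cases hI₀ : equilibriumWeight π j a (birkhoffWeight (X j) g pt) K I = 0
  · rw [hI₀, zero_mul, zero_mul]
  · rw [log_birkhoffWeight (hsupp I hI₀), mem_words.1 hI]

lemma mul_log_partitionSum_le_orbitAverage (hgc : Continuous g) (m N : ℕ) :
    m * (cumWeight a K * Real.log (partitionSum
      (liftedWeight π j (cumWeight a) (birkhoffWeight (X j) g pt) K) (N + 1))) ≤
    ((N + 1 : ℕ) : ℝ) * (m * ∫ x, g x ∂(orbitAverage (h.measure pt (N + 1)) N : Measure (ℕ → B j)) +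
      ∑ i ∈ Finset.range (K + 1), a i * blockEntropy
        ((orbitAverage (h.measure pt (N + 1)) N : Measure (ℕ → B j)).map
          (blockMap (tauFrom π j i))) m) +
      ∑ i ∈ Finset.range (K + 1), a i * ∑ r ∈ Finset.range m, ((words (B (j + i)) r).card : ℝ) := by
  have hentropy := Finset.sum_le_sum fun i (_ : i ∈ Finset.range (K + 1)) =>
    mul_le_mul_of_nonneg_left (mul_blockEntropy_le_mul_blockEntropy_orbitAverage (tauFrom π j i)
      (h.measure pt (N + 1)) N m) (ha i)
  have hbdd : ∃ C, ∀ x, ‖g x‖ ≤ C :=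
    ⟨_, (BoundedContinuousFunction.mkOfCompact ⟨g, hgc⟩).norm_coe_le_norm⟩
  have hintegral := mul_integral_orbitAverage (h.measure pt (N + 1)) N hgc.measurable hbdd
  rw [← sum_mul_blockEntropy_measure_add_integral ha₀ ha hpt hφ hX hne h hgc (N + 1)]
  simp only [birkhoffSum]
  simp only [mul_add, Finset.sum_add_distrib, mul_left_comm (a _), ← Finset.mul_sum] at hentropy
  rw [← hintegral]
  linarith

variable {l : Filter ℕ} [l.NeBot] {μ : ProbabilityMeasure (ℕ → B j)}

lemma mul_cumWeight_mul_le_of_tendsto (hgc : Continuous g) (hl : l ≤ atTop)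
    (hμ : Tendsto (fun N => orbitAverage (h.measure pt (N + 1)) N) l (𝓝 μ)) {P c : ℝ}
    (hP : HasPressure (liftedWeight π j (cumWeight a) (birkhoffWeight (X j) g pt) K) P c) (m : ℕ) :
    m * (cumWeight a K * P) ≤ m * ∫ x, g x ∂(μ : Measure (ℕ → B j)) +
      ∑ i ∈ Finset.range (K + 1), a i *
        blockEntropy ((μ : Measure (ℕ → B j)).map (blockMap (tauFrom π j i))) m := by
  set E := ∑ i ∈ Finset.range (K + 1), a i * ∑ r ∈ Finset.range m, ((words (B (j + i)) r).card : ℝ)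
  have hintegral := ProbabilityMeasure.tendsto_iff_forall_integral_tendsto.1 hμ
    (BoundedContinuousFunction.mkOfCompact ⟨g, hgc⟩)
  have hlim := ((hintegral.const_mul (m : ℝ)).add (tendsto_finsetSum (Finset.range (K + 1))
    fun i _ => (tendsto_blockEntropy_map_blockMap (tauFrom π j i) hμ m).const_mul (a i))).add
      (tendsto_div_succ hl (E + m * (cumWeight a K * c)))
  rw [add_zero] at hlim
  refine ge_of_tendsto' hlim fun N => ?_
  have hN : (0 : ℝ) < ((N + 1 : ℕ) : ℝ) := by positivity
  have hle := mul_log_partitionSum_le_orbitAverage ha₀ ha hpt hφ hX hne h hgc m N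
  have hlog := mul_le_mul_of_nonneg_left (mul_le_mul_of_nonneg_left (abs_le.1 (hP (N + 1))).1
    (cumWeight_pos ha₀ ha K).le) (m.cast_nonneg (α := ℝ))
  rw [← mul_le_mul_iff_right₀ hN, mul_add _ _ (_ / _), mul_div_cancel₀ _ hN.ne']
  simp only [BoundedContinuousFunction.mkOfCompact_apply, ContinuousMap.coe_mk]
  linarith

omit hX in
lemma FactorChain.cumWeight_mul_le_weightedValue (hchain : FactorChain X π j K)
    (hgc : Continuous g) (hl : l ≤ atTop)
    (hμ : Tendsto (fun N => orbitAverage (h.measure pt (N + 1)) N) l (𝓝 μ))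
    (hμX : (μ : Measure (ℕ → B j)) (X j) = 1) (hμσ : (μ : Measure (ℕ → B j)).map shiftMap = μ)
    {P c : ℝ}
    (hP : HasPressure (liftedWeight π j (cumWeight a) (birkhoffWeight (X j) g pt) K) P c) :
    cumWeight a K * P ≤ weightedValue X π j a K g (μ : Measure (ℕ → B j)) := by
  refine ge_of_tendsto (tendsto_const_nhds.add
    (hchain.tendsto_sum_mul_blockEntropy_div hμX hμσ a)) ?_
  filter_upwards [eventually_gt_atTop 0] with m hm
  have hm' : (0 : ℝ) < m := by exact_mod_cast hm
  have hX : MeasurableSet (X j) := hchain.measurableSet 0 K.zero_le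
  have hle := mul_cumWeight_mul_le_of_tendsto ha₀ ha hpt hφ hX hne h hgc hl hμ hP m
  rw [← mul_le_mul_iff_right₀ hm', mul_add, Finset.mul_sum]
  simpa only [mul_left_comm (m : ℝ) (a _), mul_div_cancel₀ _ hm'.ne'] using hle

end LowerBound

section Existence

variable (hX : IsClosed (X j)) (hXσ : shiftMap '' X j ⊆ X j)

include hX hXσ

omit ha₀ ha hφ in
lemma exists_tendsto_orbitAverage_measure {f : List (B j) → ℝ} (h : WordDistribution f) :
    ∃ (μ : ProbabilityMeasure (ℕ → B j)) (l : Filter ℕ), l.NeBot ∧ l ≤ atTop ∧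
      Tendsto (fun N => orbitAverage (h.measure pt (N + 1)) N) l (𝓝 μ) ∧ μ ∈ MInv (X j) := by
  obtain ⟨μ, l, hlne, hl, hμ⟩ := exists_tendsto_of_compact
    fun N => orbitAverage (h.measure pt (N + 1)) N
  have hmass (N : ℕ) : (orbitAverage (h.measure pt (N + 1)) N : Measure (ℕ → B j)).real (X j) = 1 :=
    measureReal_orbitAverage_eq_one N hX.measurableSet hXσ
      (h.measureReal_measure_eq_one (N + 1) hX.measurableSet hpt.mem)
  exact ⟨μ, l, hlne, hl, hμ, map_shiftMap_eq_of_tendsto_orbitAverage hl hμ,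
    measure_eq_one_of_tendsto hμ hX hmass⟩

lemma FactorChain.exists_unique_maximizer {q : ℕ} {c : ℝ} (hchain : FactorChain X π j K)
    (hne : (X j).Nonempty)
    (hgc : Continuous g) (hg : BoundedDistortion (X j) g c)
    (hf : OmegaW q (equilibriumWeight π j a (birkhoffWeight (X j) g pt) K))
    (hws : WeakSpecification (X j) q) :
    ∃ μ ∈ MInv (X j), CylinderComparable
      (equilibriumWeight π j a (birkhoffWeight (X j) g pt) K) (μ : Measure (ℕ → B j)) ∧
      ∀ η ∈ MInv (X j), weightedValue X π j a K g (η : Measure (ℕ → B j)) ≤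
        weightedValue X π j a K g (μ : Measure (ℕ → B j)) ∧
        (weightedValue X π j a K g (μ : Measure (ℕ → B j)) ≤
          weightedValue X π j a K g (η : Measure (ℕ → B j)) → η = μ) := by
  have hu := gibbsWeight_liftedWeight_cumWeight (π := π) hφ ha₀ ha K
  have hsupp {I : List (B j)} : equilibriumWeight π j a (birkhoffWeight (X j) g pt) K I ≠ 0 ↔
      Lang (X j) I := hu.normalizedWeight_ne_zero_iff hne
  obtain ⟨P, c', hP⟩ := hu.exists_hasPressure hne hws
  obtain ⟨μ, l, _, hl, hlim, hμ⟩ := exists_tendsto_orbitAverage_measure hpt hX hXσ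
    hf.wordDistribution
  have hcomp := cylinderComparable_of_tendsto hf (fun I hI => hpt.mem_cyl I (hsupp.1 hI)) hl hlim
  have hlower := hchain.cumWeight_mul_le_weightedValue ha₀ ha hpt hφ hne hf.wordDistribution hgc hl
    hlim hμ.2 hμ.1 hP
  refine ⟨μ, hμ, hcomp, fun η hη => ⟨(hchain.weightedValue_le ha₀ ha hpt hφ hne hgc hg hη.2 hη.1
    hP).trans hlower, fun hmax => ProbabilityMeasure.toMeasure_injective ?_⟩⟩
  exact hcomp.eq_of_wordDivergence_le hf hμ.1 hη.1
    (hchain.wordDivergence_le ha₀ ha hpt hφ hne hgc hg hη.2 hη.1 hP (hlower.trans hmax))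
    fun I hI => measureReal_cyl_eq_zero_of_not_lang hX.measurableSet hη.2 fun hL => hsupp.2 hL hI

end Existence

end VariationalPrinciple

lemma FactorChain.exists_cylinderComparable_maximizer {B : ℕ → Type} [∀ i, Fintype (B i)]
    [∀ i, TopologicalSpace (B i)] [∀ i, DiscreteTopology (B i)] [∀ i, MeasurableSpace (B i)]
    [∀ i, BorelSpace (B i)] {X : ∀ i, Set (ℕ → B i)} {π : ∀ i, B i → B (i + 1)} {j K q : ℕ}
    {a : ℕ → ℝ} {g : (ℕ → B j) → ℝ} {c : ℝ} (hchain : FactorChain X π j K)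
    (hX : IsSubshift (X j)) (hws : WeakSpecification (X j) q) (ha₀ : 0 < a 0) (ha : ∀ i, 0 ≤ a i)
    (hgc : Continuous g) (hg : BoundedDistortion (X j) g c) :
    ∃ f, OmegaW q f ∧ (∀ q', Specification (X j) q' → OmegaS q' f) ∧
      ∃ μ ∈ MInv (X j), CylinderComparable f (μ : Measure (ℕ → B j)) ∧
        ∀ η ∈ MInv (X j), weightedValue X π j a K g (η : Measure (ℕ → B j)) ≤
          weightedValue X π j a K g (μ : Measure (ℕ → B j)) ∧
          (weightedValue X π j a K g (μ : Measure (ℕ → B j)) ≤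
            weightedValue X π j a K g (η : Measure (ℕ → B j)) → η = μ) := by
  obtain ⟨hne, hcpt, hσ⟩ := hX
  obtain ⟨pt, hpt⟩ := exists_isRepresentative hne
  have hφ := quasiMultiplicative_birkhoffWeight hg hσ hpt
    (BoundedContinuousFunction.mkOfCompact ⟨g, hgc⟩).norm_coe_le_norm
  have hu := gibbsWeight_liftedWeight_cumWeight (π := π) hφ ha₀ ha K
  have hf := hu.omegaW hne hσ hws
  exact ⟨_, hf, fun _ => hu.omegaS hne,
    hchain.exists_unique_maximizer ha₀ ha hpt hφ hcpt.isClosed hσ hne hgc hg hf hws⟩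

section ContinuousOn

variable {A : Type} {X : Set (ℕ → A)} {f g : (ℕ → A) → ℝ}

lemma exists_continuous_eqOn [TopologicalSpace A] [DiscreteTopology A] [Finite A]
    (hX : IsClosed X) (hf : ContinuousOn f X) :
    ∃ g, Continuous g ∧ Set.EqOn g f X := by
  obtain ⟨g, hg⟩ := ContinuousMap.exists_restrict_eq hX
    (⟨X.domRestrict f, continuousOn_iff_continuous_domRestrict.1 hf⟩ : C(X, ℝ))
  exact ⟨g, g.continuous, fun x hx => DFunLike.congr_fun hg ⟨x, hx⟩⟩

lemma boundedDistortion_of_eqOn (hfg : Set.EqOn g f X) (hX : shiftMap '' X ⊆ X) {c : ℝ}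
    (hc : 0 < c) (hf : ∀ n : ℕ, 1 ≤ n → ∀ x ∈ X, ∀ y ∈ X, (∀ i < n, x i = y i) →
      |(∑ i ∈ Finset.range n, f (shiftMap^[i] x)) -
        ∑ i ∈ Finset.range n, f (shiftMap^[i] y)| ≤ c) : BoundedDistortion X g c := by
  have hsum (n : ℕ) {x : ℕ → A} (hx : x ∈ X) :
      birkhoffSum shiftMap g n x = ∑ i ∈ Finset.range n, f (shiftMap^[i] x) :=
    Finset.sum_congr rfl fun i _ => hfg (iterate_shiftMap_mem hX hx i)
  intro n x hx y hy hxy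
  rcases n.eq_zero_or_pos with rfl | hn
  · simpa using hc.le
  · rw [hsum n hx, hsum n hy]
    exact hf n hn x hx y hy hxy

lemma setIntegral_eq_integral_of_eqOn [MeasurableSpace A] (hfg : Set.EqOn g f X)
    (hX : MeasurableSet X) {η : Measure (ℕ → A)} [IsProbabilityMeasure η] (hηX : η X = 1) :
    ∫ x in X, f x ∂η = ∫ x, g x ∂η := by
  have hae : ∀ᵐ x ∂η, x ∈ X := (prob_compl_eq_zero_iff hX).2 hηX
  rw [← setIntegral_congr_fun hX hfg, Measure.restrict_eq_self_of_ae_mem hae]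

end ContinuousOn

lemma CylinderComparable.exists_mul_le_liminf_of_omegaS {A : Type} [Fintype A] [TopologicalSpace A]
    [DiscreteTopology A] [MeasurableSpace A] [BorelSpace A] {f : List A → ℝ} {p q : ℕ}
    {μ : Measure (ℕ → A)} [IsProbabilityMeasure μ] (hμf : CylinderComparable f μ)
    (hf : OmegaW p f) (hfs : OmegaS q f) (hμ : μ.map shiftMap = μ) :
    ∃ c > 0, ∀ S T, MeasurableSet S → MeasurableSet T →
      c * (μ.real S * μ.real T) ≤ liminf (fun n => μ.real (S ∩ shiftMap^[n] ⁻¹' T)) atTop := by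
  obtain ⟨c, hc, h⟩ := hμf.exists_mul_le_liminf hf hμ hfs.quasiBernoulli
  refine ⟨c, hc, fun S T hS hT => (h S T hS hT).trans_eq ?_⟩
  simp only [Finset.sum_singleton]
  exact liminf_nat_add (fun n => μ.real (S ∩ shiftMap^[n] ⁻¹' T)) q

end

/-- Theorem 1.1 / `thm-1`: if `X₁` satisfies weak specification then every
`f ∈ V(σ_{X₁})` has a unique `a`-weighted equilibrium state `μ` for the chain of factor maps;
`μ` is ergodic and satisfies the stated mixing-type lower bounds (at `p+1` consecutive times
in general, and at single times if `X₁` satisfies specification). -/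
theorem weighted_eq_states_stmt_0 {k : ℕ} (hk : 2 ≤ k) {B : ℕ → Type}
    [∀ i, Fintype (B i)] [∀ i, TopologicalSpace (B i)] [∀ i, DiscreteTopology (B i)]
    [∀ i, MeasurableSpace (B i)] [∀ i, BorelSpace (B i)]
    (X : ∀ i, Set (ℕ → B i)) (hX : ∀ i, 1 ≤ i → i ≤ k → IsSubshift (X i))
    (π : ∀ i, B i → B (i+1))
    (hπ : ∀ i, 1 ≤ i → i ≤ k - 1 → blockMap (π i) '' X i = X (i+1))
    (hws : ∃ q, WeakSpecification (X 1) q)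
    (a : ℕ → ℝ) (ha₁ : 0 < a 1) (ha : ∀ i, 2 ≤ i → i ≤ k → 0 ≤ a i)
    (f : (ℕ → B 1) → ℝ) (hfc : ContinuousOn f (X 1))
    (hfV : ∃ c > (0:ℝ), ∀ n : ℕ, 1 ≤ n → ∀ x ∈ X 1, ∀ y ∈ X 1,
      (∀ i < n, x i = y i) →
      |(∑ i ∈ Finset.range n, f (shiftMap^[i] x)) -
        ∑ i ∈ Finset.range n, f (shiftMap^[i] y)| ≤ c)
    (W : ProbabilityMeasure (ℕ → B 1) → ℝ)
    (hW : ∀ μ : ProbabilityMeasure (ℕ → B 1), W μ =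
      (∫ x in X 1, f x ∂(μ : Measure (ℕ → B 1))) +
        ∑ i ∈ Finset.range k, a (i+1) *
          ent (X (1+i)) ((μ : Measure (ℕ → B 1)).map (blockMap (tauFrom π 1 i)))) :
    ∃ μ : ProbabilityMeasure (ℕ → B 1),
      μ ∈ MInv (X 1) ∧
      (∀ η ∈ MInv (X 1), W η ≤ W μ) ∧
      (∀ η ∈ MInv (X 1), (∀ κ ∈ MInv (X 1), W κ ≤ W η) → η = μ) ∧
      Ergodic shiftMap (μ : Measure (ℕ → B 1)) ∧
      (∃ p : ℕ, ∃ c > (0:ℝ), ∀ S T : Set (ℕ → B 1), MeasurableSet S → MeasurableSet T →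
        c * (((μ : Measure (ℕ → B 1)) S).toReal * ((μ : Measure (ℕ → B 1)) T).toReal) ≤
          liminf (fun n : ℕ => ∑ i ∈ Finset.range (p+1),
            ((μ : Measure (ℕ → B 1)) (S ∩ shiftMap^[n+i] ⁻¹' T)).toReal) atTop) ∧
      ((∃ q, Specification (X 1) q) →
        ∃ c > (0:ℝ), ∀ S T : Set (ℕ → B 1), MeasurableSet S → MeasurableSet T →
          c * (((μ : Measure (ℕ → B 1)) S).toReal * ((μ : Measure (ℕ → B 1)) T).toReal) ≤
            liminf (fun n : ℕ =>
              ((μ : Measure (ℕ → B 1)) (S ∩ shiftMap^[n] ⁻¹' T)).toReal) atTop) := by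
  obtain ⟨q, hq⟩ := hws
  obtain ⟨C, hC, hV⟩ := hfV
  obtain ⟨K, rfl⟩ : ∃ K, k = K + 1 := ⟨k - 1, by omega⟩
  have hX₁ := hX 1 le_rfl (by omega)
  obtain ⟨g, hgc, hgf⟩ := exists_continuous_eqOn hX₁.2.1.isClosed hfc
  obtain ⟨b, hb₀, hb, hba⟩ : ∃ b : ℕ → ℝ, 0 < b 0 ∧ (∀ i, 0 ≤ b i) ∧ ∀ i ≤ K, a (i + 1) = b i :=
    ⟨fun i => max (a (i + 1)) 0, lt_max_of_lt_left ha₁, fun _ => le_max_right _ _, fun i hi =>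
      (max_eq_left (by cases i; exacts [ha₁.le, ha _ (by omega) (by omega)])).symm⟩
  have hchain : FactorChain X π 1 K := factorChain_of_mapsTo
    (fun i hi => (hX (1 + i) (by omega) (by omega)).2.1.measurableSet)
    fun i hi => Set.mapsTo_iff_image_subset.2 (hπ (1 + i) (by omega) (by omega)).subset
  have hWg {η : ProbabilityMeasure (ℕ → B 1)} (hη : η ∈ MInv (X 1)) :
      W η = weightedValue X π 1 b K g (η : Measure (ℕ → B 1)) := by
    rw [hW, setIntegral_eq_integral_of_eqOn hgf hX₁.2.1.measurableSet hη.2, weightedValue]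
    exact congrArg _ (Finset.sum_congr rfl fun i hi => by
      rw [hba i (Finset.mem_range_succ_iff.1 hi)])
  obtain ⟨w, hw, hws, μ, hμ, hcomp, hmax⟩ := hchain.exists_cylinderComparable_maximizer hX₁ hq hb₀
    hb hgc (boundedDistortion_of_eqOn hgf hX₁.2.2 hC hV)
  exact ⟨μ, hμ, fun η hη => hWg hη ▸ hWg hμ ▸ (hmax η hη).1,
    fun η hη h => (hmax η hη).2 (hWg hη ▸ hWg hμ ▸ h μ hμ), hcomp.ergodic hw hμ.1,
    ⟨q, hcomp.exists_mul_le_liminf hw hμ.1 hw.quasiBernoulli⟩,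
    fun ⟨q', hs⟩ => hcomp.exists_mul_le_liminf_of_omegaS hw (hws q' hs) hμ.1⟩
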